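/- arXiv:1601.01629 — 2 statements merged into one kernel-verified Lean document; each statement's English description precedes it below -/
import Mathlib

section
/- Let n ≥ 1, j ≥ 1 and D ≥ 1 be integers and set C_n = 2^(n+1)·n! / (2^(1/n) − 1)^n. For each 1 ≤ i ≤ j let Γ_i be a finite family of real algebraic subsets of ℝ^n (each member being the common zero set of finitely many real polynomials), and let B_i ≥ 1 be a real number such that for every non-zero polynomial q ∈ ℝ[X₁,…,X_n] of total degree at most D, every γ ∈ Γ_i intersects at most B_i connected components of ℝ^n \ Z(q). Then there exists a non-zero polynomial p ∈ ℝ[X₁,…,X_n] of total degree at most D such that simultaneously for every 1 ≤ i ≤ j, every connected component of ℝ^n \ Z(p) intersects at most C_n · j · B_i · D^(−n) · |Γ_i| members of Γ_i. -/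
/-- coboundary -/
def ppDelta {V : Type*} {N : ℕ} (ψ : (Fin N → V) → ZMod 2) (v : Fin (N + 1) → V) : ZMod 2 :=
  ∑ t : Fin (N + 1), ψ (fun i => v (t.succAbove i))

/-- product of the edge cochains -/
def ppCup {V : Type*} {N : ℕ} (s : Fin N → V → ZMod 2) (v : Fin (N + 1) → V) : ZMod 2 :=
  ∏ i : Fin N, (s i (v i.castSucc) + s i (v i.succ))

theorem ppZ2 (a : ZMod 2) : a + a = 0 := CharTwo.add_self_eq_zero a

theorem ppDelta_cupl {V : Type*} {N : ℕ} (s : V → ZMod 2) (ψ : (Fin (N + 1) → V) → ZMod 2)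
    (v : Fin (N + 3) → V) :
    ppDelta (fun w : Fin (N + 2) → V => (s (w 0) + s (w 1)) * ψ (fun i => w i.succ)) v
      = (s (v 0) + s (v 1)) * ppDelta ψ (fun i => v i.succ) := by
  unfold ppDelta
  rw [Fin.sum_univ_succ, Fin.sum_univ_succ, Fin.sum_univ_succ (n := N + 1)]
  have e1 : ∀ t : Fin (N + 1), (t.succ.succ : Fin (N + 3)).succAbove (0 : Fin (N + 2)) = 0 := by
    intro t; rfl
  have e2 : ∀ t : Fin (N + 1), (t.succ.succ : Fin (N + 3)).succAbove (1 : Fin (N + 2)) = 1 := by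
    intro t
    have : (1 : Fin (N + 2)) = Fin.succ 0 := rfl
    rw [this, Fin.succ_succAbove_succ]; rfl
  have e3 : (Fin.succ 0 : Fin (N + 3)).succAbove (0 : Fin (N + 2)) = 0 := rfl
  have e4 : (Fin.succ 0 : Fin (N + 3)).succAbove (1 : Fin (N + 2)) = 2 := by
    have : (1 : Fin (N + 2)) = Fin.succ 0 := rfl
    rw [this, Fin.succ_succAbove_succ]; rfl
  simp only [e1, e2, e3, e4, Fin.succ_succAbove_succ, Fin.zero_succAbove]
  rw [← Finset.mul_sum, mul_add]
  have h1 : (Fin.succ 0 : Fin (N+3)) = 1 := rfl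
  have h2 : (Fin.succ 1 : Fin (N+3)) = 2 := rfl
  rw [h1, h2]
  have := ppZ2 (s (v 2))
  linear_combination (ψ fun i => v i.succ.succ) * this

theorem ppCup_succ {V : Type*} {N : ℕ} (s : Fin (N + 1) → V → ZMod 2) (v : Fin (N + 2) → V) :
    ppCup s v = (s 0 (v 0) + s 0 (v 1)) * ppCup (fun i => s i.succ) (fun i => v i.succ) := by
  unfold ppCup
  rw [Fin.prod_univ_succ]
  rfl

theorem ppDelta_cup {V : Type*} {N : ℕ} (s : Fin N → V → ZMod 2) (v : Fin (N + 2) → V) :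
    ppDelta (ppCup s) v = 0 := by
  induction N with
  | zero => simp [ppDelta, ppCup]; exact ppZ2 1
  | succ N ih =>
    have : ppCup s = fun w : Fin (N + 2) → V => (s 0 (w 0) + s 0 (w 1)) *
        ppCup (fun i => s i.succ) (fun i => w i.succ) := by
      funext w; exact ppCup_succ s w
    rw [this, ppDelta_cupl, ih, mul_zero]

theorem ppCup_diff {G V : Type*} [Group G] [MulAction G V] {N : ℕ} (e : Fin N → G → ZMod 2)
    (s s' : Fin N → V → ZMod 2)
    (hs : ∀ i g v, s i (g • v) = s i v + e i g) (hs' : ∀ i g v, s' i (g • v) = s' i v + e i g) :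
    ∃ ψ : (Fin N → V) → ZMod 2, (∀ (g : G) w, ψ (fun i => g • w i) = ψ w) ∧
      ∀ v, ppCup s v + ppCup s' v = ppDelta ψ v := by
  have hc : ∀ {N : ℕ} (e : Fin N → G → ZMod 2) (s : Fin N → V → ZMod 2)
      (_ : ∀ i g v, s i (g • v) = s i v + e i g) (g : G) w,
      ppCup s (fun i => g • w i) = ppCup s w := by
    intro N e s hs g w
    unfold ppCup
    refine Finset.prod_congr rfl fun i _ => ?_
    rw [hs, hs]
    linear_combination ppZ2 (e i g)
  induction N with
  | zero =>
    refine ⟨fun _ => 0, fun _ _ => rfl, fun v => ?_⟩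
    simp [ppDelta, ppCup]; exact ppZ2 1
  | succ N ih =>
    obtain ⟨ψ, hψ, h⟩ := ih (fun i => e i.succ) (fun i => s i.succ) (fun i => s' i.succ)
      (fun i => hs i.succ) (fun i => hs' i.succ)
    have h2 : ∀ v : Fin (N + 2) → V,
        ppDelta (fun w : Fin (N + 1) → V => (s 0 (w 0) + s' 0 (w 0)) *
          ppCup (fun i => s' i.succ) w) v =
        (s 0 (v 0) + s' 0 (v 0) + (s 0 (v 1) + s' 0 (v 1))) *
          ppCup (fun i => s' i.succ) (fun i => v i.succ) := by
      intro v
      have h0 := ppDelta_cup (fun i => s' i.succ) v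
      unfold ppDelta at h0 ⊢
      rw [Fin.sum_univ_succ] at h0 ⊢
      have e1 : ∀ t : Fin (N + 1), (t.succ : Fin (N + 2)).succAbove (0 : Fin (N + 1)) = 0 := by
        intro t; rfl
      simp only [e1, Fin.zero_succAbove] at h0 ⊢
      rw [← Finset.mul_sum]
      have h1 : (Fin.succ 0 : Fin (N+2)) = 1 := rfl
      rw [h1]
      linear_combination (s 0 (v 0) + s' 0 (v 0)) * h0 -
        (s 0 (v 0) + s' 0 (v 0)) * ppZ2 (ppCup (fun i => s' i.succ) (fun i => v i.succ))
    have h3 : ∀ v : Fin (N + 2) → V, ppCup s v + ppCup s' v =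
        (s 0 (v 0) + s 0 (v 1)) * ppDelta ψ (fun i => v i.succ) +
        ppDelta (fun w : Fin (N + 1) → V => (s 0 (w 0) + s' 0 (w 0)) *
          ppCup (fun i => s' i.succ) w) v := by
      intro v
      rw [h2, ppCup_succ, ppCup_succ s', ← h]
      linear_combination (-(s 0 (v 0) + s 0 (v 1))) *
        ppZ2 (ppCup (fun i => s' i.succ) (fun i => v i.succ))
    have hinv : ∀ (g : G) (w : V), s 0 (g • w) + s' 0 (g • w) = s 0 w + s' 0 w := by
      intro g w; rw [hs, hs']; linear_combination ppZ2 (e 0 g)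
    cases N with
    | zero =>
      refine ⟨fun w : Fin 1 → V => (s 0 (w 0) + s' 0 (w 0)) * ppCup (fun i => s' i.succ) w,
        fun g w => ?_, fun v => ?_⟩
      · simp only [hinv]
        rw [hc (fun i => e i.succ) (fun i => s' i.succ) (fun i => hs' i.succ)]
      · rw [h3, ← h]
        simp only [ppCup, Finset.univ_eq_empty, Finset.prod_empty]
        rw [ppZ2 1]; simp
    | succ N =>
      refine ⟨fun w => (s 0 (w 0) + s 0 (w 1)) * ψ (fun i => w i.succ) +
        (s 0 (w 0) + s' 0 (w 0)) * ppCup (fun i => s' i.succ) w, fun g w => ?_, fun v => ?_⟩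
      · simp only [hinv]
        rw [hc (fun i => e i.succ) (fun i => s' i.succ) (fun i => hs' i.succ),
          hψ g (fun i => w i.succ), hs, hs]
        linear_combination (ψ fun i => w i.succ) * ppZ2 (e 0 g)
      · rw [h3, ← ppDelta_cupl]
        simp only [ppDelta, Finset.sum_add_distrib]

open Classical in
theorem ppSum_shift {G V Y : Type*} [Group G] [Fintype G] [Fintype Y] [MulAction G V]
    [MulAction G Y] (F : V → Prop) (hF : ∀ v, ∃! g : G, F (g • v))
    (a b : Y → V) (ha : ∀ (g : G) y, a (g • y) = g • a y) (hb : ∀ (g : G) y, b (g • y) = g • b y)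
    (K : Y → ZMod 2) (hK : ∀ (g : G) y, K (g • y) = K y) :
    ∑ y, (if F (a y) then K y else 0) = ∑ y, (if F (b y) then K y else 0) := by
  have h1 : ∀ v, ∑ g : G, (if F (g • v) then (1 : ZMod 2) else 0) = 1 := by
    intro v
    obtain ⟨g, hg, hu⟩ := hF v
    rw [Finset.sum_eq_single g]
    · simp [hg]
    · intro g' _ hne
      rw [if_neg]; intro h; exact hne (hu _ h)
    · simp
  have h2 : ∀ v, ∑ g : G, (if F (g⁻¹ • v) then (1 : ZMod 2) else 0) = 1 := by
    intro v
    refine Eq.trans ?_ (h1 v)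
    exact Equiv.sum_comp (Equiv.inv G) (fun g : G => (if F (g • v) then (1 : ZMod 2) else 0))
  calc ∑ y, (if F (a y) then K y else 0)
      = ∑ y, ∑ g : G, (if F (a y) then K y else 0) * (if F (g • b y) then 1 else 0) := by
        refine Finset.sum_congr rfl fun y _ => ?_
        rw [← Finset.mul_sum, h1, mul_one]
    _ = ∑ g : G, ∑ y, (if F (a y) then K y else 0) * (if F (g • b y) then 1 else 0) :=
        Finset.sum_comm
    _ = ∑ g : G, ∑ y, (if F (g⁻¹ • a y) then 1 else 0) * (if F (b y) then K y else 0) := by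
        refine Finset.sum_congr rfl fun g _ => ?_
        rw [← Equiv.sum_comp (MulAction.toPerm (g⁻¹))]
        refine Finset.sum_congr rfl fun y _ => ?_
        simp only [MulAction.toPerm_apply, ha, hb, hK, smul_inv_smul]
        split_ifs <;> simp
    _ = ∑ y, ∑ g : G, (if F (g⁻¹ • a y) then 1 else 0) * (if F (b y) then K y else 0) :=
        Finset.sum_comm
    _ = _ := by
        refine Finset.sum_congr rfl fun y _ => ?_
        rw [← Finset.sum_mul, h2, one_mul]

open Classical in
theorem ppInvariance {G V : Type*} [Group G] [Fintype G] [Fintype V] [MulAction G V]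
    {N : ℕ} (F : V → Prop) (hF : ∀ v, ∃! g : G, F (g • v))
    (ch : (Fin (N + 2) → V) → Prop) (hch : ∀ (g : G) v, ch (fun i => g • v i) ↔ ch v)
    (thin : ∀ (t : Fin (N + 2)) (w : Fin (N + 1) → V),
      ∑ x : V, (if ch (t.insertNth x w) then (1 : ZMod 2) else 0) = 0)
    (e : Fin (N + 1) → G → ZMod 2) (s s' : Fin (N + 1) → V → ZMod 2)
    (hs : ∀ i g v, s i (g • v) = s i v + e i g) (hs' : ∀ i g v, s' i (g • v) = s' i v + e i g) :
    ∑ v, (if F (v 0) then (if ch v then ppCup s v else 0) else 0) =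
    ∑ v, (if F (v 0) then (if ch v then ppCup s' v else 0) else 0) := by
  obtain ⟨ψ, hψ, h⟩ := ppCup_diff e s s' hs hs'
  have key : ∀ t : Fin (N + 2), ∑ v : Fin (N + 2) → V, (if F (v 0) then
      (if ch v then ψ (fun i => v (t.succAbove i)) else 0) else 0) = 0 := by
    intro t
    rw [ppSum_shift (G := G) F hF (fun v : Fin (N + 2) → V => v 0)
      (fun v => v (t.succAbove 0)) (fun _ _ => rfl) (fun _ _ => rfl)
      (fun v => if ch v then ψ (fun i => v (t.succAbove i)) else 0)]
    · rw [← Equiv.sum_comp (Fin.insertNthEquiv (fun _ => V) t), Fintype.sum_prod_type_right]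
      refine Finset.sum_eq_zero fun w _ => ?_
      have := thin t w
      calc _ = ∑ x : V, (if F (w 0) then ψ w else 0) *
            (if ch (t.insertNth x w) then (1 : ZMod 2) else 0) := by
            refine Finset.sum_congr rfl fun x _ => ?_
            have hins : (Fin.insertNthEquiv (fun _ => V) t) (x, w) = t.insertNth x w := rfl
            simp only [hins, Fin.insertNth_apply_succAbove]
            split_ifs <;> simp
        _ = 0 := by rw [← Finset.mul_sum, this, mul_zero]
    · intro g v
      have h1 := hch g v
      have h2 := hψ g (fun i => v (t.succAbove i))
      change (if ch (fun i => g • v i) then ψ (fun i => g • v (t.succAbove i)) else 0) = _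
      simp only [h1, h2]
  rw [← sub_eq_zero, ← Finset.sum_sub_distrib]
  calc _ = ∑ v : Fin (N + 2) → V, ∑ t : Fin (N + 2), (if F (v 0) then
      (if ch v then ψ (fun i => v (t.succAbove i)) else 0) else 0) := by
        refine Finset.sum_congr rfl fun v _ => ?_
        split_ifs
        · have := h v
          unfold ppDelta at this
          rw [← this]
          linear_combination -ppZ2 (ppCup s' v)
        · simp
        · simp
    _ = 0 := by
      rw [Finset.sum_comm]
      exact Finset.sum_eq_zero fun t _ => key t

/-- coordinates -/
abbrev PpI {k : ℕ} (m : Fin k → ℕ) : Type := Σ b : Fin k, Fin (m b + 1)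

/-- lattice points of the product of cube boundaries -/
def PpOK {k : ℕ} {m : Fin k → ℕ} (M : ℤ) (x : PpI m → ℤ) : Prop :=
  (∀ c, -M ≤ x c ∧ x c ≤ M) ∧ ∀ b, ∃ i, x ⟨b, i⟩ = M ∨ x ⟨b, i⟩ = -M

/-- covering relation -/
def PpCov {k : ℕ} {m : Fin k → ℕ} (u x : PpI m → ℤ) : Prop :=
  ∃ c, u c % 2 = 0 ∧ (x c = u c + 1 ∨ x c = u c - 1) ∧ ∀ d, d ≠ c → x d = u d

/-- top cells -/
def PpTop {k : ℕ} {m : Fin k → ℕ} (x : PpI m → ℤ) : Prop :=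
  ∀ b i i', x ⟨b, i⟩ % 2 = 0 → x ⟨b, i'⟩ % 2 = 0 → i = i'

/-- bottom cells -/
def PpBot {k : ℕ} {m : Fin k → ℕ} (x : PpI m → ℤ) : Prop := ∀ c, x c % 2 = 0

theorem ppThinBot {k : ℕ} {m : Fin k → ℕ} {M : ℤ} (hM : M % 2 = 0) {y w : PpI m → ℤ}
    (hy : PpOK M y) (hw : PpOK M w) (hb : PpBot y) (hc : PpCov y w) :
    PpOK M (fun c => 2 * w c - y c) ∧ PpBot (fun c => 2 * w c - y c) ∧
      PpCov (fun c => 2 * w c - y c) w ∧ (fun c => 2 * w c - y c) ≠ y := by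
  obtain ⟨c, h0, h1, h2⟩ := hc
  refine ⟨⟨fun d => ?_, fun b => ?_⟩, fun d => ?_, ⟨c, ?_, ?_, ?_⟩, fun h => ?_⟩
  · have a1 := hy.1 d
    have a2 := hw.1 d
    by_cases hd : d = c
    · subst hd; beta_reduce; omega
    · have := h2 d hd; beta_reduce; omega
  · obtain ⟨i, hi⟩ := hw.2 b
    refine ⟨i, ?_⟩
    by_cases hd : (⟨b, i⟩ : PpI m) = c
    · subst hd; beta_reduce; omega
    · have := h2 _ hd; beta_reduce; omega
  · have := hb d; beta_reduce; omega
  · beta_reduce; omega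
  · beta_reduce; omega
  · intro d hd; have := h2 d hd; beta_reduce; omega
  · have := congrFun h c; beta_reduce at this; omega

theorem ppThinMid {k : ℕ} {m : Fin k → ℕ} {M : ℤ} (hM : M % 2 = 0) {u y w : PpI m → ℤ}
    (hu : PpOK M u) (hw : PpOK M w) (hc : PpCov u y) (hc' : PpCov y w) :
    PpOK M (fun c => u c + w c - y c) ∧ 
      PpCov u (fun c => u c + w c - y c) ∧ PpCov (fun c => u c + w c - y c) w ∧
      (fun c => u c + w c - y c) ≠ y := by
  obtain ⟨c, h0, h1, h2⟩ := hc
  obtain ⟨c', h0', h1', h2'⟩ := hc'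
  have hne : c' ≠ c := by rintro rfl; omega
  have e1 := h2 c' hne
  have e2 := h2' c hne.symm
  refine ⟨⟨fun d => ?_, fun b => ?_⟩, ⟨c', ?_, ?_, ?_⟩, ⟨c, ?_, ?_, ?_⟩, fun h => ?_⟩
  · have a1 := hu.1 d
    have a2 := hw.1 d
    by_cases hd : d = c
    · subst hd; beta_reduce; omega
    · have := h2 d hd; beta_reduce; omega
  · obtain ⟨i, hi⟩ := hw.2 b
    refine ⟨i, ?_⟩
    have a1 : (⟨b, i⟩ : PpI m) ≠ c := by rintro rfl; omega
    have a2 : (⟨b, i⟩ : PpI m) ≠ c' := by rintro rfl; omega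
    have := h2 _ a1
    have := h2' _ a2
    beta_reduce; omega
  · omega
  · beta_reduce; omega
  · intro d hd; have := h2' d hd; beta_reduce; omega
  · beta_reduce; omega
  · beta_reduce; omega
  · intro d hd; have := h2 d hd; beta_reduce; omega
  · have := congrFun h c; beta_reduce at this; omega

theorem ppThinTop {k : ℕ} {m : Fin k → ℕ} {M : ℤ} (hM : M % 2 = 0) (hM0 : 0 < M) {u x : PpI m → ℤ}
    (hu : PpOK M u) (hx : PpOK M x) (hc : PpCov u x) (ht : PpTop x) :
    ∃ K : PpI m → ℤ, ∀ y, PpOK M y → PpCov u y → PpTop y →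
      PpOK M (fun c => K c - y c) ∧ PpCov u (fun c => K c - y c) ∧ PpTop (fun c => K c - y c) ∧
      (fun c => K c - y c) ≠ y := by
  obtain ⟨⟨b, i⟩, h0, h1, h2⟩ := hc
  obtain ⟨i', hi'⟩ := hx.2 b
  have hne : i' ≠ i := by rintro rfl; omega
  have hne2 : (⟨b, i'⟩ : PpI m) ≠ ⟨b, i⟩ := by
    intro h; exact hne (by simpa using h)
  have e1 := h2 _ hne2
  -- any y changes i or i'
  have hy : ∀ y, PpCov u y → PpTop y → ∃ l, (l = i ∨ l = i') ∧ 
      (y ⟨b, l⟩ = u ⟨b, l⟩ + 1 ∨ y ⟨b, l⟩ = u ⟨b, l⟩ - 1) ∧ ∀ d, d ≠ ⟨b, l⟩ → y d = u d := by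
    rintro y ⟨c, g0, g1, g2⟩ hty
    by_cases hc1 : c = ⟨b, i⟩
    · subst hc1; exact ⟨i, Or.inl rfl, g1, g2⟩
    by_cases hc2 : c = ⟨b, i'⟩
    · subst hc2; exact ⟨i', Or.inr rfl, g1, g2⟩
    have := g2 _ (Ne.symm hc1)
    have := g2 _ (Ne.symm hc2)
    exact absurd (hty b i' i (by omega) (by omega)) hne
  by_cases hb : u ⟨b, i⟩ = M ∨ u ⟨b, i⟩ = -M
  · refine ⟨fun c => 2 * u c - (if c = ⟨b, i⟩ then (if u ⟨b, i⟩ = M then 1 else -1) else 0)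
      - (if c = ⟨b, i'⟩ then (if u ⟨b, i'⟩ = M then 1 else -1) else 0), ?_⟩
    intro y hyo hyc hyt
    obtain ⟨l, hl, g1, g2⟩ := hy y hyc hyt
    -- the other one
    obtain ⟨l', hl', hll⟩ : ∃ l', (l' = i ∨ l' = i') ∧ l ≠ l' ∧ (l = i ∧ l' = i' ∨ l = i' ∧ l' = i) := by
      rcases hl with rfl | rfl
      · exact ⟨i', Or.inr rfl, hne.symm, Or.inl ⟨rfl, rfl⟩⟩
      · exact ⟨i, Or.inl rfl, hne, Or.inr ⟨rfl, rfl⟩⟩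
    have hll2 : (⟨b, l⟩ : PpI m) ≠ ⟨b, l'⟩ := by
      intro h; exact hll.1 (by simpa using h)
    set K : PpI m → ℤ := fun c => 2 * u c - (if c = ⟨b, i⟩ then (if u ⟨b, i⟩ = M then 1 else -1) else 0)
      - (if c = ⟨b, i'⟩ then (if u ⟨b, i'⟩ = M then 1 else -1) else 0) with hK
    have K1 : ∀ d : PpI m, d ≠ ⟨b, l⟩ → d ≠ ⟨b, l'⟩ → K d = 2 * u d := by
      intro d d1 d2
      have : d ≠ ⟨b, i⟩ ∧ d ≠ ⟨b, i'⟩ := by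
        rcases hll.2 with ⟨rfl, rfl⟩ | ⟨rfl, rfl⟩
        · exact ⟨d1, d2⟩
        · exact ⟨d2, d1⟩
      simp [hK, this.1, this.2]
    have K2 : ∀ z, (z = l ∨ z = l') → (u ⟨b, z⟩ = M ∧ K ⟨b, z⟩ = 2 * u ⟨b, z⟩ - 1) ∨
        (u ⟨b, z⟩ = - M ∧ K ⟨b, z⟩ = 2 * u ⟨b, z⟩ + 1) := by
      intro z hz
      have : z = i ∨ z = i' := by
        rcases hll.2 with ⟨rfl, rfl⟩ | ⟨rfl, rfl⟩ <;> tauto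
      rcases this with rfl | rfl
      · simp only [hK, hne2.symm, if_true, if_false]
        split_ifs with hh
        · left; omega
        · right; omega
      · simp only [hK, hne2, if_true, if_false]
        split_ifs with hh
        · left; omega
        · right; omega
    have k1 := K2 l (Or.inl rfl)
    have k2 := K2 l' (Or.inr rfl)
    have y1 := hyo.1 ⟨b, l⟩
    have y2 := g2 _ hll2.symm
    refine ⟨⟨fun d => ?_, fun b' => ?_⟩, ⟨⟨b, l'⟩, ?_, ?_, ?_⟩, fun b' z z' hz hz' => ?_, fun h => ?_⟩
    · by_cases d1 : d = ⟨b, l⟩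
      · subst d1; beta_reduce; omega
      by_cases d2 : d = ⟨b, l'⟩
      · subst d2; beta_reduce; omega
      have := K1 d d1 d2
      have := g2 d d1
      have := hu.1 d
      beta_reduce; omega
    · by_cases hbb : b' = b
      · subst hbb
        exact ⟨l, by beta_reduce; omega⟩
      · obtain ⟨z, hz⟩ := hu.2 b'
        refine ⟨z, ?_⟩
        have d1 : (⟨b', z⟩ : PpI m) ≠ ⟨b, l⟩ := fun h => hbb (congrArg Sigma.fst h)
        have d2 : (⟨b', z⟩ : PpI m) ≠ ⟨b, l'⟩ := fun h => hbb (congrArg Sigma.fst h)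
        have := K1 _ d1 d2
        have := g2 _ d1
        beta_reduce; omega
    · omega
    · beta_reduce; omega
    · intro d d2
      by_cases d1 : d = ⟨b, l⟩
      · subst d1; beta_reduce; omega
      have := K1 d d1 d2
      have := g2 d d1
      beta_reduce; omega
    · have hyt' := hyt b'
      beta_reduce at hz hz'
      by_cases hbb : b' = b
      · subst hbb
        -- even coordinates of K - y in block b are just l
        have : ∀ z, (K ⟨b', z⟩ - y ⟨b', z⟩) % 2 = 0 → z = l := by
          intro z hz
          by_contra hzl
          have d1 : (⟨b', z⟩ : PpI m) ≠ ⟨b', l⟩ := by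
            intro h; exact hzl (by simpa using h)
          by_cases d2 : z = l'
          · subst d2; omega
          have d2' : (⟨b', z⟩ : PpI m) ≠ ⟨b', l'⟩ := by
            intro h; exact d2 (by simpa using h)
          have := K1 _ d1 d2'
          have := g2 _ d1
          exact d2 (hyt b' z l' (by omega) (by omega))
        rw [this z hz, this z' hz']
      · have q : ∀ z : Fin (m b' + 1), K ⟨b', z⟩ = 2 * u ⟨b', z⟩ := fun z =>
          K1 _ (fun h => hbb (congrArg Sigma.fst h)) (fun h => hbb (congrArg Sigma.fst h))
        have := q z
        have := q z'
        exact hyt' z z' (by omega) (by omega)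
    · have := congrFun h ⟨b, l⟩
      beta_reduce at this; omega
  · refine ⟨fun c => 2 * u c, ?_⟩
    intro y hyo hyc hyt
    obtain ⟨l, hl, g1, g2⟩ := hy y hyc hyt
    have hli : l = i := by
      rcases hl with rfl | rfl
      · rfl
      obtain ⟨z, hz⟩ := hyo.2 b
      have a1 := g2 _ hne2.symm
      have := hyt b z i (by omega) (by omega)
      subst this
      omega
    subst hli
    have hul := hu.1 ⟨b, l⟩
    refine ⟨⟨fun d => ?_, fun b' => ?_⟩, ⟨⟨b, l⟩, h0, ?_, ?_⟩, fun b' z z' hz hz' => ?_, fun h => ?_⟩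
    · by_cases d1 : d = ⟨b, l⟩
      · subst d1; beta_reduce; omega
      have := g2 d d1
      have := hu.1 d
      beta_reduce; omega
    · obtain ⟨z, hz⟩ := hyo.2 b'
      have d1 : (⟨b', z⟩ : PpI m) ≠ ⟨b, l⟩ := by
        intro h; rw [h] at hz; omega
      have := g2 _ d1
      exact ⟨z, by beta_reduce; omega⟩
    · beta_reduce; omega
    · intro d hd
      have := g2 d hd
      beta_reduce; omega
    · beta_reduce at hz hz'
      exact hyt b' z z' (by omega) (by omega)
    · have := congrFun h ⟨b, l⟩
      beta_reduce at this; omega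

/-- vertex set -/
abbrev PpV {k : ℕ} (m : Fin k → ℕ) (M : ℤ) : Type := {x : PpI m → ℤ // PpOK M x}

instance ppVFinite {k : ℕ} (m : Fin k → ℕ) (M : ℤ) : Finite (PpV m M) := by
  have h : Set.Finite {x : PpI m → ℤ | PpOK M x} := by
    refine (Set.Finite.pi' (fun _ : PpI m => Set.finite_Icc (-M) M)).subset ?_
    intro x hx c
    exact ⟨(hx.1 c).1, (hx.1 c).2⟩
  exact h.to_subtype

noncomputable instance ppVFintype {k : ℕ} (m : Fin k → ℕ) (M : ℤ) : Fintype (PpV m M) :=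
  Fintype.ofFinite _

/-- sign action -/
def ppAct {k : ℕ} {m : Fin k → ℕ} (g : Fin k → ℤˣ) (x : PpI m → ℤ) : PpI m → ℤ :=
  fun c => (g c.1 : ℤ) * x c

theorem ppUnit (u : ℤˣ) : (u : ℤ) = 1 ∨ (u : ℤ) = -1 := by
  rcases Int.units_eq_one_or u with h | h <;> simp [h]

theorem ppAct_OK {k : ℕ} {m : Fin k → ℕ} {M : ℤ} (g : Fin k → ℤˣ) {x : PpI m → ℤ}
    (hx : PpOK M x) : PpOK M (ppAct g x) := by
  refine ⟨fun c => ?_, fun b => ?_⟩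
  · have := hx.1 c
    rcases ppUnit (g c.1) with h | h <;> simp only [ppAct, h] <;> omega
  · obtain ⟨i, hi⟩ := hx.2 b
    refine ⟨i, ?_⟩
    rcases ppUnit (g b) with h | h <;> simp only [ppAct, h] <;> omega

theorem ppAct_Cov {k : ℕ} {m : Fin k → ℕ} (g : Fin k → ℤˣ) {x y : PpI m → ℤ}
    (h : PpCov x y) : PpCov (ppAct g x) (ppAct g y) := by
  obtain ⟨c, h0, h1, h2⟩ := h
  refine ⟨c, ?_, ?_, fun d hd => ?_⟩
  · rcases ppUnit (g c.1) with h | h <;> simp only [ppAct, h] <;> omega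
  · rcases ppUnit (g c.1) with h | h <;> simp only [ppAct, h] <;> omega
  · simp only [ppAct, h2 d hd]

theorem ppAct_Bot {k : ℕ} {m : Fin k → ℕ} (g : Fin k → ℤˣ) {x : PpI m → ℤ}
    (h : PpBot x) : PpBot (ppAct g x) := by
  intro c
  have := h c
  rcases ppUnit (g c.1) with h | h <;> simp only [ppAct, h] <;> omega

theorem ppAct_Top {k : ℕ} {m : Fin k → ℕ} (g : Fin k → ℤˣ) {x : PpI m → ℤ}
    (h : PpTop x) : PpTop (ppAct g x) := by
  intro b i i' h1 h2
  refine h b i i' ?_ ?_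
  · rcases ppUnit (g b) with h | h <;> simp only [ppAct, h] at h1 <;> omega
  · rcases ppUnit (g b) with h | h <;> simp only [ppAct, h] at h2 <;> omega

instance ppMulAction {k : ℕ} (m : Fin k → ℕ) (M : ℤ) : MulAction (Fin k → ℤˣ) (PpV m M) where
  smul g x := ⟨ppAct g x.1, ppAct_OK g x.2⟩
  one_smul x := by
    apply Subtype.ext; funext c
    change ((1 : ℤˣ) : ℤ) * x.1 c = x.1 c
    simp
  mul_smul g h x := by
    apply Subtype.ext; funext c
    change (((g c.1) * (h c.1) : ℤˣ) : ℤ) * x.1 c = (g c.1 : ℤ) * ((h c.1 : ℤ) * x.1 c)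
    push_cast; ring

theorem ppSmul_val {k : ℕ} {m : Fin k → ℕ} {M : ℤ} (g : Fin k → ℤˣ) (x : PpV m M) :
    (g • x).1 = ppAct g x.1 := rfl

/-- maximal chains -/
def PpCh {k : ℕ} {m : Fin k → ℕ} {M : ℤ} {N : ℕ} (v : Fin (N + 1) → PpV m M) : Prop :=
  PpBot (v 0).1 ∧ (∀ i : Fin N, PpCov (v i.castSucc).1 (v i.succ).1) ∧ PpTop (v (Fin.last N)).1

theorem ppCh_smul {k : ℕ} {m : Fin k → ℕ} {M : ℤ} {N : ℕ} (g : Fin k → ℤˣ)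
    (v : Fin (N + 1) → PpV m M) : PpCh (fun i => g • v i) ↔ PpCh v := by
  have key : ∀ (g : Fin k → ℤˣ) (v : Fin (N + 1) → PpV m M), PpCh v → PpCh (fun i => g • v i) := by
    intro g v h
    exact ⟨ppAct_Bot g h.1, fun i => ppAct_Cov g (h.2.1 i), ppAct_Top g h.2.2⟩
  refine ⟨fun h => ?_, key g v⟩
  have := key g⁻¹ _ h
  simpa using this

theorem ppCh_update {k : ℕ} {m : Fin k → ℕ} {M : ℤ} {N : ℕ} (v : Fin (N + 1) → PpV m M)
    (hv : PpCh v) (t : Fin (N + 1)) (y : PpV m M) :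
    PpCh (Function.update v t y) ↔ ((t = 0 → PpBot y.1) ∧
      (∀ i : Fin N, i.succ = t → PpCov (v i.castSucc).1 y.1) ∧
      (∀ i : Fin N, i.castSucc = t → PpCov y.1 (v i.succ).1) ∧
      (t = Fin.last N → PpTop y.1)) := by
  have hne : ∀ i : Fin N, i.castSucc ≠ i.succ := fun i => (Fin.castSucc_lt_succ (i := i)).ne
  constructor
  · rintro ⟨h1, h2, h3⟩
    refine ⟨?_, ?_, ?_, ?_⟩
    · rintro rfl; simpa using h1
    · rintro i rfl
      have := h2 i
      rwa [Function.update_self, Function.update_of_ne (hne i)] at this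
    · rintro i rfl
      have := h2 i
      rwa [Function.update_self, Function.update_of_ne (hne i).symm] at this
    · rintro rfl; simpa using h3
  · rintro ⟨h1, h2, h3, h4⟩
    refine ⟨?_, fun i => ?_, ?_⟩
    · by_cases ht : t = 0
      · subst ht; simpa using h1 rfl
      · rw [Function.update_of_ne (Ne.symm ht)]; exact hv.1
    · by_cases ht : i.succ = t
      · subst ht
        rw [Function.update_self, Function.update_of_ne (hne i)]; exact h2 i rfl
      by_cases ht' : i.castSucc = t
      · subst ht'
        rw [Function.update_self, Function.update_of_ne (hne i).symm]; exact h3 i rfl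
      rw [Function.update_of_ne ht, Function.update_of_ne ht']; exact hv.2.1 i
    · by_cases ht : t = Fin.last N
      · subst ht; simpa using h4 rfl
      · rw [Function.update_of_ne (Ne.symm ht)]; exact hv.2.2

theorem ppThin_update {k : ℕ} {m : Fin k → ℕ} {M : ℤ} (hM : M % 2 = 0) (hM0 : 0 < M) {N : ℕ}
    (v : Fin (N + 2) → PpV m M) (hv : PpCh v) (t : Fin (N + 2)) :
    ∃ K : PpI m → ℤ, ∀ y, PpCh (Function.update v t y) → ∃ y' : PpV m M,
      y'.1 = (fun c => K c - y.1 c) ∧ PpCh (Function.update v t y') ∧ y' ≠ y := by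
  simp only [ppCh_update v hv]
  induction t using Fin.cases with
  | zero =>
    refine ⟨fun c => 2 * (v (Fin.succ 0)).1 c, fun y hy => ?_⟩
    obtain ⟨h1, h2, h3, h4⟩ := ppThinBot hM y.2 (v (Fin.succ 0)).2 (hy.1 rfl) (hy.2.2.1 0 rfl)
    refine ⟨⟨_, h1⟩, rfl, ⟨fun _ => h2, ?_, ?_, ?_⟩, ?_⟩
    · intro i hi; exact absurd hi (Fin.succ_ne_zero i)
    · intro i hi
      have : i = 0 := by apply Fin.castSucc_injective; rw [hi]; rfl
      subst this; exact h3
    · intro h; simp [Fin.ext_iff] at h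
    · intro h; exact h4 (congrArg Subtype.val h)
  | succ t =>
    induction t using Fin.lastCases with
    | last =>
      have hc := hv.2.1 (Fin.last N)
      rw [Fin.succ_last] at *
      obtain ⟨K, hK⟩ := ppThinTop hM hM0 (v (Fin.last N).castSucc).2 (v (Fin.last (N + 1))).2 hc hv.2.2
      refine ⟨K, fun y hy => ?_⟩
      obtain ⟨h1, h2, h3, h4⟩ := hK y.1 y.2 (hy.2.1 (Fin.last N) (Fin.succ_last N)) (hy.2.2.2 rfl)
      refine ⟨⟨_, h1⟩, rfl, ⟨?_, ?_, ?_, fun _ => h3⟩, ?_⟩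
      · intro h; simp [Fin.ext_iff] at h
      · intro i hi
        have : i = Fin.last N := by apply Fin.succ_injective; rw [hi]; exact (Fin.succ_last N).symm
        subst this; exact h2
      · intro i hi; exact absurd hi (Fin.castSucc_lt_last i).ne
      · intro h; exact h4 (congrArg Subtype.val h)
    | cast t =>
      refine ⟨fun c => (v t.castSucc.castSucc).1 c + (v t.succ.succ).1 c, fun y hy => ?_⟩
      obtain ⟨h1, h2, h3, h4⟩ := ppThinMid hM (v t.castSucc.castSucc).2 (v t.succ.succ).2
        (hy.2.1 t.castSucc rfl) (hy.2.2.1 t.succ rfl)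
      refine ⟨⟨_, h1⟩, rfl, ⟨?_, ?_, ?_, ?_⟩, ?_⟩
      · intro h; simp [Fin.ext_iff] at h
      · intro i hi
        have : i = t.castSucc := by apply Fin.succ_injective; rw [hi]
        subst this; exact h2
      · intro i hi
        have : i = t.succ := by apply Fin.castSucc_injective; rw [hi]; rfl
        subst this; exact h3
      · intro h
        have := t.2
        simp [Fin.ext_iff] at h; omega
      · intro h; exact h4 (congrArg Subtype.val h)

open Classical in
theorem ppThin {k : ℕ} {m : Fin k → ℕ} {M : ℤ} (hM : M % 2 = 0) (hM0 : 0 < M) {N : ℕ}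
    (t : Fin (N + 2)) (w : Fin (N + 1) → PpV m M) :
    ∑ x : PpV m M, (if PpCh (t.insertNth x w : Fin (N + 2) → PpV m M) then (1 : ZMod 2) else 0) = 0 := by
  by_cases hex : ∃ x, PpCh (t.insertNth x w : Fin (N + 2) → PpV m M)
  · obtain ⟨x, hx⟩ := hex
    obtain ⟨K, hK⟩ := ppThin_update hM hM0 _ hx t
    have e : ∀ y, Function.update (t.insertNth x w : Fin (N + 2) → PpV m M) t y = t.insertNth y w := by
      intro y; exact Fin.update_insertNth (α := fun _ => PpV m M) t x y w
    simp only [e] at hK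
    rw [← Finset.sum_filter]
    choose! T hT using hK
    refine Finset.sum_involution (fun y _ => T y) ?_ ?_ ?_ ?_
    · intro y hy; exact ppZ2 1
    · intro y hy _; exact (hT y (by simpa using hy)).2.2
    · intro y hy; simpa using (hT y (by simpa using hy)).2.1
    · intro y hy
      have h1 := hT y (by simpa using hy)
      have h2 := hT (T y) h1.2.1
      apply Subtype.ext
      rw [h2.1, h1.1]; funext c; ring
  · apply Finset.sum_eq_zero
    intro x _
    rw [if_neg]
    intro h; exact hex ⟨x, h⟩

/-- first nonzero index in a block -/
def PpFirst {k : ℕ} {m : Fin k → ℕ} (x : PpI m → ℤ) (b : Fin k) (i : Fin (m b + 1)) : Prop :=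
  x ⟨b, i⟩ ≠ 0 ∧ ∀ i', i' < i → x ⟨b, i'⟩ = 0

open Classical in
/-- first nonzero index in a block, as a function -/
noncomputable def ppJ {k : ℕ} {m : Fin k → ℕ} (x : PpI m → ℤ) (b : Fin k) : Fin (m b + 1) :=
  if h : ∃ i, PpFirst x b i then h.choose else 0

/-- lexicographic sign of a block -/
noncomputable def ppSg {k : ℕ} {m : Fin k → ℕ} (x : PpI m → ℤ) (b : Fin k) : ℤˣ :=
  if 0 < x ⟨b, ppJ x b⟩ then 1 else -1

theorem ppFirst_unique {k : ℕ} {m : Fin k → ℕ} {x : PpI m → ℤ} {b : Fin k} {i i' : Fin (m b + 1)}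
    (h : PpFirst x b i) (h' : PpFirst x b i') : i = i' := by
  rcases lt_trichotomy i i' with hl | hl | hl
  · exact absurd (h'.2 i hl) h.1
  · exact hl
  · exact absurd (h.2 i' hl) h'.1

theorem ppJ_eq {k : ℕ} {m : Fin k → ℕ} {x : PpI m → ℤ} {b : Fin k} {i : Fin (m b + 1)}
    (h : PpFirst x b i) : ppJ x b = i := by
  have hex : ∃ i, PpFirst x b i := ⟨i, h⟩
  unfold ppJ
  rw [dif_pos hex]
  exact ppFirst_unique hex.choose_spec h

theorem ppJ_spec {k : ℕ} {m : Fin k → ℕ} {M : ℤ} (hM0 : 0 < M) {x : PpI m → ℤ} (hx : PpOK M x)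
    (b : Fin k) : PpFirst x b (ppJ x b) := by
  have hex : ∃ i, PpFirst x b i := by
    obtain ⟨i, hi⟩ := hx.2 b
    have hne : ∃ i, x ⟨b, i⟩ ≠ 0 := ⟨i, by omega⟩
    obtain ⟨i, hi, hmin⟩ := WellFounded.has_min (wellFounded_lt (α := Fin (m b + 1)))
      {i | x ⟨b, i⟩ ≠ 0} hne
    refine ⟨i, hi, fun i' hi' => ?_⟩
    by_contra h
    exact hmin i' h hi'
  unfold ppJ
  rw [dif_pos hex]
  exact hex.choose_spec

theorem ppJ_act {k : ℕ} {m : Fin k → ℕ} {M : ℤ} (hM0 : 0 < M) {x : PpI m → ℤ} (hx : PpOK M x)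
    (g : Fin k → ℤˣ) (b : Fin k) : ppJ (ppAct g x) b = ppJ x b := by
  apply ppJ_eq
  have h := ppJ_spec hM0 hx b
  refine ⟨?_, fun i' hi' => ?_⟩
  · have := h.1
    simp only [ppAct]
    exact mul_ne_zero (Units.ne_zero _) this
  · have := h.2 i' hi'
    simp [ppAct, this]

theorem ppSg_act {k : ℕ} {m : Fin k → ℕ} {M : ℤ} (hM0 : 0 < M) {x : PpI m → ℤ} (hx : PpOK M x)
    (g : Fin k → ℤˣ) (b : Fin k) : ppSg (ppAct g x) b = g b * ppSg x b := by
  have h := (ppJ_spec hM0 hx b).1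
  unfold ppSg
  rw [ppJ_act hM0 hx]
  have hv : ppAct g x ⟨b, ppJ x b⟩ = (g b : ℤ) * x ⟨b, ppJ x b⟩ := rfl
  rcases Int.units_eq_one_or (g b) with hg | hg
  · rw [hg] at hv ⊢
    rw [hv]; simp
  · rw [hg] at hv ⊢
    push_cast at hv
    by_cases hp : 0 < x ⟨b, ppJ x b⟩
    · rw [if_pos hp, if_neg (by omega)]; rfl
    · rw [if_neg hp, if_pos (by omega)]; rfl

/-- additive version of signs -/
def ppE (u : ℤˣ) : ZMod 2 := if u = 1 then 0 else 1

theorem ppE_mul (u v : ℤˣ) : ppE (u * v) = ppE u + ppE v := by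
  revert u v; decide

theorem ppE_ne {u v : ℤˣ} (h : u ≠ v) : v = -u := by
  revert u v; decide

/-- the standard equivariant labelling -/
noncomputable def ppStd {k : ℕ} {m : Fin k → ℕ} {M : ℤ} (S : Finset (Fin k)) (v : PpV m M) : ZMod 2 :=
  ∑ b ∈ S, ppE (ppSg v.1 b)

theorem ppStd_smul {k : ℕ} {m : Fin k → ℕ} {M : ℤ} (hM0 : 0 < M) (S : Finset (Fin k))
    (g : Fin k → ℤˣ) (v : PpV m M) : ppStd S (g • v) = ppStd S v + ∑ b ∈ S, ppE (g b) := by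
  unfold ppStd
  rw [← Finset.sum_add_distrib]
  refine Finset.sum_congr rfl fun b _ => ?_
  rw [ppSmul_val, ppSg_act hM0 v.2, ppE_mul, add_comm]

theorem ppFund {k : ℕ} {m : Fin k → ℕ} {M : ℤ} (hM0 : 0 < M) (v : PpV m M) :
    ∃! g : Fin k → ℤˣ, ∀ b, ppSg (g • v).1 b = 1 := by
  refine ⟨fun b => ppSg v.1 b, fun b => ?_, fun g hg => ?_⟩
  · rw [ppSmul_val, ppSg_act hM0 v.2]; exact Int.units_mul_self _
  · funext b
    have := hg b
    rw [ppSmul_val, ppSg_act hM0 v.2] at this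
    have h2 := Int.units_mul_self (ppSg v.1 b)
    exact mul_right_cancel (this.trans h2.symm)

/-- what happens to the signs at a covering step -/
theorem ppFlip {k : ℕ} {m : Fin k → ℕ} {M : ℤ} (hM0 : 0 < M) {x y : PpI m → ℤ}
    (hx : PpOK M x) (hc : PpCov x y) :
    ∃ (b : Fin k) (l : Fin (m b + 1)), (∀ d, d ≠ ⟨b, l⟩ → y d = x d) ∧
      (∀ b', b' ≠ b → ppJ y b' = ppJ x b' ∧ ppSg y b' = ppSg x b') ∧
      (ppSg x b = ppSg y b ∨ (l < ppJ x b ∧ ppJ y b = l ∧ y ⟨b, l⟩ = -(ppSg x b : ℤ))) := by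
  obtain ⟨⟨b, l⟩, h0, h1, h2⟩ := hc
  refine ⟨b, l, h2, ?_, ?_⟩
  · intro b' hb'
    have hF := ppJ_spec hM0 hx b'
    have e : ∀ i, y ⟨b', i⟩ = x ⟨b', i⟩ := fun i => h2 _ (fun h => hb' (congrArg Sigma.fst h))
    have hF' : PpFirst y b' (ppJ x b') := by
      refine ⟨?_, fun i' hi' => ?_⟩
      · rw [e]; exact hF.1
      · rw [e]; exact hF.2 i' hi'
    have hJ := ppJ_eq hF'
    refine ⟨hJ, ?_⟩
    unfold ppSg
    rw [hJ, e]
  · have hF := ppJ_spec hM0 hx b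
    have e : ∀ i, i ≠ l → y ⟨b, i⟩ = x ⟨b, i⟩ := fun i hi => h2 _ (fun h => hi (by simpa using h))
    rcases lt_trichotomy l (ppJ x b) with hl | hl | hl
    · have hxl := hF.2 l hl
      have hF' : PpFirst y b l := by
        refine ⟨by omega, fun i' hi' => ?_⟩
        rw [e i' hi'.ne]; exact hF.2 i' (hi'.trans hl)
      have hJ := ppJ_eq hF'
      by_cases hs : ppSg x b = ppSg y b
      · exact Or.inl hs
      · right
        refine ⟨hl, hJ, ?_⟩
        have hs' := ppE_ne hs
        have : (ppSg y b : ℤ) = -(ppSg x b : ℤ) := by rw [hs']; simp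
        rw [← this]
        unfold ppSg
        rw [hJ]
        split_ifs with hh
        · push_cast; omega
        · push_cast; omega
    · left
      have hxl := hF.1
      rw [← hl] at hxl
      have hF' : PpFirst y b l := by
        refine ⟨by omega, fun i' hi' => ?_⟩
        rw [e i' hi'.ne]; exact hF.2 i' (by rw [← hl]; exact hi')
      have hJ := ppJ_eq hF'
      unfold ppSg
      rw [hJ, ← hl]
      have : 0 < x ⟨b, l⟩ ↔ 0 < y ⟨b, l⟩ := by omega
      simp only [this]
    · left
      have hF' : PpFirst y b (ppJ x b) := by
        refine ⟨?_, fun i' hi' => ?_⟩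
        · rw [e _ hl.ne]; exact hF.1
        · rw [e i' (hi'.trans hl).ne]; exact hF.2 i' hi'
      have hJ := ppJ_eq hF'
      unfold ppSg
      rw [hJ, e _ hl.ne]

/-- number of earlier steps in a block -/
def ppNb {k N : ℕ} (a : Fin N → Fin k) (l : ℕ) (b : Fin k) : ℕ :=
  (Finset.univ.filter (fun i : Fin N => a i = b ∧ i.val < l)).card

theorem ppNb_zero {k N : ℕ} (a : Fin N → Fin k) (b : Fin k) : ppNb a 0 b = 0 := by
  simp [ppNb]

theorem ppNb_succ {k N : ℕ} (a : Fin N → Fin k) (i : Fin N) (b : Fin k) :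
    ppNb a (i.val + 1) b = ppNb a i.val b + if a i = b then 1 else 0 := by
  unfold ppNb
  split_ifs with h
  · have : (Finset.univ.filter (fun i' : Fin N => a i' = b ∧ i'.val < i.val + 1)) =
        insert i (Finset.univ.filter (fun i' : Fin N => a i' = b ∧ i'.val < i.val)) := by
      ext i'
      simp only [Finset.mem_filter, Finset.mem_univ, true_and, Finset.mem_insert, Fin.ext_iff]
      constructor
      · rintro ⟨h1, h2⟩
        rcases Nat.lt_succ_iff_lt_or_eq.mp h2 with h3 | h3
        · exact Or.inr ⟨h1, h3⟩
        · exact Or.inl h3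
      · rintro (h1 | ⟨h1, h2⟩)
        · have : i' = i := Fin.ext h1
          subst this; exact ⟨by simpa [Fin.ext_iff] using h, by omega⟩
        · exact ⟨h1, by omega⟩
    rw [this, Finset.card_insert_of_notMem]
    simp
  · rw [add_zero]
    congr 1
    ext i'
    simp only [Finset.mem_filter, Finset.mem_univ, true_and]
    constructor
    · rintro ⟨h1, h2⟩
      refine ⟨h1, ?_⟩
      rcases Nat.lt_succ_iff_lt_or_eq.mp h2 with h3 | h3
      · exact h3
      · have : i' = i := Fin.ext h3
        subst this; exact absurd h1 h
    · rintro ⟨h1, h2⟩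
      exact ⟨h1, by omega⟩

theorem ppNb_le {k N : ℕ} (a : Fin N → Fin k) (l : ℕ) (b : Fin k) :
    ppNb a l b ≤ (Finset.univ.filter (fun i : Fin N => a i = b)).card := by
  unfold ppNb
  apply Finset.card_le_card
  intro i
  simp only [Finset.mem_filter, Finset.mem_univ, true_and]
  exact fun h => h.1

theorem ppNb_last {k N : ℕ} (a : Fin N → Fin k) (b : Fin k) :
    ppNb a N b = (Finset.univ.filter (fun i : Fin N => a i = b)).card := by
  unfold ppNb
  congr 1
  ext i
  simp

/-- the special chain -/
def ppU {k N : ℕ} (m : Fin k → ℕ) (M : ℤ) (a : Fin N → Fin k) (l : ℕ) : PpI m → ℤ :=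
  fun c => if c.2.val = m c.1 then M else if m c.1 ≤ c.2.val + ppNb a l c.1 then
    (-1) ^ (m c.1 - c.2.val) else 0

theorem ppU_OK {k N : ℕ} (m : Fin k → ℕ) {M : ℤ} (hM0 : 0 < M) (a : Fin N → Fin k) (l : ℕ) :
    PpOK M (ppU m M a l) := by
  refine ⟨fun c => ?_, fun b => ⟨Fin.last _, by simp [ppU]⟩⟩
  unfold ppU
  rcases neg_one_pow_eq_or ℤ (m c.1 - c.2.val) with h | h <;> rw [h] <;> split_ifs <;> omega

theorem ppU_first {k N : ℕ} (m : Fin k → ℕ) {M : ℤ} (hM0 : 0 < M) (a : Fin N → Fin k)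
    (hm : ∀ b, (Finset.univ.filter (fun i : Fin N => a i = b)).card = m b) (l : ℕ) (b : Fin k) :
    (ppJ (ppU m M a l) b).val = m b - ppNb a l b ∧
    ppSg (ppU m M a l) b = (-1) ^ (ppNb a l b) := by
  have hle : ppNb a l b ≤ m b := (ppNb_le a l b).trans (hm b).le
  have hF : PpFirst (ppU m M a l) b ⟨m b - ppNb a l b, by omega⟩ := by
    refine ⟨?_, fun i' hi' => ?_⟩
    · unfold ppU
      rcases neg_one_pow_eq_or ℤ (m b - (m b - ppNb a l b)) with h | h <;>
        simp only [h] <;> split_ifs <;> omega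
    · have : i'.val < m b - ppNb a l b := hi'
      unfold ppU
      simp only
      rw [if_neg (by omega), if_neg (by omega)]
  have hJ := ppJ_eq hF
  refine ⟨by rw [hJ], ?_⟩
  unfold ppSg
  rw [hJ]
  unfold ppU
  simp only
  by_cases h0 : ppNb a l b = 0
  · rw [if_pos]
    · simp [h0]
    · rw [if_pos (by omega)]; exact hM0
  · rw [if_neg (by omega : ¬ (m b - ppNb a l b = m b)), if_pos (by omega : m b ≤ m b - ppNb a l b + ppNb a l b),
      Nat.sub_sub_self hle]
    rcases neg_one_pow_eq_or ℤ (ppNb a l b) with h | h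
    · have h' : (-1 : ℤˣ) ^ (ppNb a l b) = 1 := by
        ext; push_cast; exact h
      rw [h, h']; simp
    · have h' : (-1 : ℤˣ) ^ (ppNb a l b) = -1 := by
        ext; push_cast; exact h
      rw [h, h']; simp

theorem ppU_succ {k N : ℕ} (m : Fin k → ℕ) {M : ℤ} (a : Fin N → Fin k)
    (hm : ∀ b, (Finset.univ.filter (fun i : Fin N => a i = b)).card = m b) (i : Fin N) :
    ∃ l : Fin (m (a i) + 1), l.val + 1 + ppNb a i.val (a i) = m (a i) ∧
      ppU m M a i.val ⟨a i, l⟩ = 0 ∧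
      ppU m M a (i.val + 1) ⟨a i, l⟩ = (-1) ^ (ppNb a i.val (a i) + 1) ∧
      ∀ d, d ≠ ⟨a i, l⟩ → ppU m M a (i.val + 1) d = ppU m M a i.val d := by
  have hle : ppNb a (i.val + 1) (a i) ≤ m (a i) := (ppNb_le a _ _).trans (hm _).le
  have hs := ppNb_succ a i (a i)
  rw [if_pos rfl] at hs
  refine ⟨⟨m (a i) - ppNb a i.val (a i) - 1, by omega⟩, by simp only; omega, ?_, ?_, ?_⟩
  · unfold ppU
    simp only
    rw [if_neg (by omega), if_neg (by omega)]
  · unfold ppU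
    simp only
    rw [if_neg (by omega), if_pos (by omega)]
    congr 1; omega
  · rintro ⟨b, l⟩ hd
    have hs' := ppNb_succ a i b
    unfold ppU
    simp only
    by_cases hb : a i = b
    · subst hb
      have : l.val ≠ m (a i) - ppNb a i.val (a i) - 1 := by
        intro h; apply hd; congr 1; exact Fin.ext h
      have e : m (a i) ≤ l.val + ppNb a (i.val + 1) (a i) ↔ m (a i) ≤ l.val + ppNb a i.val (a i) := by
        omega
      simp only [e]
    · rw [if_neg hb, add_zero] at hs'
      rw [hs']

theorem ppTelescope {N : ℕ} (f : Fin (N + 1) → ℤ) :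
    ∑ i : Fin N, (f i.castSucc - f i.succ) = f 0 - f (Fin.last N) := by
  have h1 := Fin.sum_univ_succ f
  have h2 := Fin.sum_univ_castSucc f
  rw [Finset.sum_sub_distrib]
  linarith

theorem ppGood_step {k : ℕ} {m : Fin k → ℕ} {M : ℤ} (hM0 : 0 < M) (S : Finset (Fin k))
    (x y : PpV m M) (hc : PpCov x.1 y.1) (h : ppStd S x + ppStd S y ≠ 0) :
    ∃ (b : Fin k) (l : Fin (m b + 1)), b ∈ S ∧ (∀ d, d ≠ ⟨b, l⟩ → y.1 d = x.1 d) ∧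
      (∀ b', b' ≠ b → ppJ y.1 b' = ppJ x.1 b') ∧
      (l < ppJ x.1 b ∧ ppJ y.1 b = l ∧ y.1 ⟨b, l⟩ = -(ppSg x.1 b : ℤ)) := by
  obtain ⟨b, l, h1, h2, h3⟩ := ppFlip hM0 x.2 hc
  have key : ¬ (∀ b' ∈ S, ppSg y.1 b' = ppSg x.1 b') := by
    intro hh
    apply h
    have : ppStd S y = ppStd S x := by
      unfold ppStd
      exact Finset.sum_congr rfl fun b' hb' => by rw [hh b' hb']
    rw [this]; exact ppZ2 _
  refine ⟨b, l, ?_, h1, fun b' hb' => (h2 b' hb').1, ?_⟩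
  · by_contra hb
    apply key
    intro b' hb'
    exact (h2 b' (fun e => hb (e ▸ hb'))).2
  · rcases h3 with h3 | h3
    · exfalso
      apply key
      intro b' _
      by_cases e : b' = b
      · rw [e]; exact h3.symm
      · exact (h2 b' e).2
    · exact h3

theorem ppSigExt {k : ℕ} {m : Fin k → ℕ} {B a : Fin k} (h : B = a) (L : Fin (m B + 1))
    (q : Fin (m a + 1)) (hv : L.val = q.val) : (⟨B, L⟩ : PpI m) = ⟨a, q⟩ := by
  subst h
  have : L = q := Fin.ext hv
  rw [this]

theorem ppGood_unique {k N : ℕ} {m : Fin k → ℕ} {M : ℤ} (hM0 : 0 < M)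
    (S : Fin N → Finset (Fin k)) (a : Fin N → Fin k) (ha : ∀ i, ∀ b ∈ S i, b ≤ a i)
    (hm : ∀ b, (Finset.univ.filter (fun i : Fin N => a i = b)).card = m b)
    (v : Fin (N + 1) → PpV m M) (hch : PpCh v) (hF : ∀ b, ppSg (v 0).1 b = 1)
    (hg : ∀ i : Fin N, ppStd (S i) (v i.castSucc) + ppStd (S i) (v i.succ) ≠ 0)
    (l : Fin (N + 1)) : (v l).1 = ppU m M a l.val := by
  have hstep := fun i => ppGood_step hM0 (S i) _ _ (hch.2.1 i) (hg i)
  choose B L hBS hd hJ hlt hJl hval using hstep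
  have hdiff : ∀ (w : Fin k → ℤ) (i : Fin N),
      ∑ b, w b * ((ppJ (v i.castSucc).1 b).val : ℤ) - ∑ b, w b * ((ppJ (v i.succ).1 b).val : ℤ) =
        w (B i) * (((ppJ (v i.castSucc).1 (B i)).val : ℤ) - (L i).val) := by
    intro w i
    rw [← Finset.sum_sub_distrib, Finset.sum_eq_single (B i)]
    · rw [hJl]; ring
    · intro b _ hb; rw [hJ i b hb]; ring
    · simp
  have htel : ∀ (w : Fin k → ℤ), ∑ i : Fin N, w (B i) *
      (((ppJ (v i.castSucc).1 (B i)).val : ℤ) - (L i).val) =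
      ∑ b, w b * ((ppJ (v 0).1 b).val : ℤ) - ∑ b, w b * ((ppJ (v (Fin.last N)).1 b).val : ℤ) := by
    intro w
    rw [← ppTelescope (fun l => ∑ b, w b * ((ppJ (v l).1 b).val : ℤ))]
    exact Finset.sum_congr rfl fun i _ => (hdiff w i).symm
  have hfib : ∀ w : Fin k → ℤ, ∑ i : Fin N, w (a i) = ∑ b, w b * (m b : ℤ) := by
    intro w
    rw [← Finset.sum_fiberwise Finset.univ a]
    refine Finset.sum_congr rfl fun b _ => ?_
    rw [← hm b, Finset.sum_congr rfl (g := fun _ => w b)]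
    · simp [mul_comm]
    · intro i hi; rw [(Finset.mem_filter.mp hi).2]
  have hN : (N : ℤ) = ∑ b, (m b : ℤ) := by
    have := hfib (fun _ => 1)
    simpa using this
  have hdrop : ∀ i, (1 : ℤ) ≤ ((ppJ (v i.castSucc).1 (B i)).val : ℤ) - (L i).val := by
    intro i
    have : (L i).val < (ppJ (v i.castSucc).1 (B i)).val := hlt i
    omega
  have hJm : ∀ l b, ((ppJ (v l).1 b).val : ℤ) ≤ m b := by
    intro l b
    have := (ppJ (v l).1 b).2
    omega
  have ht1 := htel (fun _ => 1)
  simp only [one_mul] at ht1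
  have hs0 : ∑ b, ((ppJ (v 0).1 b).val : ℤ) ≤ ∑ b, (m b : ℤ) :=
    Finset.sum_le_sum fun b _ => hJm 0 b
  have hsl : 0 ≤ ∑ b, ((ppJ (v (Fin.last N)).1 b).val : ℤ) := Finset.sum_nonneg fun b _ => by positivity
  have hsd : ∑ _i : Fin N, (1 : ℤ) ≤ ∑ i : Fin N, (((ppJ (v i.castSucc).1 (B i)).val : ℤ) - (L i).val) :=
    Finset.sum_le_sum fun i _ => hdrop i
  have hc : ∑ _i : Fin N, (1 : ℤ) = N := by simp
  have e0 : ∀ b, ((ppJ (v 0).1 b).val : ℤ) = m b := by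
    intro b
    have : ∑ b, ((ppJ (v 0).1 b).val : ℤ) = ∑ b, (m b : ℤ) := by omega
    exact (Finset.sum_eq_sum_iff_of_le (fun b _ => hJm 0 b)).mp this b (Finset.mem_univ b)
  have el : ∀ b, ((ppJ (v (Fin.last N)).1 b).val : ℤ) = 0 := by
    intro b
    have : ∑ b, ((ppJ (v (Fin.last N)).1 b).val : ℤ) = 0 := by omega
    exact (Finset.sum_eq_zero_iff_of_nonneg (fun b _ => by positivity)).mp this b (Finset.mem_univ b)
  have ed : ∀ i, ((ppJ (v i.castSucc).1 (B i)).val : ℤ) - (L i).val = 1 := by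
    intro i
    have : ∑ _i : Fin N, (1 : ℤ) = ∑ i : Fin N, (((ppJ (v i.castSucc).1 (B i)).val : ℤ) - (L i).val) := by
      omega
    exact ((Finset.sum_eq_sum_iff_of_le (fun i _ => hdrop i)).mp this i (Finset.mem_univ i)).symm
  have hBa : ∀ i, B i = a i := by
    have ht2 := htel (fun b => (b.val : ℤ))
    simp only [ed, e0, el, mul_one, mul_zero, Finset.sum_const_zero, sub_zero] at ht2
    have := hfib (fun b => (b.val : ℤ))
    rw [← this] at ht2
    intro i
    have := (Finset.sum_eq_sum_iff_of_le (fun i _ => by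
      have : (B i).val ≤ (a i).val := ha i _ (hBS i)
      exact_mod_cast this)).mp ht2 i (Finset.mem_univ i)
    exact Fin.ext (by exact_mod_cast this)
  induction l using Fin.induction with
  | zero =>
    funext c
    obtain ⟨b, i⟩ := c
    have hFi := ppJ_spec hM0 (v 0).2 b
    have hJe : (ppJ (v 0).1 b).val = m b := by exact_mod_cast e0 b
    have hz : ∀ i' : Fin (m b + 1), i'.val ≠ m b → (v 0).1 ⟨b, i'⟩ = 0 := by
      intro i' hi'
      apply hFi.2
      rw [Fin.lt_def, hJe]
      have := i'.2
      omega
    unfold ppU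
    simp only [Fin.val_zero, ppNb_zero]
    split_ifs with h1 h2
    · have hi : i = ppJ (v 0).1 b := Fin.ext (by omega)
      have hsg := hF b
      unfold ppSg at hsg
      rw [← hi] at hsg
      obtain ⟨z, hz'⟩ := (v 0).2.2 b
      have hzm : z.val = m b := by
        by_contra hzz
        have := hz z hzz
        omega
      have hzi : z = i := Fin.ext (by omega)
      subst hzi
      by_cases hp : 0 < (v 0).1 ⟨b, z⟩
      · omega
      · rw [if_neg hp] at hsg
        exact absurd hsg (by decide)
    · have := i.2; omega
    · exact hz i h1
  | succ i ih =>
    obtain ⟨q, hq1, hq2, hq3, hq4⟩ := ppU_succ m (M := M) a hm i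
    have hUf := ppU_first m hM0 a hm i.val (a i)
    have ih' : (v i.castSucc).1 = ppU m M a i.val := ih
    have hL : (⟨B i, L i⟩ : PpI m) = ⟨a i, q⟩ := by
      have h2 := ed i
      rw [ih'] at h2
      have h3 : (ppJ (ppU m M a i.val) (B i)).val = (ppJ (ppU m M a i.val) (a i)).val := by
        rw [hBa i]
      refine ppSigExt (hBa i) _ _ ?_
      have := hUf.1
      omega
    funext d
    have hsucc : (i.succ).val = i.val + 1 := rfl
    rw [hsucc]
    by_cases hdq : d = ⟨a i, q⟩
    · subst hdq
      rw [hq3, ← hL, hval, ih', hBa i, hUf.2]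
      push_cast
      ring
    · rw [hq4 d hdq, hd i d (by rw [hL]; exact hdq), ih']

theorem ppU_good {k N : ℕ} {m : Fin k → ℕ} {M : ℤ} (hM : M % 2 = 0) (hM0 : 0 < M)
    (S : Fin N → Finset (Fin k)) (a : Fin N → Fin k) (haS : ∀ i, a i ∈ S i)
    (hm : ∀ b, (Finset.univ.filter (fun i : Fin N => a i = b)).card = m b)
    (v : Fin (N + 1) → PpV m M) (hv : ∀ l, (v l).1 = ppU m M a l.val) :
    PpCh v ∧ (∀ b, ppSg (v 0).1 b = 1) ∧
    ∀ i : Fin N, ppStd (S i) (v i.castSucc) + ppStd (S i) (v i.succ) = 1 := by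
  refine ⟨⟨?_, fun i => ?_, ?_⟩, fun b => ?_, fun i => ?_⟩
  · intro c
    rw [hv]
    unfold ppU
    have := c.2.2
    simp only [Fin.val_zero, ppNb_zero]
    split_ifs
    · exact hM
    · omega
    · rfl
  · rw [hv, hv]
    obtain ⟨q, hq1, hq2, hq3, hq4⟩ := ppU_succ m (M := M) a hm i
    refine ⟨⟨a i, q⟩, ?_, ?_, hq4⟩
    · have : (i.castSucc).val = i.val := rfl
      rw [this, hq2]; rfl
    · have h1 : (i.castSucc).val = i.val := rfl
      have h2 : (i.succ).val = i.val + 1 := rfl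
      rw [h1, h2, hq2, hq3]
      rcases neg_one_pow_eq_or ℤ (ppNb a i.val (a i) + 1) with h | h <;> rw [h] <;> simp
  · rw [hv]
    have : ∀ b i, ppU m M a N ⟨b, i⟩ % 2 = 0 → i.val = m b := by
      intro b i h
      by_contra hne
      unfold ppU at h
      simp only at h
      rw [if_neg hne, if_pos (by rw [ppNb_last, hm]; omega)] at h
      rcases neg_one_pow_eq_or ℤ (m b - i.val) with h' | h' <;> rw [h'] at h <;> simp at h
    intro b i i' h h'
    exact Fin.ext ((this b i h).trans (this b i' h').symm)
  · rw [hv, (ppU_first m hM0 a hm _ b).2]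
    simp [ppNb_zero]
  · have h1 : (i.castSucc).val = i.val := rfl
    have h2 : (i.succ).val = i.val + 1 := rfl
    unfold ppStd
    rw [hv, hv, h1, h2, ← Finset.sum_add_distrib, Finset.sum_eq_single (a i)]
    · rw [(ppU_first m hM0 a hm _ _).2, (ppU_first m hM0 a hm _ _).2, ppNb_succ, if_pos rfl,
        pow_succ, ppE_mul, ← add_assoc, ppZ2, zero_add]
      rfl
    · intro b _ hb
      rw [(ppU_first m hM0 a hm _ _).2, (ppU_first m hM0 a hm _ _).2, ppNb_succ, if_neg hb.symm,
        add_zero, ppZ2]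
    · intro h; exact absurd (haS i) h

theorem ppDiscrete {k N : ℕ} {m : Fin k → ℕ} {M : ℤ} (hM : M % 2 = 0) (hM0 : 0 < M)
    (S : Fin (N + 1) → Finset (Fin k)) (a : Fin (N + 1) → Fin k) (haS : ∀ i, a i ∈ S i)
    (ha : ∀ i, ∀ b ∈ S i, b ≤ a i)
    (hm : ∀ b, (Finset.univ.filter (fun i : Fin (N + 1) => a i = b)).card = m b)
    (s : Fin (N + 1) → PpV m M → ZMod 2)
    (hs : ∀ i (g : Fin k → ℤˣ) v, s i (g • v) = s i v + ∑ b ∈ S i, ppE (g b)) :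
    ∃ v : Fin (N + 2) → PpV m M, PpCh v ∧ ∀ i : Fin (N + 1), s i (v i.castSucc) ≠ s i (v i.succ) := by
  classical
  have h := ppInvariance (G := Fin k → ℤˣ) (V := PpV m M) (N := N)
    (fun v => ∀ b, ppSg v.1 b = 1) (ppFund hM0) PpCh ppCh_smul (ppThin hM hM0)
    (fun i g => ∑ b ∈ S i, ppE (g b)) s (fun i => ppStd (S i)) hs
    (fun i => ppStd_smul hM0 (S i))
  let u : Fin (N + 2) → PpV m M := fun l => ⟨ppU m M a l.val, ppU_OK m hM0 a l.val⟩
  have hu := ppU_good hM hM0 S a haS hm u (fun _ => rfl)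
  have h1 : ∑ v : Fin (N + 2) → PpV m M, (if (∀ b, ppSg (v 0).1 b = 1) then
      (if PpCh v then ppCup (fun i => ppStd (S i)) v else 0) else 0) = 1 := by
    rw [Finset.sum_eq_single u]
    · rw [if_pos hu.2.1, if_pos hu.1]
      unfold ppCup
      exact Finset.prod_eq_one fun i _ => hu.2.2 i
    · intro v _ hv
      split_ifs with hF hC
      · by_contra hne
        apply hv
        funext l
        apply Subtype.ext
        refine ppGood_unique hM0 S a ha hm v hC hF ?_ l
        intro i hi
        exact hne (Finset.prod_eq_zero (Finset.mem_univ i) hi)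
      · rfl
      · rfl
    · simp
  by_contra hcon
  push Not at hcon
  have h0 : ∑ v : Fin (N + 2) → PpV m M, (if (∀ b, ppSg (v 0).1 b = 1) then
      (if PpCh v then ppCup s v else 0) else 0) = 0 := by
    apply Finset.sum_eq_zero
    intro v _
    split_ifs with hF hC
    · obtain ⟨i, hi⟩ := hcon v hC
      apply Finset.prod_eq_zero (Finset.mem_univ i)
      rw [hi]; exact ppZ2 _
    · rfl
    · rfl
  have h2 : (0 : ZMod 2) = 1 := by
    rw [← h0, ← h1]
    convert h
  exact absurd h2 (by decide)

theorem ppCov_abs {k : ℕ} {m : Fin k → ℕ} {u x : PpI m → ℤ} (h : PpCov u x) (c : PpI m) :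
    |x c - u c| ≤ 1 := by
  obtain ⟨d, _, h1, h2⟩ := h
  by_cases hc : c = d
  · subst hc
    rcases h1 with h1 | h1 <;> rw [h1] <;> simp
  · rw [h2 c hc]; simp

theorem ppCh_abs {k : ℕ} {m : Fin k → ℕ} {M : ℤ} {N : ℕ} {v : Fin (N + 1) → PpV m M}
    (h : PpCh v) (l : Fin (N + 1)) (c : PpI m) : |(v l).1 c - (v 0).1 c| ≤ l.val := by
  induction l using Fin.induction with
  | zero => simp
  | succ i ih =>
    have h1 := ppCov_abs (h.2.1 i) c
    have : (v i.succ).1 c - (v 0).1 c =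
      ((v i.succ).1 c - (v i.castSucc).1 c) + ((v i.castSucc).1 c - (v 0).1 c) := by ring
    rw [this]
    refine (abs_add_le _ _).trans ?_
    have h3 : (i.castSucc).val = i.val := rfl
    have h4 : (i.succ).val = i.val + 1 := rfl
    rw [h3] at ih
    rw [h4]
    push_cast
    linarith

theorem ppE_prod {k : ℕ} (S : Finset (Fin k)) (g : Fin k → ℤˣ) :
    ∑ b ∈ S, ppE (g b) = ppE (∏ b ∈ S, g b) := by
  classical
  induction S using Finset.induction_on with
  | empty => simp [ppE]
  | insert b S hb ih => rw [Finset.sum_insert hb, Finset.prod_insert hb, ppE_mul, ih]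

/-- product of cube boundaries -/
def ppK {k : ℕ} (m : Fin k → ℕ) : Set (PpI m → ℝ) :=
  {x | (∀ c, |x c| ≤ 1) ∧ ∀ b, ∃ i, |x ⟨b, i⟩| = 1}

theorem ppK_compact {k : ℕ} (m : Fin k → ℕ) : IsCompact (ppK m) := by
  have h : ppK m = Set.Icc (-1) 1 ∩ ⋂ b, ⋃ i, {x : PpI m → ℝ | |x ⟨b, i⟩| = 1} := by
    ext x
    simp only [ppK, Set.mem_ofPred_eq, Set.mem_inter_iff, Set.mem_iInter, Set.mem_iUnion,
      Set.mem_Icc, Pi.le_def, ← forall_and, abs_le]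
    rfl
  rw [h]
  refine IsCompact.inter_right isCompact_Icc ?_
  refine isClosed_iInter fun b => isClosed_iUnion_of_finite fun i => ?_
  exact isClosed_eq (by fun_prop) continuous_const

theorem ppK_ne {k : ℕ} (m : Fin k → ℕ) : (ppK m).Nonempty :=
  ⟨fun _ => 1, fun _ => by simp, fun _ => ⟨0, by simp⟩⟩

theorem ppBU_Fin {k N : ℕ} {m : Fin k → ℕ}
    (S : Fin (N + 1) → Finset (Fin k)) (a : Fin (N + 1) → Fin k) (haS : ∀ i, a i ∈ S i)
    (ha : ∀ i, ∀ b ∈ S i, b ≤ a i)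
    (hm : ∀ b, (Finset.univ.filter (fun i : Fin (N + 1) => a i = b)).card = m b)
    (f : (PpI m → ℝ) → Fin (N + 1) → ℝ) (hf : Continuous f)
    (hfe : ∀ (g : Fin k → ℤˣ) x i, f (fun c => ((g c.1 : ℤ) : ℝ) * x c) i =
      (((∏ b ∈ S i, g b : ℤˣ) : ℤ) : ℝ) * f x i) :
    ∃ x ∈ ppK m, ∀ i, f x i = 0 := by
  classical
  obtain ⟨x0, hx0, hmin⟩ := (ppK_compact m).exists_isMinOn (ppK_ne m) (hf.norm.continuousOn)
  by_cases hz : f x0 = 0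
  · exact ⟨x0, hx0, fun i => by rw [hz]; rfl⟩
  exfalso
  have hε : 0 < ‖f x0‖ := norm_pos_iff.mpr hz
  have huc := (ppK_compact m).uniformContinuousOn_of_continuous hf.continuousOn
  rw [Metric.uniformContinuousOn_iff] at huc
  obtain ⟨δ, hδ, huc⟩ := huc _ hε
  obtain ⟨M0, hM0⟩ := exists_nat_gt ((N + 1 : ℝ) / δ)
  have hM0' : (0 : ℝ) < M0 := lt_trans (by positivity) hM0
  set M : ℤ := 2 * M0 with hMdef
  have hM : M % 2 = 0 := by omega
  have hMp : 0 < M := by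
    have : 0 < M0 := by exact_mod_cast hM0'
    omega
  have hMR : (0 : ℝ) < (M : ℝ) := by exact_mod_cast hMp
  have hMδ : (N + 1 : ℝ) / M < δ := by
    rw [div_lt_iff₀ hδ] at hM0
    rw [div_lt_iff₀ hMR, hMdef]
    push_cast
    nlinarith
  let y : PpV m M → (PpI m → ℝ) := fun v c => (v.1 c : ℝ) / M
  have hyK : ∀ v, y v ∈ ppK m := by
    intro v
    constructor
    · intro c
      have h1 : (-(M:ℝ)) ≤ v.1 c := by exact_mod_cast (v.2.1 c).1
      have h2 : (v.1 c : ℝ) ≤ M := by exact_mod_cast (v.2.1 c).2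
      simp only [y]
      rw [abs_div, abs_of_pos hMR, div_le_one hMR, abs_le]
      exact ⟨h1, h2⟩
    · intro b
      obtain ⟨i, hi⟩ := v.2.2 b
      refine ⟨i, ?_⟩
      simp only [y]
      rcases hi with h | h <;> rw [h] <;> push_cast <;> rw [abs_div] <;> simp [abs_of_pos hMR, hMR.ne']
  have hyg : ∀ (g : Fin k → ℤˣ) v i, f (y (g • v)) i =
      (((∏ b ∈ S i, g b : ℤˣ) : ℤ) : ℝ) * f (y v) i := by
    intro g v i
    rw [← hfe]
    congr 1
    congr 1
    funext c
    simp only [y, ppSmul_val, ppAct]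
    push_cast
    ring
  let s : Fin (N + 1) → PpV m M → ZMod 2 := fun i v =>
    if 0 < f (y v) i then 0 else if f (y v) i < 0 then 1 else ppStd (S i) v
  have hs : ∀ i (g : Fin k → ℤˣ) v, s i (g • v) = s i v + ∑ b ∈ S i, ppE (g b) := by
    intro i g v
    have hst := ppStd_smul hMp (S i) g v
    have hyg' := hyg g v i
    rw [ppE_prod] at hst ⊢
    simp only [s]
    rcases Int.units_eq_one_or (∏ b ∈ S i, g b) with h | h
    · rw [h] at hyg' hst ⊢
      rw [hyg', hst]
      simp [ppE]
    · rw [h] at hyg' hst ⊢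
      rw [hyg', hst]
      have e1 : ppE (-1) = 1 := by decide
      rw [e1]
      generalize f (y v) i = t
      rcases lt_trichotomy t 0 with h0 | h0 | h0
      · simp [h0, h0.not_gt]
        decide
      · simp [h0]
      · simp [h0, h0.not_gt]
  obtain ⟨v, hch, hv⟩ := ppDiscrete hM hMp S a haS ha hm s hs
  have hd : ∀ l, dist (f (y (v l))) (f (y (v 0))) < ‖f x0‖ := by
    intro l
    apply huc _ (hyK _) _ (hyK _)
    refine lt_of_le_of_lt ?_ hMδ
    rw [dist_pi_le_iff (by positivity)]
    intro c
    rw [Real.dist_eq]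
    simp only [y]
    rw [← sub_div, abs_div, abs_of_pos hMR]
    gcongr
    have h1 := ppCh_abs hch l c
    have h2 : (l.val : ℤ) ≤ N + 1 := by have := l.2; omega
    have h3 := h1.trans h2
    exact_mod_cast h3
  have hlt : ‖f (y (v 0))‖ < ‖f x0‖ := by
    rw [pi_norm_lt_iff hε]
    intro i
    by_contra hcon
    push Not at hcon
    have h1 := lt_of_le_of_lt (dist_le_pi_dist _ _ i) (hd i.castSucc)
    have h2 := lt_of_le_of_lt (dist_le_pi_dist _ _ i) (hd i.succ)
    rw [Real.dist_eq, abs_lt] at h1 h2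
    rw [Real.norm_eq_abs] at hcon
    apply hv i
    simp only [s]
    rcases le_abs.mp hcon with h | h
    · rw [if_pos (by linarith), if_pos (by linarith)]
    · have k1 : f (y (v i.castSucc)) i < 0 := by linarith
      have k2 : f (y (v i.succ)) i < 0 := by linarith
      rw [if_neg k1.not_gt, if_neg k2.not_gt, if_pos k1, if_pos k2]
  exact absurd (hmin (hyK (v 0))) (not_le.mpr hlt)

theorem ppBU {k : ℕ} {m : Fin k → ℕ} {ι : Type*} [Fintype ι]
    (S : ι → Finset (Fin k)) (a : ι → Fin k) (haS : ∀ i, a i ∈ S i)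
    (ha : ∀ i, ∀ b ∈ S i, b ≤ a i)
    (hm : ∀ b, (Finset.univ.filter (fun i : ι => a i = b)).card = m b)
    (f : (PpI m → ℝ) → ι → ℝ) (hf : Continuous f)
    (hfe : ∀ (g : Fin k → ℤˣ) x i, f (fun c => ((g c.1 : ℤ) : ℝ) * x c) i =
      (((∏ b ∈ S i, g b : ℤˣ) : ℤ) : ℝ) * f x i) :
    ∃ x ∈ ppK m, ∀ i, f x i = 0 := by
  classical
  rcases isEmpty_or_nonempty ι with he | he
  · obtain ⟨x, hx⟩ := ppK_ne m
    exact ⟨x, hx, fun i => (he.false i).elim⟩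
  obtain ⟨N, hN⟩ : ∃ N, Fintype.card ι = N + 1 := ⟨Fintype.card ι - 1, by
    have := Fintype.card_pos (α := ι); omega⟩
  let e : Fin (N + 1) ≃ ι := (Fintype.equivFinOfCardEq hN).symm
  obtain ⟨x, hx, h⟩ := ppBU_Fin (m := m) (fun i => S (e i)) (fun i => a (e i)) (fun i => haS _)
    (fun i => ha _) (fun b => by
      rw [← hm b]
      refine Finset.card_bij (fun i _ => e i) ?_ ?_ ?_
      · simp
      · simp
      · intro i hi
        refine ⟨e.symm i, ?_, ?_⟩
        · simpa using hi
        · simp) (fun x i => f x (e i))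
    (continuous_pi fun i => (continuous_apply (e i)).comp hf) (fun g x i => hfe g x (e i))
  refine ⟨x, hx, fun i => ?_⟩
  have := h (e.symm i)
  simpa using this

theorem ppUnitSqR (u : ℤˣ) : ((u : ℤ) : ℝ) * ((u : ℤ) : ℝ) = 1 := by
  rcases Int.units_eq_one_or u with h | h <;> simp [h]

theorem ppChar {k : ℕ} (h : (Fin k → ℤˣ) → ℝ)
    (H : ∀ S : Finset (Fin k), S.Nonempty →
      ∑ τ : Fin k → ℤˣ, (((∏ b ∈ S, τ b : ℤˣ) : ℤ) : ℝ) * h τ = 0) (τ : Fin k → ℤˣ) :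
    2 ^ k * h τ = ∑ σ, h σ := by
  classical
  have h1 : ∑ σ : Fin k → ℤˣ, (∏ b, (1 + ((τ b : ℤ) : ℝ) * ((σ b : ℤ) : ℝ))) * h σ = 2 ^ k * h τ := by
    rw [Finset.sum_eq_single τ]
    · congr 1
      rw [Finset.prod_congr rfl (g := fun _ => (2 : ℝ))]
      · simp
      · intro b _; rw [ppUnitSqR]; norm_num
    · intro σ _ hσ
      obtain ⟨b, hb⟩ := Function.ne_iff.mp hσ
      rw [Finset.prod_eq_zero (Finset.mem_univ b), zero_mul]
      rcases Int.units_eq_one_or (σ b) with e | e <;> rcases Int.units_eq_one_or (τ b) with e' | e' <;>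
        simp [e, e'] at hb ⊢
    · simp
  rw [← h1]
  have h2 : ∀ σ : Fin k → ℤˣ, (∏ b, (1 + ((τ b : ℤ) : ℝ) * ((σ b : ℤ) : ℝ))) * h σ =
      ∑ S : Finset (Fin k), (((∏ b ∈ S, τ b : ℤˣ) : ℤ) : ℝ) * ((((∏ b ∈ S, σ b : ℤˣ) : ℤ) : ℝ) * h σ) := by
    intro σ
    rw [Finset.prod_one_add, Finset.sum_mul, Finset.powerset_univ]
    refine Finset.sum_congr rfl fun S _ => ?_
    rw [Finset.prod_mul_distrib]
    push_cast
    ring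
  simp_rw [h2]
  rw [Finset.sum_comm, Finset.sum_eq_single ∅]
  · simp
  · intro S _ hS
    rw [← Finset.mul_sum, H S (Finset.nonempty_iff_ne_empty.mpr hS), mul_zero]
  · simp

/-- the number of equations attached to a level -/
def ppM (k j : ℕ) (b : Fin k) : ℕ :=
  (Finset.univ.filter (fun p : {S : Finset (Fin k) // S.Nonempty} × Fin j =>
    p.1.1.max' p.1.2 = b)).card

theorem ppM_le (k j : ℕ) (b : Fin k) : ppM k j b ≤ j * 2 ^ b.val := by
  classical
  have h : ((Finset.Iio b).powerset ×ˢ (Finset.univ : Finset (Fin j))).card = j * 2 ^ b.val := by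
    rw [Finset.card_product, Finset.card_powerset]
    simp [mul_comm]
  rw [← h]
  refine Finset.card_le_card_of_injOn (fun p => (p.1.1.erase b, p.2)) ?_ ?_
  · intro p hp
    have hp' := (Finset.mem_filter.mp hp).2
    simp only [Finset.coe_product, Set.mem_prod, Finset.mem_coe, Finset.mem_powerset, Finset.mem_univ, and_true]
    intro c hc
    rw [Finset.mem_erase] at hc
    rw [Finset.mem_Iio]
    have := p.1.1.le_max' c hc.2
    rw [hp'] at this
    exact lt_of_le_of_ne this hc.1
  · intro p hp q hq hpq
    have hp' := (Finset.mem_filter.mp hp).2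
    have hq' := (Finset.mem_filter.mp hq).2
    simp only [Prod.mk.injEq] at hpq
    refine Prod.ext (Subtype.ext ?_) hpq.2
    have h1 : b ∈ p.1.1 := hp' ▸ p.1.1.max'_mem p.1.2
    have h2 : b ∈ q.1.1 := hq' ▸ q.1.1.max'_mem q.1.2
    rw [← Finset.insert_erase h1, hpq.1, Finset.insert_erase h2]

theorem ppEqual {k j : ℕ} (h : Fin j → (Fin k → ℤˣ) → (PpI (ppM k j) → ℝ) → ℝ)
    (hc : ∀ i τ, Continuous (h i τ))
    (he : ∀ i τ (g : Fin k → ℤˣ) x, h i τ (fun c => ((g c.1 : ℤ) : ℝ) * x c) = h i (g * τ) x) :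
    ∃ x ∈ ppK (ppM k j), ∀ i τ, 2 ^ k * h i τ x = ∑ σ, h i σ x := by
  classical
  obtain ⟨x, hx, H⟩ := ppBU (m := ppM k j) (ι := {S : Finset (Fin k) // S.Nonempty} × Fin j)
    (fun p => p.1.1) (fun p => p.1.1.max' p.1.2) (fun p => p.1.1.max'_mem _)
    (fun p b hb => p.1.1.le_max' b hb) (fun b => by unfold ppM; congr)
    (fun x p => ∑ τ : Fin k → ℤˣ, (((∏ b ∈ p.1.1, τ b : ℤˣ) : ℤ) : ℝ) * h p.2 τ x)
    (continuous_pi fun p => continuous_finsetSum _ fun τ _ => continuous_const.mul (hc _ _))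
    (by
      intro g x p
      beta_reduce
      rw [Finset.mul_sum, ← Equiv.sum_comp (Equiv.mulLeft g) (fun τ => (((∏ b ∈ p.1.1, g b : ℤˣ) : ℤ) : ℝ) *
        ((((∏ b ∈ p.1.1, τ b : ℤˣ) : ℤ) : ℝ) * h p.2 τ x))]
      refine Finset.sum_congr rfl fun τ _ => ?_
      rw [he, ← mul_assoc]
      congr 1
      simp only [Equiv.coe_mulLeft, Pi.mul_apply]
      rw [Finset.prod_mul_distrib]
      push_cast
      have := ppUnitSqR (∏ b ∈ p.1.1, g b)
      push_cast at this
      rw [← mul_assoc, this, one_mul])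
  exact ⟨x, hx, fun i τ => ppChar (fun τ => h i τ x) (fun S hS => H (⟨S, hS⟩, i)) τ⟩

/-- truncation -/
noncomputable def ppPhi (t : ℝ) : ℝ := max 0 (min 1 t)

theorem ppPhi_nonneg (t : ℝ) : 0 ≤ ppPhi t := le_max_left _ _
theorem ppPhi_le (t : ℝ) : ppPhi t ≤ 1 := max_le zero_le_one (min_le_left _ _)
theorem ppPhi_one {t : ℝ} (h : 1 ≤ t) : ppPhi t = 1 := by simp [ppPhi, h]
theorem ppPhi_zero {t : ℝ} (h : t ≤ 0) : ppPhi t = 0 := by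
  unfold ppPhi
  rw [max_eq_left]
  exact (min_le_right _ _).trans h
theorem ppPhi_cont : Continuous ppPhi := by unfold ppPhi; fun_prop

/-- sign cell -/
def PpCell {k : ℕ} {X Y : Type*} (P : Fin k → X → Y → ℝ) (τ : Fin k → ℤˣ) (x : X) (y : Y) : Prop :=
  ∀ b, 0 < ((τ b : ℤ) : ℝ) * P b x y

open Classical in
theorem ppAbstract {k j : ℕ} {Y : Type*} (P : Fin k → (PpI (ppM k j) → ℝ) → Y → ℝ)
    (hPc : ∀ b y, Continuous fun x => P b x y)
    (hPe : ∀ b y (g : Fin k → ℤˣ) x, P b (fun c => ((g c.1 : ℤ) : ℝ) * x c) y =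
      ((g b : ℤ) : ℝ) * P b x y)
    (Γ : Fin j → Finset (Set Y)) (B : Fin j → ℝ)
    (hB : ∀ x ∈ ppK (ppM k j), ∀ i, ∀ γ ∈ Γ i,
      ((Finset.univ.filter (fun τ : Fin k → ℤˣ => ∃ y ∈ γ, PpCell P τ x y)).card : ℝ) ≤ B i) :
    ∃ x ∈ ppK (ppM k j), ∀ i τ,
      2 ^ k * (((Γ i).filter (fun γ => ∃ y ∈ γ, PpCell P τ x y)).card : ℝ) ≤ B i * (Γ i).card := by
  by_contra hcon
  push Not at hcon
  have hw : ∀ x : PpI (ppM k j) → ℝ, ∃ (i : Fin j) (τ : Fin k → ℤˣ) (T : Finset (Set Y)) (y : Set Y → Y) (δ : ℝ),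
      x ∈ ppK (ppM k j) → (0 < δ ∧ T ⊆ Γ i ∧ B i * (Γ i).card < 2 ^ k * (T.card : ℝ) ∧
        (∀ γ ∈ T, y γ ∈ γ) ∧ ∀ γ ∈ T, ∀ b, δ < ((τ b : ℤ) : ℝ) * P b x (y γ)) := by
    intro x
    by_cases hx : x ∈ ppK (ppM k j)
    · obtain ⟨i, τ, h⟩ := hcon x hx
      have hy : ∀ γ : Set Y, ∃ y : Y, γ ∈ (Γ i).filter (fun γ => ∃ y ∈ γ, PpCell P τ x y) →
          (y ∈ γ ∧ PpCell P τ x y) := by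
        intro γ
        by_cases hγ : γ ∈ (Γ i).filter (fun γ => ∃ y ∈ γ, PpCell P τ x y)
        · obtain ⟨y, hy⟩ := (Finset.mem_filter.mp hγ).2
          exact ⟨y, fun _ => hy⟩
        · have : Nonempty Y := by
            by_contra hne
            have h0 : (Γ i).filter (fun γ => ∃ y ∈ γ, PpCell P τ x y) = ∅ := by
              apply Finset.filter_eq_empty_iff.mpr
              rintro γ _ ⟨y, _⟩
              exact hne ⟨y⟩
            rw [h0] at h
            simp only [Finset.card_empty, Nat.cast_zero, mul_zero] at h
            have hΓ : (Γ i).Nonempty := by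
              rw [Finset.nonempty_iff_ne_empty]
              intro h1; rw [h1] at h; simp at h
            obtain ⟨γ', hγ'⟩ := hΓ
            have hB0 : 0 ≤ B i := le_trans (Nat.cast_nonneg _) (hB x hx i γ' hγ')
            have : 0 ≤ B i * (Γ i).card := by positivity
            linarith
          exact ⟨this.some, fun h => absurd h hγ⟩
      choose y hy using hy
      set T := (Γ i).filter (fun γ => ∃ y ∈ γ, PpCell P τ x y) with hT
      have hδ : ∃ δ : ℝ, 0 < δ ∧ ∀ p ∈ T ×ˢ (Finset.univ : Finset (Fin k)),
          δ < ((τ p.2 : ℤ) : ℝ) * P p.2 x (y p.1) := by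
        generalize hU : T ×ˢ (Finset.univ : Finset (Fin k)) = U
        have hpos : ∀ p ∈ U, 0 < ((τ p.2 : ℤ) : ℝ) * P p.2 x (y p.1) := by
          intro p hp
          rw [← hU, Finset.mem_product] at hp
          exact (hy p.1 hp.1).2 p.2
        clear hU
        induction U using Finset.induction_on with
        | empty => exact ⟨1, one_pos, by simp⟩
        | insert p U _ ih =>
          obtain ⟨δ, h1, h2⟩ := ih fun q hq => hpos q (Finset.mem_insert_of_mem hq)
          have h3 := hpos p (Finset.mem_insert_self _ _)
          refine ⟨min δ (((τ p.2 : ℤ) : ℝ) * P p.2 x (y p.1) / 2), lt_min h1 (by linarith), ?_⟩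
          intro q hq
          rcases Finset.mem_insert.mp hq with rfl | hq
          · exact (min_le_right _ _).trans_lt (by linarith)
          · exact (min_le_left _ _).trans_lt (h2 q hq)
      obtain ⟨δ, hδ0, hδ⟩ := hδ
      refine ⟨i, τ, T, y, δ, fun _ => ⟨hδ0, Finset.filter_subset _ _, h, fun γ hγ => (hy γ hγ).1,
        fun γ hγ b => hδ (γ, b) (Finset.mem_product.mpr ⟨hγ, Finset.mem_univ _⟩)⟩⟩
    · obtain ⟨z, hz⟩ := ppK_ne (ppM k j)
      obtain ⟨i, τ, h⟩ := hcon z hz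
      by_cases hY : Nonempty Y
      · exact ⟨i, τ, ∅, fun _ => hY.some, 0, fun h => absurd h hx⟩
      · exfalso
        have h0 : (Γ i).filter (fun γ => ∃ y ∈ γ, PpCell P τ z y) = ∅ := by
          apply Finset.filter_eq_empty_iff.mpr
          rintro γ _ ⟨y, _⟩
          exact hY ⟨y⟩
        rw [h0] at h
        simp only [Finset.card_empty, Nat.cast_zero, mul_zero] at h
        have hΓ : (Γ i).Nonempty := by
          rw [Finset.nonempty_iff_ne_empty]
          intro h1; rw [h1] at h; simp at h
        obtain ⟨γ', hγ'⟩ := hΓ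
        have hB0 : 0 ≤ B i := le_trans (Nat.cast_nonneg _) (hB z hz i γ' hγ')
        have : 0 ≤ B i * (Γ i).card := by positivity
        linarith
  choose wi wτ wT wy wδ hw using hw
  let U : (PpI (ppM k j) → ℝ) → Set (PpI (ppM k j) → ℝ) := fun z =>
    ⋂ γ ∈ wT z, ⋂ b, {x | wδ z < ((wτ z b : ℤ) : ℝ) * P b x (wy z γ)}
  have hUo : ∀ z, IsOpen (U z) := by
    intro z
    refine isOpen_biInter_finset fun γ _ => isOpen_iInter_of_finite fun b => ?_
    exact isOpen_lt continuous_const (continuous_const.mul (hPc b _))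
  obtain ⟨t, htK, ht⟩ := (ppK_compact (ppM k j)).elim_nhds_subcover U (fun z hz => by
    refine (hUo z).mem_nhds ?_
    simp only [U, Set.mem_iInter]
    intro γ hγ b
    exact (hw z hz).2.2.2.2 γ hγ b)
  let A : (PpI (ppM k j) → ℝ) → Set Y → (Fin k → ℤˣ) → (PpI (ppM k j) → ℝ) → ℝ := fun z γ τ x =>
    ∏ b, ppPhi (((τ b : ℤ) : ℝ) * P b x (wy z γ) / wδ z)
  have hA0 : ∀ z γ τ x, 0 ≤ A z γ τ x := fun z γ τ x => Finset.prod_nonneg fun b _ => ppPhi_nonneg _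
  have hA1 : ∀ z γ τ x, A z γ τ x ≤ 1 := fun z γ τ x =>
    Finset.prod_le_one (fun b _ => ppPhi_nonneg _) fun b _ => ppPhi_le _
  let μ : Set Y → (Fin k → ℤˣ) → (PpI (ppM k j) → ℝ) → ℝ := fun γ τ x =>
    1 - ∏ z ∈ t.filter (fun z => γ ∈ wT z), (1 - A z γ τ x)
  have hμ0 : ∀ γ τ x, 0 ≤ μ γ τ x := by
    intro γ τ x
    have := Finset.prod_le_one (s := t.filter (fun z => γ ∈ wT z)) (f := fun z => 1 - A z γ τ x)
      (fun z _ => sub_nonneg.mpr (hA1 _ _ _ _)) (fun z _ => by linarith [hA0 z γ τ x])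
    simp only [μ]; linarith
  have hμ1 : ∀ γ τ x, μ γ τ x ≤ 1 := by
    intro γ τ x
    have := Finset.prod_nonneg (s := t.filter (fun z => γ ∈ wT z)) (f := fun z => 1 - A z γ τ x)
      (fun z _ => sub_nonneg.mpr (hA1 _ _ _ _))
    simp only [μ]; linarith
  have hμz : ∀ γ τ x, (¬ ∃ y ∈ γ, PpCell P τ x y) → μ γ τ x = 0 := by
    intro γ τ x hno
    simp only [μ]
    rw [Finset.prod_eq_one, sub_self]
    intro z hz
    obtain ⟨hz, hγ⟩ := Finset.mem_filter.mp hz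
    have hwz := hw z (htK z hz)
    have : ¬ PpCell P τ x (wy z γ) := fun h => hno ⟨_, hwz.2.2.2.1 γ hγ, h⟩
    unfold PpCell at this
    push Not at this
    obtain ⟨b, hb⟩ := this
    simp only [A]
    rw [Finset.prod_eq_zero (Finset.mem_univ b), sub_zero]
    exact ppPhi_zero (div_nonpos_of_nonpos_of_nonneg hb hwz.1.le)
  have hμo : ∀ z ∈ t, ∀ γ ∈ wT z, ∀ x ∈ U z, μ γ (wτ z) x = 1 := by
    intro z hz γ hγ x hx
    simp only [μ]
    rw [Finset.prod_eq_zero (Finset.mem_filter.mpr ⟨hz, hγ⟩), sub_zero]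
    simp only [A]
    rw [Finset.prod_eq_one, sub_self]
    intro b _
    apply ppPhi_one
    rw [one_le_div (hw z (htK z hz)).1]
    simp only [U, Set.mem_iInter] at hx
    exact (hx γ hγ b).le
  obtain ⟨x, hx, H⟩ := ppEqual (k := k) (j := j) (fun i τ x => ∑ γ ∈ Γ i, μ γ τ x)
    (by
      intro i τ
      refine continuous_finsetSum _ fun γ _ => continuous_const.sub ?_
      refine continuous_finsetProd _ fun z _ => continuous_const.sub ?_
      refine continuous_finsetProd _ fun b _ => ppPhi_cont.comp ?_
      exact (continuous_const.mul (hPc b _)).div_const _)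
    (by
      intro i τ g x
      refine Finset.sum_congr rfl fun γ _ => ?_
      simp only [μ]
      congr 1
      refine Finset.prod_congr rfl fun z _ => ?_
      congr 1
      refine Finset.prod_congr rfl fun b _ => ?_
      rw [hPe]
      congr 2
      simp only [Pi.mul_apply]
      push_cast
      ring)
  obtain ⟨z, hz, hxz⟩ := Set.mem_iUnion₂.mp (ht hx)
  have hwz := hw z (htK z hz)
  have H' := H (wi z) (wτ z)
  have hlow : ((wT z).card : ℝ) ≤ ∑ γ ∈ Γ (wi z), μ γ (wτ z) x := by
    calc ((wT z).card : ℝ) = ∑ γ ∈ wT z, (1 : ℝ) := by simp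
      _ = ∑ γ ∈ wT z, μ γ (wτ z) x := Finset.sum_congr rfl fun γ hγ => (hμo z hz γ hγ x hxz).symm
      _ ≤ _ := Finset.sum_le_sum_of_subset_of_nonneg hwz.2.1 fun γ _ _ => hμ0 _ _ _
  have hup : ∑ σ : Fin k → ℤˣ, ∑ γ ∈ Γ (wi z), μ γ σ x ≤ B (wi z) * (Γ (wi z)).card := by
    rw [Finset.sum_comm]
    calc ∑ γ ∈ Γ (wi z), ∑ σ : Fin k → ℤˣ, μ γ σ x ≤ ∑ γ ∈ Γ (wi z), B (wi z) := by
          refine Finset.sum_le_sum fun γ hγ => ?_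
          refine le_trans ?_ (hB x hx (wi z) γ hγ)
          calc ∑ σ : Fin k → ℤˣ, μ γ σ x ≤ ∑ σ : Fin k → ℤˣ, (if ∃ y ∈ γ, PpCell P σ x y then (1:ℝ) else 0) := by
                refine Finset.sum_le_sum fun σ _ => ?_
                split_ifs with h
                · exact hμ1 _ _ _
                · exact (hμz _ _ _ h).le
            _ = _ := by rw [Finset.sum_boole]
      _ = _ := by simp [mul_comm]
  have h2 : (2:ℝ) ^ k * (wT z).card ≤ 2 ^ k * ∑ γ ∈ Γ (wi z), μ γ (wτ z) x := by gcongr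
  have h3 := hwz.2.2.1
  linarith

theorem ppSign {Y : Type*} [TopologicalSpace Y] {C : Set Y} (hC : IsPreconnected C) {F : Y → ℝ}
    (hF : Continuous F) (h0 : ∀ y ∈ C, F y ≠ 0) {y y' : Y} (hy : y ∈ C) (hy' : y' ∈ C)
    (h : 0 < F y) : 0 < F y' := by
  by_contra hcon
  push Not at hcon
  obtain ⟨z, hz, hz0⟩ := hC.intermediate_value hy' hy hF.continuousOn ⟨hcon, h.le⟩
  exact h0 z hz hz0

theorem ppMon (n d N : ℕ) (h : N ≤ (n + d).choose n) :
    ∃ mon : Fin N → (Fin n →₀ ℕ), Function.Injective mon ∧ ∀ l, ((mon l).sum fun _ e => e) ≤ d := by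
  classical
  let F : Sym (Option (Fin n)) d → (Fin n →₀ ℕ) := fun s =>
    Finsupp.equivFunOnFinite.symm fun i => Multiset.count (some i) (s : Multiset (Option (Fin n)))
  have hsum : ∀ s : Sym (Option (Fin n)) d, Multiset.count none (s : Multiset (Option (Fin n))) +
      ∑ i, Multiset.count (some i) (s : Multiset (Option (Fin n))) = d := by
    intro s
    have := Multiset.sum_count_eq_card (s := (Finset.univ : Finset (Option (Fin n))))
      (m := (s : Multiset (Option (Fin n)))) (fun _ _ => Finset.mem_univ _)
    rw [Fintype.sum_option] at this
    rw [this]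
    exact s.2
  have hF : Function.Injective F := by
    intro s s' hss
    have h1 : ∀ i, Multiset.count (some i) (s : Multiset (Option (Fin n))) =
        Multiset.count (some i) (s' : Multiset (Option (Fin n))) := fun i => DFunLike.congr_fun hss i
    have h2 := hsum s
    have h3 := hsum s'
    rw [Finset.sum_congr rfl fun i _ => h1 i] at h2
    apply Subtype.ext
    apply Multiset.ext.mpr
    intro a
    cases a with
    | none => 
      change Multiset.count none (s : Multiset (Option (Fin n))) =
        Multiset.count none (s' : Multiset (Option (Fin n)))
      omega
    | some i => exact h1 i
  have hcard : N ≤ Fintype.card (Sym (Option (Fin n)) d) := by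
    rw [Sym.card_sym_eq_choose]
    simp only [Fintype.card_option, Fintype.card_fin]
    have e : n + 1 + d - 1 = n + d := by omega
    rw [e, ← Nat.choose_symm_add]
    exact h
  obtain ⟨e⟩ : Nonempty (Fin N ↪ Sym (Option (Fin n)) d) := by
    apply Function.Embedding.nonempty_of_card_le
    simpa using hcard
  refine ⟨fun l => F (e l), hF.comp e.injective, fun l => ?_⟩
  rw [Finsupp.sum_fintype _ _ (fun _ => rfl)]
  have := hsum (e l)
  change ∑ i, Multiset.count (some i) (e l : Multiset (Option (Fin n))) ≤ d
  omega

theorem ppMain (n j k D : ℕ) (d : Fin k → ℕ)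
    (hd : ∀ b : Fin k, j * 2 ^ b.val + 1 ≤ (n + d b).choose n) (hdD : ∑ b, d b ≤ D)
    (Γ : Fin j → Finset (Set (Fin n → ℝ)))
    (B : Fin j → ℝ)
    (hB : ∀ i, ∀ q : MvPolynomial (Fin n) ℝ, q ≠ 0 → q.totalDegree ≤ D → ∀ γ ∈ Γ i,
      {S : Set (Fin n → ℝ) | ∃ x ∈ γ, MvPolynomial.eval x q ≠ 0 ∧
          S = connectedComponentIn {y : Fin n → ℝ | MvPolynomial.eval y q ≠ 0} x}.Finite ∧
        ({S : Set (Fin n → ℝ) | ∃ x ∈ γ, MvPolynomial.eval x q ≠ 0 ∧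
          S = connectedComponentIn {y : Fin n → ℝ | MvPolynomial.eval y q ≠ 0} x}.ncard : ℝ) ≤ B i) :
    ∃ p : MvPolynomial (Fin n) ℝ, p ≠ 0 ∧ p.totalDegree ≤ D ∧
      ∀ (i : Fin j) (x : Fin n → ℝ), MvPolynomial.eval x p ≠ 0 →
        2 ^ k * ({γ ∈ (Γ i : Set (Set (Fin n → ℝ))) |
            (γ ∩ connectedComponentIn {y : Fin n → ℝ | MvPolynomial.eval y p ≠ 0} x).Nonempty}.ncard : ℝ) ≤
          B i * (Γ i).card := by
  classical
  have hmon := fun b : Fin k => ppMon n (d b) (ppM k j b + 1)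
    ((Nat.succ_le_succ (ppM_le k j b)).trans (hd b))
  choose mon hinj hdeg using hmon
  let p : Fin k → (PpI (ppM k j) → ℝ) → MvPolynomial (Fin n) ℝ := fun b x =>
    ∑ l, MvPolynomial.monomial (mon b l) (x ⟨b, l⟩)
  let P : Fin k → (PpI (ppM k j) → ℝ) → (Fin n → ℝ) → ℝ := fun b x y => MvPolynomial.eval y (p b x)
  have hPe' : ∀ b x y, P b x y = ∑ l, x ⟨b, l⟩ * (mon b l).prod fun i e => y i ^ e := by
    intro b x y
    simp only [P, p, map_sum, MvPolynomial.eval_monomial]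
  have hp0 : ∀ b, ∀ x ∈ ppK (ppM k j), p b x ≠ 0 := by
    intro b x hx h0
    obtain ⟨l, hl⟩ := hx.2 b
    have : MvPolynomial.coeff (mon b l) (p b x) = x ⟨b, l⟩ := by
      simp only [p, MvPolynomial.coeff_sum, MvPolynomial.coeff_monomial]
      rw [Finset.sum_eq_single l]
      · simp
      · intro l' _ hl'
        rw [if_neg fun h => hl' (hinj b h)]
      · simp
    rw [h0, MvPolynomial.coeff_zero] at this
    rw [← this] at hl
    simp at hl
  have hpd : ∀ b x, (p b x).totalDegree ≤ d b := by
    intro b x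
    refine MvPolynomial.totalDegree_finsetSum_le fun l _ => ?_
    exact (MvPolynomial.totalDegree_monomial_le _ _).trans (hdeg b l)
  let q : (PpI (ppM k j) → ℝ) → MvPolynomial (Fin n) ℝ := fun x => ∏ b, p b x
  have hq0 : ∀ x ∈ ppK (ppM k j), q x ≠ 0 := fun x hx => Finset.prod_ne_zero_iff.mpr fun b _ => hp0 b x hx
  have hqd : ∀ x, (q x).totalDegree ≤ D := fun x =>
    (MvPolynomial.totalDegree_finsetProd _ _).trans ((Finset.sum_le_sum fun b _ => hpd b x).trans hdD)
  have hqe : ∀ x y, MvPolynomial.eval y (q x) ≠ 0 ↔ ∀ b, P b x y ≠ 0 := by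
    intro x y
    simp only [q, map_prod, Finset.prod_ne_zero_iff, Finset.mem_univ, true_implies, P]
  have hcell : ∀ x (C : Set (Fin n → ℝ)), IsPreconnected C →
      C ⊆ {y : Fin n → ℝ | MvPolynomial.eval y (q x) ≠ 0} →
      ∀ τ, ∀ y ∈ C, ∀ y' ∈ C, PpCell P τ x y → PpCell P τ x y' := by
    intro x C hC hCs τ y hy y' hy' h b
    refine ppSign hC (F := fun y => ((τ b : ℤ) : ℝ) * P b x y)
      (continuous_const.mul (MvPolynomial.continuous_eval _)) ?_ hy hy' (h b)
    intro z hz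
    have h1 := (hqe x z).mp (hCs hz) b
    refine mul_ne_zero ?_ h1
    exact_mod_cast (τ b).ne_zero
  have hne : ∀ x τ y, PpCell P τ x y → MvPolynomial.eval y (q x) ≠ 0 := by
    intro x τ y h
    rw [hqe]
    intro b h0
    have := h b
    rw [h0, mul_zero] at this
    exact lt_irrefl _ this
  have huniq : ∀ x τ σ y, PpCell P τ x y → PpCell P σ x y → τ = σ := by
    intro x τ σ y h1 h2
    funext b
    have h1 := h1 b
    have h2 := h2 b
    rcases Int.units_eq_one_or (τ b) with e | e <;> rcases Int.units_eq_one_or (σ b) with e' | e' <;>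
      rw [e] at h1 ⊢ <;> rw [e'] at h2 ⊢ <;> simp at h1 h2 <;> linarith
  obtain ⟨x, hx, H⟩ := ppAbstract (k := k) (j := j) P
    (by
      intro b y
      simp only [hPe']
      fun_prop)
    (by
      intro b y g x
      rw [hPe' b (fun c => ((g c.1 : ℤ) : ℝ) * x c) y, hPe' b x y, Finset.mul_sum]
      exact Finset.sum_congr rfl fun l _ => by ring)
    Γ B (by
      intro x hx i γ hγ
      obtain ⟨hfin, hle⟩ := hB i (q x) (hq0 x hx) (hqd x) γ hγ
      refine le_trans ?_ hle
      have hy : ∀ τ : Fin k → ℤˣ, ∃ y : Fin n → ℝ, (∃ y ∈ γ, PpCell P τ x y) → (y ∈ γ ∧ PpCell P τ x y) := by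
        intro τ
        by_cases h : ∃ y ∈ γ, PpCell P τ x y
        · obtain ⟨y, hy⟩ := h
          exact ⟨y, fun _ => hy⟩
        · exact ⟨0, fun h' => absurd h' h⟩
      choose y hy using hy
      rw [Nat.cast_le, ← Set.ncard_coe_finset]
      refine Set.ncard_le_ncard_of_injOn (fun τ => connectedComponentIn
        {y : Fin n → ℝ | MvPolynomial.eval y (q x) ≠ 0} (y τ)) ?_ ?_ hfin
      · intro τ hτ
        have h := hy τ (Finset.mem_filter.mp hτ).2
        exact ⟨y τ, h.1, hne _ _ _ h.2, rfl⟩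
      · intro τ hτ σ hσ hts
        have h := hy τ (Finset.mem_filter.mp hτ).2
        have h' := hy σ (Finset.mem_filter.mp hσ).2
        have m1 : y τ ∈ connectedComponentIn {y : Fin n → ℝ | MvPolynomial.eval y (q x) ≠ 0} (y τ) :=
          mem_connectedComponentIn (hne _ _ _ h.2)
        have m2 : y σ ∈ connectedComponentIn {y : Fin n → ℝ | MvPolynomial.eval y (q x) ≠ 0} (y σ) :=
          mem_connectedComponentIn (hne _ _ _ h'.2)
        have hts' : connectedComponentIn {y : Fin n → ℝ | MvPolynomial.eval y (q x) ≠ 0} (y τ) =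
          connectedComponentIn {y : Fin n → ℝ | MvPolynomial.eval y (q x) ≠ 0} (y σ) := hts
        rw [← hts'] at m2
        have := hcell x _ isPreconnected_connectedComponentIn (connectedComponentIn_subset _ _) τ
          _ m1 _ m2 h.2
        exact huniq x τ σ _ this h'.2)
  refine ⟨q x, hq0 x hx, hqd x, fun i z hz => ?_⟩
  let τ : Fin k → ℤˣ := fun b => if 0 < P b x z then 1 else -1
  have hτ : PpCell P τ x z := by
    intro b
    have h1 := (hqe x z).mp hz b
    simp only [τ]
    split_ifs with h
    · simpa using h
    · have : P b x z < 0 := lt_of_le_of_ne (not_lt.mp h) h1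
      simpa using this
  refine le_trans ?_ (H i τ)
  have : {γ ∈ (Γ i : Set (Set (Fin n → ℝ))) |
            (γ ∩ connectedComponentIn {y : Fin n → ℝ | MvPolynomial.eval y (q x) ≠ 0} z).Nonempty}.ncard ≤
      ((Γ i).filter (fun γ => ∃ y ∈ γ, PpCell P τ x y)).card := by
    rw [← Set.ncard_coe_finset]
    refine Set.ncard_le_ncard ?_ (Finset.finite_toSet _)
    rintro γ ⟨hγ, w, hw, hwC⟩
    rw [Finset.mem_coe, Finset.mem_filter]
    refine ⟨hγ, w, hw, ?_⟩
    exact hcell x _ isPreconnected_connectedComponentIn (connectedComponentIn_subset _ _) τ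
      _ (mem_connectedComponentIn hz) _ hwC hτ
  have h2 : (({γ ∈ (Γ i : Set (Set (Fin n → ℝ))) |
            (γ ∩ connectedComponentIn {y : Fin n → ℝ | MvPolynomial.eval y (q x) ≠ 0} z).Nonempty}.ncard : ℕ) : ℝ) ≤
      (((Γ i).filter (fun γ => ∃ y ∈ γ, PpCell P τ x y)).card : ℕ) := by exact_mod_cast this
  gcongr

theorem ppChoose (n j b : ℕ) (hn : 1 ≤ n) (d : ℕ) (h : n.factorial * j * 2 ^ b ≤ d ^ n) :
    j * 2 ^ b + 1 ≤ (n + d).choose n := by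
  have h1 := Nat.pow_sub_le_descFactorial (n + d) n
  have e : n + d + 1 - n = d + 1 := by omega
  rw [e, Nat.descFactorial_eq_factorial_mul_choose] at h1
  have h2 : d ^ n < (d + 1) ^ n := Nat.pow_lt_pow_left (Nat.lt_succ_self d) (by omega)
  have h3 : n.factorial * (j * 2 ^ b) < n.factorial * (n + d).choose n := by
    rw [← mul_assoc]; omega
  exact Nat.lt_of_mul_lt_mul_left h3

/-- **The main ("colored") polynomial partitioning theorem** for several families of
varieties, with the Solymosi–Tao crossing bound replaced by the explicit hypotheses `B i`,
and with the explicit constant `C_n = 2^(n+1)·n! / (2^(1/n) − 1)^n`. -/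
theorem polynomial_partitioning_several_families (n j D : ℕ) (hn : 1 ≤ n) (hj : 1 ≤ j)
    (hD : 1 ≤ D) (Γ : Fin j → Finset (Set (Fin n → ℝ)))
    (halg : ∀ i, ∀ γ ∈ Γ i, ∃ (m : ℕ) (q : Fin m → MvPolynomial (Fin n) ℝ),
      γ = {x : Fin n → ℝ | ∀ k, MvPolynomial.eval x (q k) = 0})
    (B : Fin j → ℝ) (hB1 : ∀ i, 1 ≤ B i)
    (hB : ∀ i, ∀ q : MvPolynomial (Fin n) ℝ, q ≠ 0 → q.totalDegree ≤ D → ∀ γ ∈ Γ i,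
      {S : Set (Fin n → ℝ) | ∃ x ∈ γ, MvPolynomial.eval x q ≠ 0 ∧
          S = connectedComponentIn {y : Fin n → ℝ | MvPolynomial.eval y q ≠ 0} x}.Finite ∧
        ({S : Set (Fin n → ℝ) | ∃ x ∈ γ, MvPolynomial.eval x q ≠ 0 ∧
          S = connectedComponentIn {y : Fin n → ℝ | MvPolynomial.eval y q ≠ 0} x}.ncard : ℝ) ≤ B i) :
    ∃ p : MvPolynomial (Fin n) ℝ, p ≠ 0 ∧ p.totalDegree ≤ D ∧
      ∀ (i : Fin j) (x : Fin n → ℝ), MvPolynomial.eval x p ≠ 0 →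
        ({γ ∈ (Γ i : Set (Set (Fin n → ℝ))) |
            (γ ∩ connectedComponentIn {y : Fin n → ℝ | MvPolynomial.eval y p ≠ 0} x).Nonempty}.ncard : ℝ) ≤
          (2 ^ (n + 1) * (Nat.factorial n : ℝ) / ((2 : ℝ) ^ ((1 : ℝ) / n) - 1) ^ n) *
            j * B i * ((D : ℝ) ^ n)⁻¹ * (Γ i).card := by
  have hn0 : (n : ℝ) ≠ 0 := by
    have : n ≠ 0 := by omega
    exact_mod_cast this
  have hn' : n ≠ 0 := by omega
  set r : ℝ := (2 : ℝ) ^ ((1 : ℝ) / n) with hr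
  have hr1 : 1 < r := Real.one_lt_rpow (by norm_num) (by positivity)
  have hrn : r ^ n = 2 := by
    rw [hr, one_div]
    exact Real.rpow_inv_natCast_pow (by norm_num) hn'
  have hfj : (1 : ℝ) ≤ (n.factorial : ℝ) * j := by
    have : 1 ≤ n.factorial * j := Nat.mul_pos n.factorial_pos hj
    exact_mod_cast this
  set s : ℝ := ((n.factorial : ℝ) * j) ^ ((n : ℝ)⁻¹) with hs
  have hsn : s ^ n = (n.factorial : ℝ) * j := Real.rpow_inv_natCast_pow (by linarith) hn'
  have hs1 : 1 ≤ s := Real.one_le_rpow hfj (by positivity)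
  have hrp : 0 < r - 1 := by linarith
  have hDp : (0 : ℝ) < D := by exact_mod_cast hD
  have hex : ∃ k : ℕ, (D : ℝ) ^ n * (r - 1) ^ n < 2 ^ (k + 1) * (2 ^ n * ((n.factorial : ℝ) * j)) := by
    obtain ⟨k, hk⟩ := pow_unbounded_of_one_lt ((D : ℝ) ^ n * (r - 1) ^ n) (one_lt_two (α := ℝ))
    refine ⟨k, hk.trans_le ?_⟩
    have a1 : (1 : ℝ) ≤ 2 ^ n * ((n.factorial : ℝ) * j) :=
      one_le_mul_of_one_le_of_one_le (one_le_pow₀ one_le_two) hfj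
    calc (2 : ℝ) ^ k ≤ 2 ^ (k + 1) := pow_le_pow_right₀ one_le_two (Nat.le_succ k)
      _ = 2 ^ (k + 1) * 1 := (mul_one _).symm
      _ ≤ _ := by gcongr
  classical
  obtain ⟨k, hk, hk'⟩ : ∃ k : ℕ,
      (D : ℝ) ^ n * (r - 1) ^ n < 2 ^ (k + 1) * (2 ^ n * ((n.factorial : ℝ) * j)) ∧
      (k = 0 ∨ 2 ^ k * (2 ^ n * ((n.factorial : ℝ) * j)) ≤ (D : ℝ) ^ n * (r - 1) ^ n) := by
    refine ⟨Nat.find hex, Nat.find_spec hex, ?_⟩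
    rcases Nat.eq_zero_or_pos (Nat.find hex) with h | h
    · exact Or.inl h
    · right
      have := Nat.find_min hex (Nat.sub_lt h one_pos)
      rw [not_lt, Nat.sub_add_cancel (show 1 ≤ Nat.find hex from h)] at this
      exact this
  have hsb : ∀ b : ℕ, 1 ≤ s * r ^ b := fun b =>
    one_le_mul_of_one_le_of_one_le hs1 (one_le_pow₀ hr1.le)
  obtain ⟨p, hp0, hpD, hp⟩ := ppMain n j k D (fun b => ⌈s * r ^ b.val⌉₊)
    (by
      intro b
      apply ppChoose n j b.val hn
      have h1 : s * r ^ b.val ≤ (⌈s * r ^ b.val⌉₊ : ℝ) := Nat.le_ceil _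
      have h2 : (s * r ^ b.val) ^ n ≤ (⌈s * r ^ b.val⌉₊ : ℝ) ^ n :=
        pow_le_pow_left₀ (by linarith [hsb b.val]) h1 n
      rw [mul_pow, hsn, ← pow_mul, mul_comm b.val n, pow_mul, hrn] at h2
      exact_mod_cast h2)
    (by
      rcases hk' with h | h
      · subst h; simp
      · have h1 : (2 * (s * r ^ k)) ^ n ≤ (D * (r - 1)) ^ n := by
          rw [mul_pow, mul_pow, hsn, ← pow_mul, mul_comm k n, pow_mul, hrn, mul_pow]
          linarith
        have h2 : 2 * (s * r ^ k) ≤ D * (r - 1) :=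
          (pow_le_pow_iff_left₀ (by linarith [hsb k]) (by positivity) hn').mp h1
        have h3 : ∀ b : Fin k, (⌈s * r ^ b.val⌉₊ : ℝ) ≤ 2 * s * r ^ b.val := by
          intro b
          have := Nat.ceil_lt_add_one (a := s * r ^ b.val) (by linarith [hsb b.val])
          linarith [hsb b.val]
        have h4 : ((∑ b : Fin k, ⌈s * r ^ b.val⌉₊ : ℕ) : ℝ) ≤ D := by
          push_cast
          refine (Finset.sum_le_sum fun b _ => h3 b).trans ?_
          rw [← Finset.mul_sum, Fin.sum_univ_eq_sum_range (fun b => r ^ b) k, geom_sum_eq hr1.ne',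
            mul_div_assoc', div_le_iff₀ hrp]
          nlinarith
        exact_mod_cast h4)
    Γ B hB
  refine ⟨p, hp0, hpD, fun i x hx => ?_⟩
  have h := hp i x hx
  have hcoef : ((2 : ℝ) ^ k)⁻¹ ≤ (2 ^ (n + 1) * (Nat.factorial n : ℝ) / (r - 1) ^ n) * j * ((D : ℝ) ^ n)⁻¹ := by
    have e : (2 ^ (n + 1) * (Nat.factorial n : ℝ) / (r - 1) ^ n) * j * ((D : ℝ) ^ n)⁻¹ =
        (2 ^ (n + 1) * (Nat.factorial n : ℝ) * j) / ((D : ℝ) ^ n * (r - 1) ^ n) := by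
      field_simp
    rw [e, inv_eq_one_div, div_le_div_iff₀ (by positivity) (by positivity)]
    rw [pow_succ] at hk ⊢
    linarith
  have hBc : 0 ≤ B i * (Γ i).card := mul_nonneg (by linarith [hB1 i]) (Nat.cast_nonneg _)
  have h2 := mul_le_mul_of_nonneg_right hcoef hBc
  rw [mul_comm ((2 : ℝ) ^ k), ← le_div_iff₀ (by positivity), div_eq_inv_mul] at h
  refine h.trans (h2.trans (le_of_eq ?_))
  ring
end

section
/- There exist constants C₁ > 0 and C₂ > 0 such that for every finite collection Γ₁ of lines in ℝ³ (i.e., 1-dimensional affine subspaces of ℝ³), every finite collection Γ₂ of points in ℝ³, and every integer D ≥ 1, there exists a non-zero polynomial p ∈ ℝ[x,y,z] of total degree at most D such that every connected component of ℝ³ \ Z(p) intersects at most 2·C₁·|Γ₁|/D² of the lines in Γ₁ and contains at most 2·C₂·|Γ₂|/D³ of the points of Γ₂. -/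
set_option linter.unusedSectionVars false

namespace PP

/-! ### Abstract exchange argument -/

section Exchange
variable {X Q : Type*}

abbrev En (X : Type*) := Module.End (ZMod 2) (X → ZMod 2)

lemma en_add_self (a : En X) : a + a = 0 := by
  rw [← two_smul (ZMod 2) a]
  have : (2 : ZMod 2) = 0 := by decide
  rw [this, zero_smul]

lemma en_cancel (a b : En X) : a + (a + b) = b := by
  rw [← add_assoc, en_add_self, zero_add]

def del (B d : En X) : En X := B * d + d * B

lemma del_comm (B d : En X) (hB : B * B = 0) : Commute B (del B d) := by
  unfold Commute SemiconjBy del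
  rw [mul_add, add_mul, ← mul_assoc, ← mul_assoc, hB, mul_assoc d B B, hB]
  simp

lemma exchange (B : En X) (hB : B * B = 0) (S : Set (X → ZMod 2))
    (u : (X → ZMod 2) →ₗ[ZMod 2] ZMod 2) (w : X → ZMod 2)
    (huB : ∀ φ ∈ S, u (B φ) = 0) (hw : w ∈ S) (hBw : B w = 0)
    (d d' : Q → En X) (h1 : ∀ q, ∀ φ ∈ S, del B (d q) φ ∈ S)
    (h2 : ∀ q, ∀ φ ∈ S, del B (d' q) φ ∈ S)
    (h3 : ∀ q, ∀ φ ∈ S, (d q + d' q) φ ∈ S) (l : List Q) :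
    ∀ L : En X, Commute B L → (∀ φ ∈ S, L φ ∈ S) →
      u (L ((l.map (fun q => del B (d q))).prod w)) =
      u (L ((l.map (fun q => del B (d' q))).prod w)) := by
  induction l with
  | nil => intro L _ _; simp
  | cons q l ih =>
    intro L hL hLS
    have hR : ∀ l : List Q, ((l.map (fun q => del B (d' q))).prod w) ∈ S := by
      intro l
      induction l with
      | nil => simpa using hw
      | cons q l ih' =>
        simp only [List.map_cons, List.prod_cons, Module.End.mul_apply]
        exact h2 _ _ ih'
    have hRc : ∀ l : List Q, Commute B ((l.map (fun q => del B (d' q))).prod) := by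
      intro l
      apply Commute.list_prod_right
      intro x hx
      simp only [List.mem_map] at hx
      obtain ⟨q, _, rfl⟩ := hx
      exact del_comm _ _ hB
    simp only [List.map_cons, List.prod_cons, Module.End.mul_apply]
    have e1 := ih (L * del B (d q)) (hL.mul_right (del_comm _ _ hB))
      (fun φ hφ => by rw [Module.End.mul_apply]; exact hLS _ (h1 _ _ hφ))
    simp only [Module.End.mul_apply] at e1
    rw [e1]
    set R := (l.map (fun q => del B (d' q))).prod with hRdef
    have hd : del B (d q) = del B (d' q) + del B (d q + d' q) := by
      have : del B (d q + d' q) = del B (d' q) + del B (d q) := by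
        unfold del; rw [mul_add, add_mul]; abel
      rw [this, en_cancel]
    have key : u (L (del B (d q + d' q) (R w))) = 0 := by
      set g := d q + d' q
      have e2 : L (del B g (R w)) = B (L (g (R w))) + L (g (R (B w))) := by
        have a1 : L (B (g (R w))) = B (L (g (R w))) := by
          have := congrArg (fun M : En X => M (g (R w))) hL.eq
          simpa [Module.End.mul_apply] using this.symm
        have a2 : B (R w) = R (B w) := by
          have := congrArg (fun M : En X => M w) (hRc l).eq
          simpa [Module.End.mul_apply] using this
        simp only [del, LinearMap.add_apply, Module.End.mul_apply, map_add, a1, a2]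
      rw [e2, map_add, huB _ (hLS _ (h3 q _ (hR l))), hBw]
      simp
    rw [hd, LinearMap.add_apply, map_add, map_add, key, add_zero]

end Exchange

/-! ### Cells -/

section Cells

variable {ι J : Type*} [Fintype ι] [DecidableEq ι] (blk : ι → J)

def sg (g : ZMod 2) : ℤ := if g = 0 then 1 else -1

lemma sg_cases (g : ZMod 2) : (g = 0 ∧ sg g = 1) ∨ (g = 1 ∧ sg g = -1) := by
  revert g; decide

lemma sg_add (g h : ZMod 2) : sg (g + h) = sg g * sg h := by
  revert g h; decide

lemma zadd (g : ZMod 2) : g + g = 0 := by revert g; decide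

def act (g : J → ZMod 2) (a : ι → ℤ) : ι → ℤ := fun i => sg (g (blk i)) * a i

lemma act_act (g h : J → ZMod 2) (a : ι → ℤ) : act blk g (act blk h a) = act blk (g + h) a := by
  funext i; simp [act, sg_add, mul_assoc]

lemma act_self (g : J → ZMod 2) (a : ι → ℤ) : act blk g (act blk g a) = a := by
  rw [act_act]; funext i; simp [act, zadd, sg]

def InV (m : ℤ) (a : ι → ℤ) : Prop :=
  (∀ i, -(2*m) ≤ a i ∧ a i ≤ 2*m) ∧ ∀ j, ∃ i, blk i = j ∧ (a i = 2*m ∨ a i = -(2*m))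

open Classical in
noncomputable def VF (m : ℤ) : Finset (ι → ℤ) :=
  (Fintype.piFinset (fun _ => Finset.Icc (-(2*m)) (2*m))).filter (InV blk m)

lemma mem_VF {m : ℤ} {a : ι → ℤ} : a ∈ VF blk m ↔ InV blk m a := by
  classical
  unfold VF
  rw [Finset.mem_filter, Fintype.mem_piFinset]
  simp only [Finset.mem_Icc]
  exact ⟨fun h => h.2, fun h => ⟨h.1, h⟩⟩

lemma InV_act {m : ℤ} {a : ι → ℤ} (g : J → ZMod 2) (h : InV blk m a) : InV blk m (act blk g a) := by
  constructor
  · intro i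
    have := h.1 i
    rcases sg_cases (g (blk i)) with ⟨_, e⟩ | ⟨_, e⟩ <;> simp only [act, e] <;> omega
  · intro j
    obtain ⟨i, hi, h'⟩ := h.2 j
    refine ⟨i, hi, ?_⟩
    rcases sg_cases (g (blk i)) with ⟨_, e⟩ | ⟨_, e⟩ <;> simp only [act, e] <;> omega

def Cov (x y : ι → ℤ) : Prop :=
  ∃ i, Even (x i) ∧ (y i = x i + 1 ∨ y i = x i - 1) ∧ ∀ k, k ≠ i → y k = x k

lemma Cov_act {x y : ι → ℤ} (g : J → ZMod 2) (h : Cov x y) : Cov (act blk g x) (act blk g y) := by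
  obtain ⟨i, h1, h2, h3⟩ := h
  refine ⟨i, ?_, ?_, ?_⟩
  · simp only [act]; exact h1.mul_left _
  · rcases sg_cases (g (blk i)) with ⟨_, e⟩ | ⟨_, e⟩ <;> simp only [act, e] <;> omega
  · intro k hk; simp only [act, h3 k hk]

lemma Cov_act_iff {x y : ι → ℤ} (g : J → ZMod 2) :
    Cov (act blk g x) (act blk g y) ↔ Cov x y :=
  ⟨fun h => by simpa [act_self] using Cov_act blk g h, Cov_act blk g⟩

lemma InV_down {m : ℤ} {x y : ι → ℤ} (h : Cov x y) (hy : InV blk m y) : InV blk m x := by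
  obtain ⟨i, h1, h2, h3⟩ := h
  rw [Int.even_iff] at h1
  constructor
  · intro k
    have := hy.1 k
    by_cases hk : k = i
    · subst hk; omega
    · rw [← h3 k hk]; exact this
  · intro j
    obtain ⟨k, hk, h'⟩ := hy.2 j
    refine ⟨k, hk, ?_⟩
    by_cases hki : k = i
    · subst hki; omega
    · rw [← h3 k hki]; exact h'

open Classical in
noncomputable def Bop (m : ℤ) : En (ι → ℤ) where
  toFun φ := fun x => ∑ y ∈ VF blk m, if Cov x y then φ y else 0
  map_add' φ ψ := by
    funext x
    simp only [Pi.add_apply, ← Finset.sum_add_distrib]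
    refine Finset.sum_congr rfl fun y _ => ?_
    split_ifs <;> simp
  map_smul' c φ := by
    funext x
    simp only [Pi.smul_apply, smul_eq_mul, Finset.mul_sum, RingHom.id_apply]
    refine Finset.sum_congr rfl fun y _ => ?_
    split_ifs <;> simp

noncomputable def Dop (σ : (ι → ℤ) → ZMod 2) : En (ι → ℤ) where
  toFun φ := fun x => σ x * φ x
  map_add' φ ψ := by funext x; simp [mul_add]
  map_smul' c φ := by funext x; simp; ring

open Classical in
lemma del_apply (m : ℤ) (σ φ : (ι → ℤ) → ZMod 2) (x : ι → ℤ) :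
    del (Bop blk m) (Dop σ) φ x =
      ∑ y ∈ VF blk m, if Cov x y then (σ x + σ y) * φ y else 0 := by
  simp only [del, LinearMap.add_apply, Module.End.mul_apply, Bop, Dop, LinearMap.coe_mk,
    AddHom.coe_mk, Pi.add_apply, Finset.mul_sum, ← Finset.sum_add_distrib]
  refine Finset.sum_congr rfl fun y _ => ?_
  split_ifs
  · ring
  · simp

/-- a filtered set that is empty or a pair has zero sum -/
lemma sum_pair_zero {α : Type*} [DecidableEq α] (s : Finset α) (f : α → ZMod 2)
    (h : ∀ a ∈ s, f a ≠ 0 → ∃ b ∈ s, b ≠ a ∧ f b = f a ∧ ∀ c ∈ s, f c ≠ 0 → c = a ∨ c = b) :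
    ∑ a ∈ s, f a = 0 := by
  by_cases hs : ∃ a ∈ s, f a ≠ 0
  · obtain ⟨a, ha, hfa⟩ := hs
    obtain ⟨b, hb, hba, hfb, hc⟩ := h a ha hfa
    have : ∑ x ∈ ({a, b} : Finset α), f x = ∑ x ∈ s, f x := by
      apply Finset.sum_subset
      · intro x hx
        simp only [Finset.mem_insert, Finset.mem_singleton] at hx
        rcases hx with rfl | rfl <;> assumption
      · intro x hx hx'
        by_contra h0
        have := hc x hx h0
        simp only [Finset.mem_insert, Finset.mem_singleton] at hx'
        exact hx' this
    rw [← this, Finset.sum_pair hba.symm, hfb, zadd]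
  · push Not at hs
    exact Finset.sum_eq_zero hs

lemma BB (m : ℤ) : Bop blk m * Bop blk m = 0 := by
  classical
  apply LinearMap.ext; intro φ; funext x
  simp only [Module.End.mul_apply, Bop, LinearMap.coe_mk, AddHom.coe_mk, LinearMap.zero_apply,
    Pi.zero_apply]
  have : ∀ y ∈ VF blk m, (if Cov x y then ∑ z ∈ VF blk m, (if Cov y z then φ z else 0) else 0)
      = ∑ z ∈ VF blk m, (if Cov x y ∧ Cov y z then φ z else 0) := by
    intro y _
    by_cases h : Cov x y <;> simp [h]
  rw [Finset.sum_congr rfl this, Finset.sum_comm]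
  refine Finset.sum_eq_zero fun z hz => ?_
  rw [mem_VF] at hz
  apply sum_pair_zero
  intro y hy hne
  have hxyz : Cov x y ∧ Cov y z := by
    by_contra h; simp [h] at hne
  obtain ⟨⟨i, a1, a2, a3⟩, ⟨k, b1, b2, b3⟩⟩ := hxyz
  have hik : k ≠ i := by
    rintro rfl
    rw [Int.even_iff] at a1 b1; omega
  have c1 : Cov x (Function.update x k (z k)) := by
    refine ⟨k, ?_, ?_, ?_⟩
    · rw [← a3 k hik]; exact b1
    · rw [Function.update_self, ← a3 k hik]; exact b2
    · intro l hl; rw [Function.update_of_ne hl]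
  have c2 : Cov (Function.update x k (z k)) z := by
    refine ⟨i, ?_, ?_, ?_⟩
    · rw [Function.update_of_ne hik.symm]; exact a1
    · rw [Function.update_of_ne hik.symm, b3 i hik.symm]; exact a2
    · intro l hl
      by_cases hlk : l = k
      · subst hlk; simp
      · rw [Function.update_of_ne hlk, b3 l hlk, a3 l hl]
  refine ⟨Function.update x k (z k), ?_, ?_, ?_, ?_⟩
  · rw [mem_VF]; exact InV_down blk c2 hz
  · intro h
    have := congrFun h k
    rw [Function.update_self] at this
    omega
  · rw [if_pos ⟨c1, c2⟩, if_pos ⟨⟨i, a1, a2, a3⟩, ⟨k, b1, b2, b3⟩⟩]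
  · intro c _ hc
    have hxcz : Cov x c ∧ Cov c z := by
      by_contra h; simp [h] at hc
    obtain ⟨⟨i', d1, d2, d3⟩, ⟨k', e1, e2, e3⟩⟩ := hxcz
    have hik' : k' ≠ i' := by
      rintro rfl
      rw [Int.even_iff] at d1 e1; omega
    have hi' : i' = i ∨ i' = k := by
      by_contra hcon
      push Not at hcon
      have h1 := e3 i' hik'.symm
      have h2 := b3 i' hcon.2
      have h3 := a3 i' hcon.1
      omega
    rcases hi' with rfl | rfl
    · left; funext l
      by_cases hl : l = i'
      · subst hl; rw [← e3 l hik'.symm, ← b3 l hik.symm]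
      · rw [d3 l hl, a3 l hl]
    · right; funext l
      by_cases hl : l = i'
      · subst hl; rw [← e3 l hik'.symm, Function.update_self]
      · rw [d3 l hl, Function.update_of_ne hl]

/-- invariant functions -/
def Inv (m : ℤ) : Set ((ι → ℤ) → ZMod 2) :=
  {φ | ∀ g x, InV blk m x → φ (act blk g x) = φ x}

lemma sum_act (m : ℤ) (g : J → ZMod 2) (f : (ι → ℤ) → ZMod 2) :
    ∑ y ∈ VF blk m, f (act blk g y) = ∑ y ∈ VF blk m, f y := by
  refine Finset.sum_nbij' (act blk g) (act blk g) ?_ ?_ ?_ ?_ ?_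
  · intro a ha; rw [mem_VF] at *; exact InV_act blk g ha
  · intro a ha; rw [mem_VF] at *; exact InV_act blk g ha
  · intro a _; exact act_self _ _ _
  · intro a _; exact act_self _ _ _
  · intro a _; rfl

/-- `σ` has type given by the character `c` -/
def HasType (m : ℤ) (c : (J → ZMod 2) → ZMod 2) (σ : (ι → ℤ) → ZMod 2) : Prop :=
  ∀ g x, InV blk m x → σ (act blk g x) = σ x + c g

lemma del_inv (m : ℤ) (c : (J → ZMod 2) → ZMod 2) (σ : (ι → ℤ) → ZMod 2)
    (hσ : HasType blk m c σ) (φ) (hφ : φ ∈ Inv blk m) :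
    del (Bop blk m) (Dop σ) φ ∈ Inv blk m := by
  classical
  intro g x hx
  rw [del_apply, del_apply, ← sum_act blk m g]
  refine Finset.sum_congr rfl fun y hy => ?_
  rw [mem_VF] at hy
  rw [hφ g y hy, hσ g y hy, hσ g x hx]
  simp only [Cov_act_iff]
  split_ifs
  · have : σ x + c g + (σ y + c g) = σ x + σ y + (c g + c g) := by ring
    rw [this, zadd, add_zero]
  · rfl

lemma dop_inv (m : ℤ) (c : (J → ZMod 2) → ZMod 2) (σ σ' : (ι → ℤ) → ZMod 2)
    (hσ : HasType blk m c σ) (hσ' : HasType blk m c σ') (φ) (hφ : φ ∈ Inv blk m) :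
    (Dop σ + Dop σ') φ ∈ Inv blk m := by
  intro g x hx
  simp only [LinearMap.add_apply, Dop, LinearMap.coe_mk, AddHom.coe_mk, Pi.add_apply]
  rw [hφ g x hx, hσ g x hx, hσ' g x hx]
  have : (σ x + c g) * φ x + (σ' x + c g) * φ x = σ x * φ x + σ' x * φ x + (c g * φ x + c g * φ x) := by ring
  rw [this, zadd, add_zero]

open Classical in
noncomputable def uop (m : ℤ) (r : (ι → ℤ) → J → ZMod 2) : ((ι → ℤ) → ZMod 2) →ₗ[ZMod 2] ZMod 2 where
  toFun φ := ∑ x ∈ VF blk m, if r x = 0 ∧ (∀ i, Even (x i)) then φ x else 0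
  map_add' φ ψ := by
    rw [← Finset.sum_add_distrib]
    refine Finset.sum_congr rfl fun y _ => ?_
    split_ifs <;> simp
  map_smul' c φ := by
    simp only [Pi.smul_apply, smul_eq_mul, Finset.mul_sum, RingHom.id_apply]
    refine Finset.sum_congr rfl fun y _ => ?_
    split_ifs <;> simp

lemma even_act {g : J → ZMod 2} {x : ι → ℤ} : (∀ i, Even (act blk g x i)) ↔ ∀ i, Even (x i) := by
  refine forall_congr' fun i => ?_
  rcases sg_cases (g (blk i)) with ⟨_, e⟩ | ⟨_, e⟩ <;> simp [act, e]

lemma uB [Fintype J] (m : ℤ) (r : (ι → ℤ) → J → ZMod 2)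
    (hr : ∀ g x, InV blk m x → r (act blk g x) = r x + g) (φ) (hφ : φ ∈ Inv blk m) :
    uop blk m r (Bop blk m φ) = 0 := by
  classical
  simp only [uop, Bop, LinearMap.coe_mk, AddHom.coe_mk]
  have e1 : ∀ x ∈ VF blk m, (if r x = 0 ∧ (∀ i, Even (x i)) then
      ∑ y ∈ VF blk m, (if Cov x y then φ y else 0) else 0) =
      ∑ g : J → ZMod 2, ∑ y ∈ VF blk m, if r x = 0 ∧ r y = g ∧ (∀ i, Even (x i)) ∧ Cov x y then φ y else 0 := by
    intro x _
    rw [Finset.sum_comm]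
    by_cases h : r x = 0 ∧ (∀ i, Even (x i))
    · rw [if_pos h]
      refine Finset.sum_congr rfl fun y _ => ?_
      rw [Finset.sum_eq_single (r y)]
      · simp [h.1, h.2]
      · intro g _ hg
        rw [if_neg]; tauto
      · simp
    · rw [if_neg h]; symm
      refine Finset.sum_eq_zero fun y _ => Finset.sum_eq_zero fun g _ => ?_
      rw [if_neg]; tauto
  rw [Finset.sum_congr rfl e1, Finset.sum_comm]
  have e2 : ∀ g : J → ZMod 2, (∑ x ∈ VF blk m, ∑ y ∈ VF blk m,
      if r x = 0 ∧ r y = g ∧ (∀ i, Even (x i)) ∧ Cov x y then φ y else 0) =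
      ∑ x ∈ VF blk m, ∑ y ∈ VF blk m,
      if r x = g ∧ r y = 0 ∧ (∀ i, Even (x i)) ∧ Cov x y then φ y else 0 := by
    intro g
    rw [← sum_act blk m g]
    refine Finset.sum_congr rfl fun x hx => ?_
    rw [← sum_act blk m g]
    refine Finset.sum_congr rfl fun y hy => ?_
    rw [mem_VF] at hx hy
    have hgg : g + g = 0 := by funext j; exact zadd _
    have k1 : r x + g = 0 ↔ r x = g := by
      constructor
      · intro h
        have := congrArg (· + g) h
        simpa [add_assoc, hgg] using this
      · rintro h; rw [h, hgg]
    rw [hr g x hx, hr g y hy, hφ g y hy]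
    simp only [Cov_act_iff, even_act, k1, add_eq_right]
  rw [Finset.sum_congr rfl (fun g _ => e2 g), Finset.sum_comm]
  have e3 : ∀ x ∈ VF blk m, (∑ g : J → ZMod 2, ∑ y ∈ VF blk m,
      if r x = g ∧ r y = 0 ∧ (∀ i, Even (x i)) ∧ Cov x y then φ y else 0) =
      ∑ y ∈ VF blk m, if r y = 0 ∧ (∀ i, Even (x i)) ∧ Cov x y then φ y else 0 := by
    intro x _
    rw [Finset.sum_comm]
    refine Finset.sum_congr rfl fun y _ => ?_
    rw [Finset.sum_eq_single (r x)]
    · simp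
    · intro g _ hg
      rw [if_neg]; intro h; exact hg h.1.symm
    · simp
  rw [Finset.sum_congr rfl e3, Finset.sum_comm]
  refine Finset.sum_eq_zero fun y hy => ?_
  rw [mem_VF] at hy
  apply sum_pair_zero
  intro x hx hne
  have hxy : r y = 0 ∧ (∀ i, Even (x i)) ∧ Cov x y := by
    by_contra h; simp [h] at hne
  obtain ⟨hry, hev, ⟨i, a1, a2, a3⟩⟩ := hxy
  have ei := a1
  rw [Int.even_iff] at ei
  have key : ∀ z, (∀ i, Even (z i)) → Cov z y → (z i = y i + 1 ∨ z i = y i - 1) ∧ ∀ k, k ≠ i → z k = x k := by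
    rintro z hz ⟨k, b1, b2, b3⟩
    have : k = i := by
      by_contra hk
      have h1 := a3 k hk
      have h2 := hev k
      rw [Int.even_iff] at h2 b1; omega
    subst this
    refine ⟨by omega, fun l hl => ?_⟩
    rw [← b3 l hl, a3 l hl]
  set t := 2 * y i - x i with ht
  have c1 : ∀ k, Even (Function.update x i t k) := by
    intro k
    by_cases hk : k = i
    · subst hk; rw [Function.update_self, Int.even_iff]; omega
    · rw [Function.update_of_ne hk]; exact hev k
  have c2 : Cov (Function.update x i t) y := by
    refine ⟨i, c1 i, ?_, ?_⟩
    · rw [Function.update_self]; omega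
    · intro k hk; rw [Function.update_of_ne hk]; exact a3 k hk
  refine ⟨Function.update x i t, ?_, ?_, ?_, ?_⟩
  · rw [mem_VF]; exact InV_down blk c2 hy
  · intro h
    have := congrFun h i
    rw [Function.update_self] at this; omega
  · rw [if_pos ⟨hry, c1, c2⟩, if_pos ⟨hry, hev, ⟨i, a1, a2, a3⟩⟩]
  · intro c _ hc
    have hcy : r y = 0 ∧ (∀ i, Even (c i)) ∧ Cov c y := by
      by_contra h; simp [h] at hc
    obtain ⟨d1, d2⟩ := key c hcy.2.1 hcy.2.2
    by_cases hci : c i = x i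
    · left; funext k
      by_cases hk : k = i
      · rw [hk, hci]
      · exact d2 k hk
    · right; funext k
      by_cases hk : k = i
      · subst hk; rw [Function.update_self]; omega
      · rw [Function.update_of_ne hk]; exact d2 k hk

end Cells

end PP


set_option linter.unusedSectionVars false

namespace PP

section Tau
variable {ι J : Type*} [Fintype ι] [DecidableEq ι] [DecidableEq J] (blk : ι → J)

def rho (j : J) (a : ι → ℤ) : ι → ℤ := fun i => if blk i = j then a i else 0

open Classical in
noncomputable def tau (j : J) (a : ι → ℤ) : ZMod 2 :=
  if WellOrderingRel (rho blk j a) (-(rho blk j a)) then 0 else 1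

lemma tau_congr (j : J) (a b : ι → ℤ) (h : ∀ i, blk i = j → a i = b i) : tau blk j a = tau blk j b := by
  have : rho blk j a = rho blk j b := by
    funext i; unfold rho; split_ifs with hi
    · exact h i hi
    · rfl
  unfold tau; rw [this]

lemma tau_act {m : ℤ} (hm : 1 ≤ m) (j : J) (g : J → ZMod 2) (a : ι → ℤ) (ha : InV blk m a) :
    tau blk j (act blk g a) = tau blk j a + g j := by
  rcases sg_cases (g j) with ⟨e, e'⟩ | ⟨e, e'⟩
  · rw [e, add_zero]
    apply tau_congr
    intro i hi
    simp [act, hi, e']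
  · have h1 : rho blk j (act blk g a) = - rho blk j a := by
      funext i; unfold rho act; simp only [Pi.neg_apply]
      split_ifs with hi
      · rw [hi, e']; ring
      · simp
    have h2 : rho blk j a ≠ - rho blk j a := by
      intro h
      obtain ⟨i, hi, h'⟩ := ha.2 j
      have := congrFun h i
      simp only [rho, Pi.neg_apply, hi, if_true] at this
      omega
    unfold tau
    rw [h1, neg_neg, e]
    rcases trichotomous_of WellOrderingRel (rho blk j a) (-(rho blk j a)) with h | h | h
    · have h' : ¬ WellOrderingRel (-(rho blk j a)) (rho blk j a) := asymm_of _ h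
      simp [h, h']
    · exact absurd h h2
    · have h' : ¬ WellOrderingRel (rho blk j a) (-(rho blk j a)) := asymm_of _ h
      simp only [h, h', if_true, if_false]; decide
end Tau

section Main
variable {Q : Type*} [Fintype Q] [DecidableEq Q] {s : ℕ} (β : Q → Fin s) (v : Q → Finset (Fin s))

abbrev bk : Q ⊕ Fin s → Fin s := Sum.elim β id

def char (q : Q) (g : Fin s → ZMod 2) : ZMod 2 := ∑ j ∈ v q, g j

open Classical in
noncomputable def sgl (q : Q) (a : Q ⊕ Fin s → ℤ) : ZMod 2 :=
  if 0 < a (.inl q) then 0 else if a (.inl q) < 0 then 1 else tau (bk β) (β q) a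

noncomputable def base (q : Q) (a : Q ⊕ Fin s → ℤ) : ZMod 2 :=
  sgl β q a + ∑ i ∈ (v q).erase (β q), tau (bk β) i a

lemma base_type {m : ℤ} (hm : 1 ≤ m) (hv : ∀ q, β q ∈ v q) (q : Q) :
    HasType (bk β) m (char v q) (base β v q) := by
  intro g x hx
  have h1 : sgl β q (act (bk β) g x) = sgl β q x + g (β q) := by
    unfold sgl
    rw [tau_act _ hm _ _ _ hx]
    have hb : bk β (.inl q) = β q := rfl
    rcases sg_cases (g (β q)) with ⟨e, e'⟩ | ⟨e, e'⟩
    · have ha : act (bk β) g x (.inl q) = x (.inl q) := by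
        simp only [act, hb, e', one_mul]
      rw [ha, e, add_zero, add_zero]
    · have ha : act (bk β) g x (.inl q) = -x (.inl q) := by
        simp only [act, hb, e', neg_one_mul]
      rw [ha, e]
      split_ifs <;> first | omega | decide | rfl
  unfold base char
  rw [h1, ← Finset.add_sum_erase _ _ (hv q)]
  rw [Finset.sum_congr rfl (fun i _ => tau_act (bk β) hm i g x hx), Finset.sum_add_distrib]
  ring

def TT (m : ℤ) (K : Finset Q) (x : Q ⊕ Fin s → ℤ) : Prop :=
  (∀ i, -(2*m) ≤ x i ∧ x i ≤ 2*m) ∧ (∀ q ∈ K, x (.inl q) = 0) ∧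
  ∃ k : Fin s → Q ⊕ Fin s, (∀ j, bk β (k j) = j ∧ (x (k j) = 2*m ∨ x (k j) = -(2*m))) ∧
    ∀ i, Even (x i) → i = k (bk β i) ∨ ∃ q ∈ K, i = .inl q

lemma TT_InV {m : ℤ} {K : Finset Q} {x : Q ⊕ Fin s → ℤ} (h : TT β m K x) : InV (bk β) m x := by
  obtain ⟨h1, _, k, hk, _⟩ := h
  exact ⟨h1, fun j => ⟨k j, hk j⟩⟩

open Classical in
noncomputable def ww (m : ℤ) (K : Finset Q) : (Q ⊕ Fin s → ℤ) → ZMod 2 :=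
  fun x => if TT β m K x then 1 else 0

lemma TT_act {m : ℤ} {K : Finset Q} {x : Q ⊕ Fin s → ℤ} (g) (h : TT β m K x) :
    TT β m K (act (bk β) g x) := by
  refine ⟨(InV_act _ g (TT_InV β h)).1, ?_, ?_⟩
  · intro q hq; simp [act, h.2.1 q hq]
  · obtain ⟨k, hk, h'⟩ := h.2.2
    refine ⟨k, fun j => ⟨(hk j).1, ?_⟩, fun i hi => h' i ?_⟩
    · have := (hk j).2
      rcases sg_cases (g (bk β (k j))) with ⟨_, e⟩ | ⟨_, e⟩ <;> simp only [act, e] <;> omega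
    · rcases sg_cases (g (bk β i)) with ⟨_, e⟩ | ⟨_, e⟩ <;> simpa [act, e] using hi

lemma ww_inv (m : ℤ) (K : Finset Q) : ww β m K ∈ Inv (bk β) m := by
  classical
  intro g x _
  have : TT β m K (act (bk β) g x) ↔ TT β m K x :=
    ⟨fun h => by simpa [act_self] using TT_act β g h, TT_act β g⟩
  unfold ww
  exact if_congr this rfl rfl

lemma Bw {m : ℤ} (hm : 1 ≤ m) : Bop (bk β) m (ww β m ∅) = 0 := by
  classical
  funext x
  simp only [Bop, LinearMap.coe_mk, AddHom.coe_mk, Pi.zero_apply]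
  apply sum_pair_zero
  intro y hy hne
  have hxy : Cov x y ∧ TT β m ∅ y := by
    by_contra h
    apply hne
    unfold ww
    by_cases h1 : Cov x y <;> simp_all
  obtain ⟨⟨i, a1, a2, a3⟩, hT⟩ := hxy
  have hval : ∀ z, Cov x z → TT β m ∅ z → (if Cov x z then ww β m ∅ z else 0) = 1 := by
    intro z h1 h2; simp [ww, h1, h2]
  have hval' : ∀ z, (if Cov x z then ww β m ∅ z else 0) ≠ 0 → Cov x z ∧ TT β m ∅ z := by
    intro z h; unfold ww at h
    by_contra h0
    apply h
    by_cases h1 : Cov x z <;> simp_all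
  have hCy : Cov x y := ⟨i, a1, a2, a3⟩
  rw [hval y hCy hT]
  obtain ⟨hb, _, k, hk, hev⟩ := hT
  simp only [Finset.notMem_empty, false_and, exists_false, or_false] at hev
  have ei := a1
  rw [Int.even_iff] at ei
  have hki : ∀ j, k j ≠ i := by
    intro j h
    have h1 := (hk j).2
    rw [h] at h1; omega
  have hxk : ∀ j, x (k j) = y (k j) := fun j => (a3 _ (hki j)).symm
  have hxev : ∀ l, Even (x l) → l = i ∨ l = k (bk β l) := by
    intro l hl
    by_cases h : l = i
    · left; exact h
    · right; apply hev; rw [a3 l h]; exact hl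
  have hxb : ∀ l, -(2*m) ≤ x l ∧ x l ≤ 2*m := (InV_down (bk β) hCy ((mem_VF _).1 hy)).1
  -- general completeness
  have compl : ∀ c, TT β m ∅ c → ∀ i', Even (x i') → (c i' = x i' + 1 ∨ c i' = x i' - 1) →
      (∀ l, l ≠ i' → c l = x l) → i' = i ∨ (i' = k (bk β i) ∧ (x i = 2*m ∨ x i = -(2*m))) := by
    intro c hc i' b1 b2 b3
    rcases hxev i' b1 with h | h
    · left; exact h
    · right
      obtain ⟨_, _, k2, hk2, _⟩ := hc
      set j' := bk β i' with hj'
      have hne' : k2 j' ≠ i' := by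
        intro h0
        have := (hk2 j').2
        rw [h0] at this
        rw [Int.even_iff] at b1; omega
      have hx2 : x (k2 j') = 2*m ∨ x (k2 j') = -(2*m) := by
        rw [← b3 _ hne']; exact (hk2 j').2
      have hx2e : Even (x (k2 j')) := by rw [Int.even_iff]; omega
      rcases hxev _ hx2e with h0 | h0
      · have : bk β i = j' := by rw [← h0]; exact (hk2 j').1
        rw [h0] at hx2
        refine ⟨by rw [this]; exact h, hx2⟩
      · rw [(hk2 j').1, ← h] at h0
        exact absurd h0 hne'
  by_cases hxi : x i = 2*m ∨ x i = -(2*m)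
  · set p := k (bk β i) with hp
    have hpi : p ≠ i := hki _
    have hbp : bk β p = bk β i := (hk _).1
    have hxp : x p = 2*m ∨ x p = -(2*m) := by rw [hp, hxk]; exact (hk _).2
    set t : ℤ := if x p = 2*m then 2*m - 1 else -(2*m)+1 with ht
    have htc : (x p = 2*m ∧ t = 2*m-1) ∨ (x p = -(2*m) ∧ t = -(2*m)+1) := by
      rw [ht]; split_ifs with h
      · left; exact ⟨h, rfl⟩
      · right; exact ⟨by omega, rfl⟩
    have hC' : Cov x (Function.update x p t) := by
      refine ⟨p, ?_, ?_, ?_⟩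
      · rw [Int.even_iff]; omega
      · rw [Function.update_self]; omega
      · intro l hl; rw [Function.update_of_ne hl]
    have hT' : TT β m ∅ (Function.update x p t) := by
      refine ⟨?_, by simp, Function.update k (bk β i) i, ?_, ?_⟩
      · intro l
        by_cases hl : l = p
        · rw [hl, Function.update_self]; omega
        · rw [Function.update_of_ne hl]; exact hxb l
      · intro j
        by_cases hj : j = bk β i
        · subst hj
          rw [Function.update_self, Function.update_of_ne hpi.symm]
          exact ⟨rfl, hxi⟩
        · rw [Function.update_of_ne hj]
          have : k j ≠ p := by
            intro h
            have h1 := (hk j).1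
            rw [h, hbp] at h1; exact hj h1.symm
          rw [Function.update_of_ne this, hxk]
          exact hk j
      · intro l hl
        left
        by_cases hlp : l = p
        · rw [hlp, Function.update_self, Int.even_iff] at hl; omega
        · rw [Function.update_of_ne hlp] at hl
          rcases hxev l hl with h | h
          · rw [h, Function.update_self]
          · by_cases hj : bk β l = bk β i
            · rw [hj] at h; exact absurd h hlp
            · rw [Function.update_of_ne hj]; exact h
    refine ⟨Function.update x p t, (mem_VF _).2 (TT_InV β hT'), ?_, hval _ hC' hT', ?_⟩
    · intro h
      have := congrFun h p
      rw [Function.update_self, a3 p hpi] at this; omega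
    · intro c _ hc
      obtain ⟨⟨i', b1, b2, b3⟩, hcT⟩ := hval' c hc
      have hcb := hcT.1
      rcases compl c hcT i' b1 b2 b3 with h | ⟨h, _⟩
      · subst h; left; funext l
        by_cases hl : l = i'
        · subst hl
          have h1 := hcb l; have h2 := hb l; omega
        · rw [b3 l hl, a3 l hl]
      · right; funext l
        by_cases hl : l = i'
        · rw [hl, h]; rw [h] at b2
          have h1 := hcb p
          rw [Function.update_self]; omega
        · rw [b3 l hl, Function.update_of_ne (by rw [← h]; exact hl)]
  · have hC' : Cov x (Function.update x i (2 * x i - y i)) := by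
      refine ⟨i, a1, ?_, ?_⟩
      · rw [Function.update_self]; omega
      · intro l hl; rw [Function.update_of_ne hl]
    have hT' : TT β m ∅ (Function.update x i (2 * x i - y i)) := by
      refine ⟨?_, by simp, k, ?_, ?_⟩
      · intro l
        have := hxb l
        by_cases hl : l = i
        · subst hl; rw [Function.update_self]; omega
        · rw [Function.update_of_ne hl]; exact this
      · intro j
        rw [Function.update_of_ne (hki j), hxk]; exact hk j
      · intro l hl
        left
        by_cases hlp : l = i
        · rw [hlp, Function.update_self, Int.even_iff] at hl; omega
        · rw [Function.update_of_ne hlp] at hl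
          rcases hxev l hl with h | h
          · exact absurd h hlp
          · exact h
    refine ⟨_, (mem_VF _).2 (TT_InV β hT'), ?_, hval _ hC' hT', ?_⟩
    · intro h
      have := congrFun h i
      rw [Function.update_self] at this; omega
    · intro c _ hc
      obtain ⟨⟨i', b1, b2, b3⟩, hcT⟩ := hval' c hc
      rcases compl c hcT i' b1 b2 b3 with h | ⟨_, h⟩
      · subst h
        by_cases hci : c i' = y i'
        · left; funext l
          by_cases hl : l = i'
          · rw [hl, hci]
          · rw [b3 l hl, a3 l hl]
        · right; funext l
          by_cases hl : l = i'
          · rw [hl, Function.update_self]; omega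
          · rw [b3 l hl, Function.update_of_ne hl]
      · exact absurd h hxi

lemma step {m : ℤ} (hm : 1 ≤ m) (hv : ∀ q, ∀ i ∈ v q, i ≤ β q) (K : Finset Q) (q : Q) (hq : q ∉ K)
    (hK : ∀ q', β q' < β q → q' ∈ K) :
    del (Bop (bk β) m) (Dop (base β v q)) (ww β m K) = ww β m (insert q K) := by
  classical
  funext x
  rw [del_apply]
  by_cases hx : TT β m (insert q K) x
  · have hw : ww β m (insert q K) x = 1 := by simp [ww, hx]
    rw [hw]
    obtain ⟨hb, h0, k, hk, hev⟩ := hx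
    have hxq : x (.inl q) = 0 := h0 q (Finset.mem_insert_self _ _)
    have hkq : ∀ j, k j ≠ .inl q := by
      intro j h
      have := (hk j).2
      rw [h, hxq] at this; omega
    have hCe : ∀ t : ℤ, (t = 1 ∨ t = -1) → Cov x (Function.update x (.inl q) t) := by
      intro t ht
      refine ⟨.inl q, by simp [hxq], ?_, ?_⟩
      · rw [Function.update_self, hxq]; omega
      · intro l hl; rw [Function.update_of_ne hl]
    have hTe : ∀ t : ℤ, (t = 1 ∨ t = -1) → TT β m K (Function.update x (.inl q) t) := by
      intro t ht
      refine ⟨?_, ?_, k, ?_, ?_⟩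
      · intro l
        by_cases hl : l = .inl q
        · rw [hl, Function.update_self]; omega
        · rw [Function.update_of_ne hl]; exact hb l
      · intro q' hq'
        have : (Sum.inl q' : Q ⊕ Fin s) ≠ .inl q := by
          intro h; rw [Sum.inl.injEq] at h; rw [h] at hq'; exact hq hq'
        rw [Function.update_of_ne this]
        exact h0 q' (Finset.mem_insert_of_mem hq')
      · intro j; rw [Function.update_of_ne (hkq j)]; exact hk j
      · intro l hl
        by_cases hlq : l = .inl q
        · rw [hlq, Function.update_self, Int.even_iff] at hl; omega
        · rw [Function.update_of_ne hlq] at hl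
          rcases hev l hl with h | ⟨q', hq', h⟩
          · left; exact h
          · right
            refine ⟨q', ?_, h⟩
            rcases Finset.mem_insert.1 hq' with h1 | h1
            · rw [h1] at h; exact absurd h hlq
            · exact h1
    set y1 := Function.update x (.inl q) (1:ℤ) with hy1
    set y2 := Function.update x (.inl q) (-1:ℤ) with hy2
    have hne : y1 ≠ y2 := by
      intro h
      have := congrFun h (.inl q)
      rw [hy1, hy2, Function.update_self, Function.update_self] at this; omega
    have hsum : ∑ y ∈ ({y1, y2} : Finset _), (if Cov x y then (base β v q x + base β v q y) * ww β m K y else 0)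
      = ∑ y ∈ VF (bk β) m, if Cov x y then (base β v q x + base β v q y) * ww β m K y else 0 := by
      apply Finset.sum_subset
      · intro y hy
        rw [mem_VF]
        simp only [Finset.mem_insert, Finset.mem_singleton] at hy
        rcases hy with rfl | rfl
        · exact TT_InV β (hTe 1 (by simp))
        · exact TT_InV β (hTe (-1) (by simp))
      · intro y _ hy
        split_ifs with hC
        · have : ¬ TT β m K y := by
            intro hT
            apply hy
            obtain ⟨i, a1, a2, a3⟩ := hC
            obtain ⟨_, h0', k2, hk2, _⟩ := hT
            have hii : i = .inl q := by
              have e1 := a1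
              rw [Int.even_iff] at e1
              rcases hev i a1 with h | ⟨q', hq', h⟩
              · exfalso
                set j := bk β i with hj
                have h1 := hk2 j
                have hne2 : k2 j ≠ i := by
                  intro h2; rw [h2] at h1; omega
                have h3 := a3 _ hne2
                have h4 : Even (x (k2 j)) := by rw [Int.even_iff]; omega
                rcases hev _ h4 with h5 | ⟨q', hq', h5⟩
                · rw [h1.1, ← h] at h5; exact hne2 h5
                · have := h0 q' hq'
                  rw [← h5] at this; omega
              · rcases Finset.mem_insert.1 hq' with h1 | h1
                · rw [h, h1]
                · exfalso
                  have h2 := h0' q' h1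
                  have h3 := h0 q' hq'
                  rw [← h] at h2 h3; omega
            subst hii
            simp only [Finset.mem_insert, Finset.mem_singleton]
            rw [hxq] at a2
            rcases a2 with a2 | a2
            · left; funext l
              by_cases hl : l = .inl q
              · rw [hl, a2, hy1, Function.update_self]; rfl
              · rw [a3 l hl, hy1, Function.update_of_ne hl]
            · right; funext l
              by_cases hl : l = .inl q
              · rw [hl, a2, hy2, Function.update_self]; rfl
              · rw [a3 l hl, hy2, Function.update_of_ne hl]
          simp [ww, this]
        · rfl
    rw [← hsum, Finset.sum_pair hne, if_pos (hCe 1 (by simp)), if_pos (hCe (-1) (by simp))]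
    have w1 : ww β m K y1 = 1 := by simp [ww, hy1, hTe 1 (by simp)]
    have w2 : ww β m K y2 = 1 := by
      have := hTe (-1) (by simp)
      simp only [ww, hy2, this, if_true]
    rw [w1, w2]
    have hr : ∑ i ∈ (v q).erase (β q), tau (bk β) i y1 = ∑ i ∈ (v q).erase (β q), tau (bk β) i y2 := by
      refine Finset.sum_congr rfl fun i hi => ?_
      apply tau_congr
      intro l hl
      have : l ≠ .inl q := by
        rintro rfl
        exact (Finset.mem_erase.1 hi).1 hl.symm
      rw [hy1, hy2, Function.update_of_ne this, Function.update_of_ne this]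
    have hs1 : sgl β q y1 = 0 := by simp [sgl, hy1]
    have hs2 : sgl β q y2 = 1 := by simp [sgl, hy2]
    have hb1 : base β v q y2 = 1 + base β v q y1 := by
      unfold base; rw [hr, hs1, hs2]; ring
    rw [hb1]
    have : (base β v q x + base β v q y1) * 1 + (base β v q x + (1 + base β v q y1)) * 1
      = (base β v q x + base β v q x) + (base β v q y1 + base β v q y1) + 1 := by ring
    rw [this, zadd, zadd]; simp
  · have hw : ww β m (insert q K) x = 0 := by simp [ww, hx]
    rw [hw]
    refine Finset.sum_eq_zero fun y _ => ?_
    split_ifs with hC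
    · by_cases hT : TT β m K y
      · have hCC := hC
        have hxb := (InV_down (bk β) hC (TT_InV β hT)).1
        obtain ⟨i, a1, a2, a3⟩ := hC
        obtain ⟨hb, h0, k, hk, hev⟩ := hT
        have e1 := a1
        rw [Int.even_iff] at e1
        by_cases hxq : x (.inl q) = 0
        · exfalso
          have hii : i = .inl q := by
            by_contra hne
            have h1 := a3 _ (Ne.symm hne)
            rw [hxq] at h1
            rcases hev (.inl q) (by rw [h1]; simp) with h | ⟨q', hq', h⟩
            · have := (hk (bk β (.inl q))).2
              rw [← h, h1] at this; omega
            · rw [Sum.inl.injEq] at h; rw [h] at hq; exact hq hq'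
          subst hii
          apply hx
          have hkq : ∀ j, k j ≠ .inl q := by
            intro j h
            have := (hk j).2
            rw [h] at this; omega
          refine ⟨hxb, ?_, k, ?_, ?_⟩
          · intro q' hq'
            rcases Finset.mem_insert.1 hq' with h | h
            · rw [h]; exact hxq
            · rw [← a3 (.inl q') ?_]
              · exact h0 q' h
              · intro h'; rw [Sum.inl.injEq] at h'; rw [h'] at h; exact hq h
          · intro j; rw [← a3 _ (hkq j)]; exact hk j
          · intro l hl
            by_cases hlq : l = .inl q
            · right; exact ⟨q, Finset.mem_insert_self _ _, hlq⟩
            · rw [← a3 l hlq] at hl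
              rcases hev l hl with h | ⟨q', hq', h⟩
              · left; exact h
              · right; exact ⟨q', Finset.mem_insert_of_mem hq', h⟩
        · have hs : sgl β q x = sgl β q y := by
            have : (0 < x (.inl q) ↔ 0 < y (.inl q)) ∧ (x (.inl q) < 0 ↔ y (.inl q) < 0) ∧ y (.inl q) ≠ 0 := by
              by_cases h : i = .inl q
              · subst h; omega
              · rw [a3 _ (Ne.symm h)]; simp [hxq]
            unfold sgl
            simp only [this.1, this.2.1]
            split_ifs
            · rfl
            · rfl
            · have := this.2.2; omega
          have hr : ∑ i ∈ (v q).erase (β q), tau (bk β) i x = ∑ i ∈ (v q).erase (β q), tau (bk β) i y := by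
            refine Finset.sum_congr rfl fun i' hi' => ?_
            apply tau_congr
            intro l hl
            have hlt : i' < β q := lt_of_le_of_ne (hv q i' (Finset.mem_erase.1 hi').2) (Finset.mem_erase.1 hi').1
            by_cases hli : l = i
            · exfalso
              subst hli
              rcases l with q' | j
              · have := h0 q' (hK q' (by simpa [← hl] using hlt))
                omega
              · have hl' : j = i' := hl
                subst hl'
                have h1 := hk j
                rcases hkj : k j with q' | j'
                · rw [hkj] at h1
                  have h2 : β q' = j := h1.1
                  have := h0 q' (hK q' (by rw [h2]; exact hlt))
                  omega
                · rw [hkj] at h1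
                  have h2 : j' = j := h1.1
                  subst h2
                  omega
            · exact (a3 l hli).symm
          have : base β v q x = base β v q y := by unfold base; rw [hs, hr]
          rw [this, zadd, zero_mul]
      · simp [ww, hT]
    · rfl

lemma steps {m : ℤ} (hm : 1 ≤ m) (hv : ∀ q, ∀ i ∈ v q, i ≤ β q) (l : List Q) (hl : l.Nodup)
    (hs : l.Pairwise (fun a b => β b ≤ β a)) (hc : ∀ q ∈ l, ∀ q', β q' < β q → q' ∈ l) :
    (l.map (fun q => del (Bop (bk β) m) (Dop (base β v q)))).prod (ww β m ∅) = ww β m l.toFinset := by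
  induction l with
  | nil => simp
  | cons q l ih =>
    rw [List.nodup_cons] at hl
    rw [List.pairwise_cons] at hs
    rw [List.map_cons, List.prod_cons, Module.End.mul_apply, ih hl.2 hs.2, List.toFinset_cons]
    · apply step β v hm hv
      · simpa using hl.1
      · intro q' h
        have := hc q (by simp) q' h
        rw [List.mem_cons] at this
        rcases this with h1 | h1
        · subst h1; exact absurd h (lt_irrefl _)
        · simpa using h1
    · intro q1 hq1 q' h
      have := hc q1 (by simp [hq1]) q' h
      rw [List.mem_cons] at this
      rcases this with h1 | h1
      · subst h1
        exact absurd (hs.1 q1 hq1) (not_le.2 h)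
      · exact h1

lemma final {m : ℤ} (hm : 1 ≤ m) :
    uop (bk β) m (fun x j => tau (bk β) j x) (ww β m Finset.univ) = 1 := by
  classical
  simp only [uop, LinearMap.coe_mk, AddHom.coe_mk]
  set x0 : Q ⊕ Fin s → ℤ := Sum.elim (fun _ => 0) (fun _ => 2*m) with hx0
  have hT0 : TT β m Finset.univ x0 := by
    refine ⟨?_, ?_, Sum.inr, ?_, ?_⟩
    · rintro (q | j) <;> simp [hx0] <;> omega
    · intro q _; simp [hx0]
    · intro j; simp [hx0]
    · rintro (q | j) _
      · right; exact ⟨q, by simp, rfl⟩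
      · left; simp
  set g : Fin s → ZMod 2 := fun j => tau (bk β) j x0 with hg
  have hT1 := TT_act β g hT0
  rw [Finset.sum_eq_single (act (bk β) g x0)]
  · rw [if_pos]
    · simp only [ww, hT1, if_true]
    · constructor
      · funext j
        rw [tau_act _ hm _ _ _ (TT_InV β hT0), hg]; exact zadd _
      · rw [even_act]; rintro (q | j) <;> simp [hx0]
  · intro x hx hne
    split_ifs with h
    · have : ¬ TT β m Finset.univ x := by
        intro hT
        apply hne
        obtain ⟨_, h0, k, hk, _⟩ := hT
        have hr : ∀ j, x (.inr j) = 2*m ∨ x (.inr j) = -(2*m) := by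
          intro j
          have h1 := hk j
          rcases hkj : k j with q | j'
          · rw [hkj, h0 q (by simp)] at h1; omega
          · rw [hkj] at h1
            have : j' = j := h1.1
            rw [this] at h1; exact h1.2
        set g' : Fin s → ZMod 2 := fun j => if x (.inr j) = 2*m then 0 else 1 with hg'
        have hx' : x = act (bk β) g' x0 := by
          funext i
          rcases i with q | j
          · rw [h0 q (by simp)]; simp [act, hx0]
          · have := hr j
            simp only [act, hx0, hg', Sum.elim_inr, id]
            split_ifs with h
            · simp [sg, h]
            · simp [sg]; omega
        have hgg : g' = g := by
          funext j
          have h1 := congrFun h.1 j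
          simp only [Pi.zero_apply] at h1
          rw [hx', tau_act _ hm _ _ _ (TT_InV β hT0)] at h1
          have h2 : ∀ a b : ZMod 2, a + b = 0 → b = a := by decide
          exact h2 _ _ h1
        rw [hx', hgg]
      simp [ww, this]
    · rfl
  · intro h
    exact absurd ((mem_VF _).2 (TT_InV β hT1)) h

def Up {ι : Type*} (x y : ι → ℤ) : Prop := ∀ i, y i = x i ∨ (Even (x i) ∧ (y i = x i + 1 ∨ y i = x i - 1))

lemma Up_refl {ι : Type*} (x : ι → ℤ) : Up x x := fun _ => Or.inl rfl

lemma Cov_Up {ι : Type*} [Fintype ι] [DecidableEq ι] {x y z : ι → ℤ} (h : Cov x y) (h' : Up y z) : Up x z := by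
  obtain ⟨i, a1, a2, a3⟩ := h
  intro k
  have := h' k
  rw [Int.even_iff] at *
  by_cases hk : k = i
  · subst hk; omega
  · rw [a3 k hk] at this; exact this

lemma flags {m : ℤ} (σ : Q → (Q ⊕ Fin s → ℤ) → ZMod 2) (w) (l : List Q) :
    ∀ x, InV (bk β) m x →
      (l.map (fun q => del (Bop (bk β) m) (Dop (σ q)))).prod w x ≠ 0 →
      ∀ q ∈ l, ∃ y z, InV (bk β) m y ∧ InV (bk β) m z ∧ Up x y ∧ Up x z ∧ σ q y ≠ σ q z := by
  classical
  induction l with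
  | nil => intro x _ _ q hq; simp at hq
  | cons q l ih =>
    intro x hx hne q' hq'
    rw [List.map_cons, List.prod_cons, Module.End.mul_apply, del_apply] at hne
    obtain ⟨y, hy, hy'⟩ := Finset.exists_ne_zero_of_sum_ne_zero hne
    rw [mem_VF] at hy
    have hC : Cov x y := by
      by_contra h; simp [h] at hy'
    rw [if_pos hC] at hy'
    rcases List.mem_cons.1 hq' with h | h
    · subst h
      refine ⟨x, y, hx, hy, Up_refl x, Cov_Up hC (Up_refl y), ?_⟩
      intro h
      rw [h, zadd, zero_mul] at hy'; exact hy' rfl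
    · obtain ⟨y1, z1, h1, h2, h3, h4, h5⟩ := ih y hy (right_ne_zero_of_mul hy') q' h
      exact ⟨y1, z1, h1, h2, Cov_Up hC h3, Cov_Up hC h4, h5⟩

theorem combBU {m : ℤ} (hm : 1 ≤ m) (hv : ∀ q, β q ∈ v q) (hv' : ∀ q, ∀ i ∈ v q, i ≤ β q)
    (σ : Q → (Q ⊕ Fin s → ℤ) → ZMod 2) (hσ : ∀ q, HasType (bk β) m (char v q) (σ q)) :
    ∃ x, InV (bk β) m x ∧ ∀ q, ∃ y z, InV (bk β) m y ∧ InV (bk β) m z ∧ Up x y ∧ Up x z ∧ σ q y ≠ σ q z := by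
  classical
  set l := (Finset.univ : Finset Q).toList.insertionSort (fun a b => β b ≤ β a) with hl
  have hperm : l.Perm (Finset.univ : Finset Q).toList := List.perm_insertionSort _ _
  have hnd : l.Nodup := hperm.nodup_iff.2 (Finset.nodup_toList _)
  have hmem : ∀ q, q ∈ l := fun q => hperm.mem_iff.2 (by simp)
  have : Std.Total (fun a b : Q => β b ≤ β a) := ⟨fun a b => le_total _ _⟩
  have : IsTrans Q (fun a b : Q => β b ≤ β a) := ⟨fun a b c h1 h2 => le_trans h2 h1⟩
  have hs : l.Pairwise (fun a b => β b ≤ β a) := List.pairwise_insertionSort _ _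
  have hst := steps β v hm hv' l hnd hs (fun _ _ q' _ => hmem q')
  have hun : l.toFinset = Finset.univ := by ext q; simp [hmem]
  rw [hun] at hst
  have hfin := final β hm
  rw [← hst] at hfin
  have hex := exchange (Bop (bk β) m) (BB _ m) (Inv (bk β) m)
    (uop (bk β) m (fun x j => tau (bk β) j x)) (ww β m ∅)
    (fun φ hφ => uB _ m _ (fun g x hx => by funext j; exact tau_act _ hm j g x hx) φ hφ)
    (ww_inv β m ∅) (Bw β hm) (fun q => Dop (σ q)) (fun q => Dop (base β v q))
    (fun q φ hφ => del_inv _ m _ _ (hσ q) φ hφ)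
    (fun q φ hφ => del_inv _ m _ _ (base_type β v hm hv q) φ hφ)
    (fun q φ hφ => dop_inv _ m _ _ _ (hσ q) (base_type β v hm hv q) φ hφ) l 1
    (Commute.one_right _) (fun φ hφ => hφ)
  simp only [Module.End.one_apply] at hex
  rw [hfin] at hex
  have hne : uop (bk β) m (fun x j => tau (bk β) j x)
    ((l.map (fun q => del (Bop (bk β) m) (Dop (σ q)))).prod (ww β m ∅)) ≠ 0 := by
    rw [hex]; exact one_ne_zero
  simp only [uop, LinearMap.coe_mk, AddHom.coe_mk] at hne
  obtain ⟨x, hx, hx'⟩ := Finset.exists_ne_zero_of_sum_ne_zero hne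
  rw [mem_VF] at hx
  refine ⟨x, hx, fun q => flags β σ (ww β m ∅) l x hx ?_ q (hmem q)⟩
  intro h
  rw [h] at hx'
  simp at hx'

end Main
end PP


set_option linter.unusedSectionVars false

namespace PP
open Filter Topology

section Cont
variable {Q : Type*} [Fintype Q] [DecidableEq Q] {s : ℕ} (β : Q → Fin s) (v : Q → Finset (Fin s))

def actR (g : Fin s → ZMod 2) (c : Q ⊕ Fin s → ℝ) : Q ⊕ Fin s → ℝ :=
  fun i => (sg (g (bk β i)) : ℝ) * c i

/-- compact product of cube boundaries -/
def KK : Set (Q ⊕ Fin s → ℝ) :=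
  {c | (∀ i, |c i| ≤ 1) ∧ ∀ j, ∃ i, bk β i = j ∧ |c i| = 1}

lemma KK_compact : IsCompact (KK β) := by
  have hcl : IsClosed (KK β) := by
    have : KK β = (⋂ i, {c | |c i| ≤ 1}) ∩ ⋂ j, ⋃ i, {c | bk β i = j ∧ |c i| = 1} := by
      ext c; simp [KK]
    rw [this]
    apply IsClosed.inter
    · exact isClosed_iInter fun i => isClosed_le (by fun_prop) (by fun_prop)
    · refine isClosed_iInter fun j => isClosed_iUnion_of_finite fun i => ?_
      by_cases h : bk β i = j
      · simp only [h, true_and]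
        exact isClosed_eq (by fun_prop) (by fun_prop)
      · simp [h]
  have hsub : KK β ⊆ Set.pi Set.univ (fun _ => Set.Icc (-1 : ℝ) 1) := by
    intro c hc i _
    exact abs_le.1 (hc.1 i)
  exact (isCompact_univ_pi (fun _ => isCompact_Icc)).of_isClosed_subset hcl hsub

noncomputable def scale (n : ℕ) (a : Q ⊕ Fin s → ℤ) : Q ⊕ Fin s → ℝ :=
  fun i => (a i : ℝ) / (2 * ((n : ℝ) + 1))

open Classical in
noncomputable def lab (f : Q → (Q ⊕ Fin s → ℝ) → ℝ) (n : ℕ) (q : Q) (a : Q ⊕ Fin s → ℤ) : ZMod 2 :=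
  if 0 < f q (scale n a) then 0 else if f q (scale n a) < 0 then 1 else base β v q a

theorem contBU (hv : ∀ q, β q ∈ v q) (hv' : ∀ q, ∀ i ∈ v q, i ≤ β q)
    (f : Q → (Q ⊕ Fin s → ℝ) → ℝ) (hf : ∀ q, Continuous (f q))
    (heq : ∀ q g c, f q (actR β g c) = (sg (∑ j ∈ v q, g j) : ℝ) * f q c) :
    ∃ c ∈ KK β, ∀ q, f q c = 0 := by
  classical
  have main : ∀ n : ℕ, ∃ x ∈ KK β, ∀ q, ∃ y z : Q ⊕ Fin s → ℝ,
      (∀ i, |y i - x i| ≤ 1 / (2 * ((n : ℝ) + 1))) ∧ (∀ i, |z i - x i| ≤ 1 / (2 * ((n : ℝ) + 1))) ∧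
      f q y * f q z ≤ 0 := by
    intro n
    have hm : (1 : ℤ) ≤ (n : ℤ) + 1 := by omega
    have hpos : (0 : ℝ) < 2 * ((n : ℝ) + 1) := by positivity
    have hty : ∀ q, HasType (bk β) ((n : ℤ) + 1) (char v q) (lab β v f n q) := by
      intro q g a ha
      have h1 : scale n (act (bk β) g a) = actR β g (scale n a) := by
        funext i; simp [scale, act, actR, mul_div_assoc]
      have hb := base_type β v hm hv q g a ha
      unfold lab
      rw [h1, heq, hb]
      unfold char
      rcases sg_cases (∑ j ∈ v q, g j) with ⟨e, e'⟩ | ⟨e, e'⟩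
      · rw [e', e]; simp
      · rw [e', e]
        simp only [Int.cast_neg, Int.cast_one, neg_mul, one_mul, Left.neg_pos_iff, Left.neg_neg_iff]
        split_ifs <;> first | (exfalso; linarith) | decide | rfl
    obtain ⟨x, hx, h⟩ := combBU β v hm hv hv' (lab β v f n) hty
    have hup : ∀ y, Up x y → ∀ i, |scale n y i - scale n x i| ≤ 1 / (2 * ((n : ℝ) + 1)) := by
      intro y hy i
      have h1 : |(y i : ℝ) - x i| ≤ 1 := by
        have : |y i - x i| ≤ 1 := by
          rcases hy i with h | ⟨_, h | h⟩ <;> rw [h] <;> simp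
        exact_mod_cast this
      unfold scale
      rw [← sub_div, abs_div, abs_of_pos hpos]
      gcongr
    refine ⟨scale n x, ⟨?_, ?_⟩, ?_⟩
    · intro i
      have h1 := hx.1 i
      unfold scale
      rw [abs_div, abs_of_pos hpos, div_le_one hpos, abs_le]
      have h2 : (-(2 * ((n : ℤ) + 1) : ℤ) : ℝ) ≤ (x i : ℝ) := by exact_mod_cast h1.1
      have h3 : (x i : ℝ) ≤ ((2 * ((n : ℤ) + 1) : ℤ) : ℝ) := by exact_mod_cast h1.2
      push_cast at h2 h3
      exact ⟨h2, h3⟩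
    · intro j
      obtain ⟨i, hi, h'⟩ := hx.2 j
      refine ⟨i, hi, ?_⟩
      unfold scale
      rw [abs_div, abs_of_pos hpos, div_eq_one_iff_eq hpos.ne']
      rcases h' with h' | h' <;> rw [h'] <;> push_cast
      · exact abs_of_pos hpos
      · rw [abs_neg]; exact abs_of_pos hpos
    · intro q
      obtain ⟨y, z, _, _, hy, hz, hne⟩ := h q
      refine ⟨scale n y, scale n z, hup y hy, hup z hz, ?_⟩
      by_contra hcon
      push Not at hcon
      apply hne
      unfold lab
      rcases pos_and_pos_or_neg_and_neg_of_mul_pos hcon with ⟨h1, h2⟩ | ⟨h1, h2⟩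
      · rw [if_pos h1, if_pos h2]
      · rw [if_neg h1.not_gt, if_neg h2.not_gt, if_pos h1, if_pos h2]
  choose x hxK y z hy hz hyz using main
  obtain ⟨c, hc, φ, hφ, hlim⟩ := (KK_compact β).tendsto_subseq hxK
  refine ⟨c, hc, fun q => ?_⟩
  have hsmall : Tendsto (fun n : ℕ => 1 / (2 * ((φ n : ℝ) + 1))) atTop (𝓝 0) := by
    have h1 : Tendsto (fun n : ℕ => 1 / (2 * ((n : ℝ) + 1))) atTop (𝓝 0) := by
      have := (tendsto_one_div_add_atTop_nhds_zero_nat (𝕜 := ℝ)).const_mul (1/2)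
      simp only [mul_zero] at this
      refine this.congr fun n => ?_
      field_simp
    exact h1.comp hφ.tendsto_atTop
  have gen : ∀ Y : ℕ → Q → (Q ⊕ Fin s → ℝ), (∀ n q i, |Y n q i - x n i| ≤ 1 / (2 * ((n : ℝ) + 1))) →
      Tendsto (fun n => f q (Y (φ n) q)) atTop (𝓝 (f q c)) := by
    intro Y hY
    refine ((hf q).tendsto c).comp ?_
    rw [tendsto_pi_nhds] at hlim ⊢
    intro i
    have h1 : Tendsto (fun n => Y (φ n) q i - x (φ n) i) atTop (𝓝 0) :=
      squeeze_zero_norm (fun n => hY (φ n) q i) hsmall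
    have := h1.add (hlim i)
    simp only [zero_add, Function.comp] at this
    refine this.congr fun n => by ring
  have h1 := (gen y hy).mul (gen z hz)
  have h2 : f q c * f q c ≤ 0 := le_of_tendsto' h1 (fun n => hyz (φ n) q)
  nlinarith [mul_self_nonneg (f q c), mul_self_eq_zero.1 (le_antisymm h2 (mul_self_nonneg (f q c)))]

end Cont

section Part
variable {s : ℕ} {P : Type*}

abbrev QQ (s : ℕ) := {v : Finset (Fin s) // v.Nonempty}

def bet (q : QQ s) : Fin s := q.1.max' q.2

abbrev IX (s : ℕ) := QQ s ⊕ Fin s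

variable (e : IX s → P → ℝ)

def pv (c : IX s → ℝ) (j : Fin s) (x : P) : ℝ :=
  ∑ i, if bk bet i = j then c i * e i x else 0

def Pos (c : IX s → ℝ) (w : Fin s → ZMod 2) (x : P) : Prop :=
  ∀ j, 0 < (sg (w j) : ℝ) * pv e c j x

noncomputable def mu (c : IX s → ℝ) (w : Fin s → ZMod 2) (x : P) : ℝ :=
  ∏ j, max 0 ((sg (w j) : ℝ) * pv e c j x)

lemma pv_cont (j : Fin s) (x : P) : Continuous (fun c => pv e c j x) := by
  unfold pv
  refine continuous_finsetSum _ fun i _ => ?_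
  by_cases h : bk bet i = j
  · simp only [h, if_true]; fun_prop
  · simp only [h, if_false]; fun_prop

lemma mu_cont (w) (x : P) : Continuous (fun c => mu e c w x) := by
  unfold mu
  refine continuous_finsetProd _ fun j _ => ?_
  have := pv_cont e j x
  fun_prop

lemma mu_nonneg (c w) (x : P) : 0 ≤ mu e c w x := Finset.prod_nonneg fun _ _ => le_max_left _ _

lemma mu_pos {c w} {x : P} (h : Pos e c w x) : 0 < mu e c w x :=
  Finset.prod_pos fun j _ => lt_max_of_lt_right (h j)

lemma pos_of_mu {c w} {x : P} (h : mu e c w x ≠ 0) : Pos e c w x := by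
  intro j
  have := (Finset.prod_ne_zero_iff.1 h) j (Finset.mem_univ j)
  by_contra hcon
  exact this (max_eq_left (not_lt.1 hcon))

lemma pv_act (g c j) (x : P) : pv e (actR bet g c) j x = (sg (g j) : ℝ) * pv e c j x := by
  unfold pv
  rw [Finset.mul_sum]
  refine Finset.sum_congr rfl fun i _ => ?_
  split_ifs with h
  · unfold actR; rw [h]; ring
  · simp

lemma mu_act (g c w) (x : P) : mu e (actR bet g c) w x = mu e c (w + g) x := by
  unfold mu
  refine Finset.prod_congr rfl fun j _ => ?_
  rw [pv_act, Pi.add_apply, sg_add]; push_cast; rw [mul_assoc]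

variable {I : Type*} [Fintype I] (a : I → ℕ → P)

noncomputable def ph (n : ℕ) (c : IX s → ℝ) (w : Fin s → ZMod 2) (i : I) : ℝ :=
  min 1 (n * ∑ k ∈ Finset.range n, mu e c w (a i k))

noncomputable def FF (n : ℕ) (c : IX s → ℝ) (w : Fin s → ZMod 2) : ℝ := ∑ i, ph e a n c w i

lemma FF_cont (n w) : Continuous (fun c => FF e a n c w) := by
  unfold FF ph
  refine continuous_finsetSum _ fun i _ => ?_
  refine continuous_const.min (continuous_const.mul ?_)
  exact continuous_finsetSum _ fun k _ => mu_cont e w _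

lemma FF_act (n g c w) : FF e a n (actR bet g c) w = FF e a n c (w + g) := by
  unfold FF ph; simp only [mu_act]

lemma sg_sum (v : Finset (Fin s)) (w : Fin s → ZMod 2) : sg (∑ j ∈ v, w j) = ∏ j ∈ v, sg (w j) := by
  classical
  induction v using Finset.induction_on with
  | empty => simp [sg]
  | insert j v hj ih => rw [Finset.sum_insert hj, Finset.prod_insert hj, sg_add, ih]

lemma fourier (F : (Fin s → ZMod 2) → ℝ)
    (h : ∀ v : Finset (Fin s), v.Nonempty → ∑ w, (sg (∑ j ∈ v, w j) : ℝ) * F w = 0) (w0) :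
    2 ^ s * F w0 = ∑ w, F w := by
  classical
  have h1 : ∑ v : Finset (Fin s), (sg (∑ j ∈ v, w0 j) : ℝ) * ∑ w, (sg (∑ j ∈ v, w j) : ℝ) * F w = ∑ w, F w := by
    rw [Finset.sum_eq_single ∅]
    · simp [sg]
    · intro v _ hv
      rw [h v (Finset.nonempty_iff_ne_empty.2 hv), mul_zero]
    · simp
  rw [← h1]
  simp only [Finset.mul_sum]
  rw [Finset.sum_comm]
  have h2 : ∀ w, ∑ v : Finset (Fin s), (sg (∑ j ∈ v, w0 j) : ℝ) * ((sg (∑ j ∈ v, w j) : ℝ) * F w) =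
      (if w = w0 then 2 ^ s else 0) * F w := by
    intro w
    have : ∀ v : Finset (Fin s), (sg (∑ j ∈ v, w0 j) : ℝ) * ((sg (∑ j ∈ v, w j) : ℝ) * F w)
        = (∏ j ∈ v, (sg (w0 j + w j) : ℝ)) * F w := by
      intro v
      rw [sg_sum, sg_sum, ← mul_assoc]
      push_cast
      rw [← Finset.prod_mul_distrib]
      congr 1
      refine Finset.prod_congr rfl fun j _ => ?_
      rw [sg_add]; push_cast; rfl
    rw [Finset.sum_congr rfl (fun v _ => this v), ← Finset.sum_mul]
    congr 1
    have h3 := Finset.prod_one_add (f := fun j => (sg (w0 j + w j) : ℝ)) (Finset.univ : Finset (Fin s))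
    rw [Finset.powerset_univ] at h3
    rw [← h3]
    split_ifs with hw
    · subst hw
      simp only [zadd]
      simp [sg]; norm_num
    · obtain ⟨j, hj⟩ := Function.ne_iff.1 hw
      apply Finset.prod_eq_zero (Finset.mem_univ j)
      have : ∀ a b : ZMod 2, a ≠ b → sg (b + a) = -1 := by decide
      rw [this _ _ hj]; norm_num
  rw [Finset.sum_congr rfl (fun w _ => h2 w)]
  simp

open Classical in
theorem partition (M : ℕ)
    (hM : ∀ c i, (Finset.univ.filter (fun w : Fin s → ZMod 2 => ∃ k, Pos e c w (a i k))).card ≤ M) :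
    ∃ c ∈ KK (bet (s := s)), ∀ w,
      (Finset.univ.filter (fun i => ∃ k, Pos e c w (a i k))).card * 2 ^ s ≤ Fintype.card I * M := by
  have main : ∀ n : ℕ, ∃ c ∈ KK (bet (s := s)), ∀ w, 2 ^ s * FF e a n c w ≤ Fintype.card I * M := by
    intro n
    obtain ⟨c, hc, hz⟩ := contBU (bet (s := s)) (fun q => q.1) (fun q => Finset.max'_mem _ _)
      (fun q i hi => Finset.le_max' _ _ hi)
      (fun q c => ∑ w, (sg (∑ j ∈ q.1, w j) : ℝ) * FF e a n c w)
      (fun q => continuous_finsetSum _ fun w _ => continuous_const.mul (FF_cont e a n w))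
      (by
        intro q g c
        simp only [FF_act]
        rw [Finset.mul_sum, ← Equiv.sum_comp (Equiv.addRight g)
          (fun w => (sg (∑ j ∈ q.1, g j) : ℝ) * ((sg (∑ j ∈ q.1, w j) : ℝ) * FF e a n c w))]
        refine Finset.sum_congr rfl fun w _ => ?_
        simp only [Equiv.coe_addRight, Pi.add_apply, Finset.sum_add_distrib, sg_add]
        rcases sg_cases (∑ j ∈ q.1, g j) with ⟨_, e'⟩ | ⟨_, e'⟩ <;> rw [e'] <;> push_cast <;> ring)
    refine ⟨c, hc, fun w => ?_⟩
    rw [fourier (FF e a n c) (fun v hv => hz ⟨v, hv⟩) w]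
    unfold FF
    rw [Finset.sum_comm]
    have : ∀ i, ∑ w, ph e a n c w i ≤ M := by
      intro i
      have h1 : ∀ w, ph e a n c w i ≤ if ∃ k, Pos e c w (a i k) then 1 else 0 := by
        intro w
        split_ifs with h
        · exact min_le_left _ _
        · unfold ph
          have : ∀ k ∈ Finset.range n, mu e c w (a i k) = 0 := by
            intro k _
            by_contra h0
            exact h ⟨k, pos_of_mu e h0⟩
          rw [Finset.sum_eq_zero this]; simp
      calc ∑ w, ph e a n c w i ≤ ∑ w, (if ∃ k, Pos e c w (a i k) then (1:ℝ) else 0) :=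
            Finset.sum_le_sum fun w _ => h1 w
        _ = ((Finset.univ.filter (fun w : Fin s → ZMod 2 => ∃ k, Pos e c w (a i k))).card : ℝ) := by
            rw [Finset.sum_boole]
        _ ≤ M := by exact_mod_cast hM c i
    calc ∑ i, ∑ w, ph e a n c w i ≤ ∑ _i : I, (M : ℝ) := Finset.sum_le_sum fun i _ => this i
      _ = Fintype.card I * M := by simp
  choose c hcK hc using main
  obtain ⟨c0, hc0, φ, hφ, hlim⟩ := (KK_compact (bet (s := s))).tendsto_subseq hcK
  refine ⟨c0, hc0, fun w => ?_⟩
  have hev : ∀ i, (∃ k, Pos e c0 w (a i k)) → ∀ᶠ n in atTop, ph e a (φ n) (c (φ n)) w i = 1 := by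
    rintro i ⟨k, hk⟩
    have h1 : Tendsto (fun n => mu e (c (φ n)) w (a i k)) atTop (𝓝 (mu e c0 w (a i k))) :=
      ((mu_cont e w (a i k)).tendsto c0).comp hlim
    have hpos := mu_pos e hk
    have h2 : ∀ᶠ n in atTop, mu e c0 w (a i k) / 2 < mu e (c (φ n)) w (a i k) :=
      h1.eventually (lt_mem_nhds (by linarith))
    have h3 : Tendsto (fun n => ((φ n : ℕ) : ℝ)) atTop atTop :=
      tendsto_natCast_atTop_atTop.comp hφ.tendsto_atTop
    have h4 := h3.eventually_ge_atTop (max (k + 1 : ℝ) (2 / mu e c0 w (a i k)))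
    filter_upwards [h2, h4] with n hn1 hn2
    unfold ph
    apply min_eq_left
    have hk1 : k < φ n := by
      have := (le_max_left _ _).trans hn2
      have h5 : ((k + 1 : ℕ) : ℝ) ≤ ((φ n : ℕ) : ℝ) := by push_cast; exact this
      have : k + 1 ≤ φ n := by exact_mod_cast h5
      omega
    have h6 : mu e (c (φ n)) w (a i k) ≤ ∑ k ∈ Finset.range (φ n), mu e (c (φ n)) w (a i k) :=
      Finset.single_le_sum (f := fun k => mu e (c (φ n)) w (a i k)) (fun k _ => mu_nonneg e _ _ _) (Finset.mem_range.2 hk1)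
    have h7 := (le_max_right _ _).trans hn2
    rw [div_le_iff₀ hpos] at h7
    have h8 : (0:ℝ) ≤ (φ n : ℕ) := by positivity
    nlinarith
  have hall : ∀ᶠ n in atTop, ∀ i, (∃ k, Pos e c0 w (a i k)) → ph e a (φ n) (c (φ n)) w i = 1 := by
    rw [Filter.eventually_all]
    intro i
    by_cases h : ∃ k, Pos e c0 w (a i k)
    · filter_upwards [hev i h] with n hn _ using hn
    · exact Eventually.of_forall fun n h' => absurd h' h
  obtain ⟨n, hn⟩ := hall.exists
  have h9 : ((Finset.univ.filter (fun i => ∃ k, Pos e c0 w (a i k))).card : ℝ) ≤ FF e a (φ n) (c (φ n)) w := by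
    rw [← Finset.sum_boole]
    unfold FF
    refine Finset.sum_le_sum fun i _ => ?_
    split_ifs with h
    · rw [hn i h]
    · unfold ph
      refine le_min zero_le_one (mul_nonneg (by positivity) (Finset.sum_nonneg fun k _ => mu_nonneg e _ _ _))
  have h10 := hc (φ n) w
  have h11 : ((Finset.univ.filter (fun i => ∃ k, Pos e c0 w (a i k))).card : ℝ) * 2 ^ s ≤ Fintype.card I * M := by
    have : (0:ℝ) < 2 ^ s := by positivity
    nlinarith
  exact_mod_cast h11

end Part
end PP

set_option linter.unusedSectionVars false
namespace PP
open MvPolynomial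

lemma bet_mem {s : ℕ} (q : QQ s) : bet q ∈ q.1 := Finset.max'_mem _ _
lemma le_bet {s : ℕ} (q : QQ s) {i : Fin s} (h : i ∈ q.1) : i ≤ bet q := Finset.le_max' _ _ h

open Classical in
lemma block_card {s : ℕ} (j : Fin s) :
    (Finset.univ.filter (fun i : IX s => bk bet i = j)).card ≤ 2 ^ (j : ℕ) + 1 := by
  have h : (Finset.insertNone (Finset.Iio j).powerset).card = 2 ^ (j : ℕ) + 1 := by
    rw [Finset.card_insertNone, Finset.card_powerset, Fin.card_Iio]
  rw [← h]
  refine Finset.card_le_card_of_injOn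
    (fun i => Sum.elim (fun q : QQ s => some (q.1.erase j)) (fun _ => none) i) ?_ ?_
  · rintro (q | i) hi
    · simp at hi
      simp only [Sum.elim_inl, Finset.mem_coe, Finset.some_mem_insertNone, Finset.mem_powerset]
      intro x hx
      rw [Finset.mem_erase] at hx
      rw [Finset.mem_Iio]
      exact lt_of_le_of_ne (hi ▸ le_bet q hx.2) hx.1
    · simp
  · rintro (q | i) hi (q' | i') hi' he
    · simp at hi hi' he
      have h1 := Finset.insert_erase (hi ▸ bet_mem q)
      have h2 := Finset.insert_erase (hi' ▸ bet_mem q')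
      congr 1
      apply Subtype.ext
      rw [← h1, ← h2, he]
    · simp at he
    · simp at he
    · simp at hi hi'
      rw [hi, hi']

lemma exists_mono (s : ℕ) : ∃ mono : IX s → (Fin 3 → ℕ),
    (∀ i k, mono i k ≤ 2 ^ ((bk bet i : ℕ) / 3 + 1)) ∧
    ∀ i i', bk bet i = bk bet i' → mono i = mono i' → i = i' := by
  classical
  have h : ∀ j : Fin s, Nonempty ({i : IX s // bk bet i = j} ↪ (Fin 3 → Fin (2 ^ ((j : ℕ) / 3 + 1) + 1))) := by
    intro j
    apply Function.Embedding.nonempty_of_card_le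
    rw [Fintype.card_subtype]
    refine (block_card j).trans ?_
    simp only [Fintype.card_fun, Fintype.card_fin]
    have h1 : 2 ^ (j : ℕ) ≤ (2 ^ ((j : ℕ) / 3 + 1)) ^ 3 := by
      rw [← pow_mul]
      exact Nat.pow_le_pow_right (by norm_num) (by omega)
    set d := 2 ^ ((j : ℕ) / 3 + 1)
    have : (d + 1) ^ 3 = d ^ 3 + 1 + (3 * d ^ 2 + 3 * d) := by ring
    omega
  let f := fun j => (h j).some
  refine ⟨fun i k => (f (bk bet i) ⟨i, rfl⟩ k : ℕ), fun i k => ?_, ?_⟩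
  · have := (f (bk bet i) ⟨i, rfl⟩ k).2
    exact Nat.lt_succ_iff.1 this
  · intro i i' hb he
    have key : ∀ (j : Fin s) (h1 : bk bet i = j) (h2 : bk bet i' = j),
        (∀ k, ((f j ⟨i, h1⟩ k : ℕ)) = f j ⟨i', h2⟩ k) → i = i' := by
      intro j h1 h2 h3
      have : f j ⟨i, h1⟩ = f j ⟨i', h2⟩ := by
        funext k; exact Fin.ext (h3 k)
      exact congrArg Subtype.val ((f j).injective this)
    have key2 : ∀ (j : Fin s) (h2 : bk bet i' = j) (k), ((f (bk bet i') ⟨i', rfl⟩ k : ℕ)) = f j ⟨i', h2⟩ k := by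
      intro j h2 k; subst h2; rfl
    refine key _ rfl hb.symm fun k => ?_
    rw [← key2 _ hb.symm k]
    exact congrFun he k

def PosQ {s : ℕ} (q : Fin s → MvPolynomial (Fin 3) ℝ) (w : Fin s → ZMod 2) (x : Fin 3 → ℝ) : Prop :=
  ∀ j, 0 < (sg (w j) : ℝ) * eval x (q j)

open Classical in
theorem family (s : ℕ) {I : Type*} [Fintype I] (a : I → ℕ → (Fin 3 → ℝ)) (M : ℕ)
    (hM : ∀ q : Fin s → MvPolynomial (Fin 3) ℝ, (∀ j, (q j).totalDegree ≤ 3 * 2 ^ ((j : ℕ) / 3 + 1)) →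
      ∀ i, (Finset.univ.filter (fun w : Fin s → ZMod 2 => ∃ k, PosQ q w (a i k))).card ≤ M) :
    ∃ q : Fin s → MvPolynomial (Fin 3) ℝ, (∀ j, q j ≠ 0) ∧
      (∀ j, (q j).totalDegree ≤ 3 * 2 ^ ((j : ℕ) / 3 + 1)) ∧
      ∀ w, (Finset.univ.filter (fun i => ∃ k, PosQ q w (a i k))).card * 2 ^ s ≤ Fintype.card I * M := by
  obtain ⟨mono, hm1, hm2⟩ := exists_mono s
  let mm : IX s → (Fin 3 →₀ ℕ) := fun i => Finsupp.equivFunOnFinite.symm (mono i)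
  have hmm : ∀ i i', bk bet i = bk bet i' → mm i = mm i' → i = i' := fun i i' h h' =>
    hm2 i i' h (Finsupp.equivFunOnFinite.symm.injective h')
  let qq : (IX s → ℝ) → Fin s → MvPolynomial (Fin 3) ℝ := fun c j =>
    ∑ i, if bk bet i = j then monomial (mm i) (c i) else 0
  let e : IX s → (Fin 3 → ℝ) → ℝ := fun i x => eval x (monomial (mm i) 1)
  have hpv : ∀ c j x, pv e c j x = eval x (qq c j) := by
    intro c j x
    simp only [pv, qq, e, map_sum]
    refine Finset.sum_congr rfl fun i _ => ?_
    split_ifs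
    · simp [eval_monomial]
    · simp
  have hPos : ∀ c w x, Pos e c w x ↔ PosQ (qq c) w x := by
    intro c w x
    simp only [Pos, PosQ, hpv]
  have hdeg : ∀ c j, (qq c j).totalDegree ≤ 3 * 2 ^ ((j : ℕ) / 3 + 1) := by
    intro c j
    refine totalDegree_finsetSum_le fun i _ => ?_
    split_ifs with h
    · refine (totalDegree_monomial_le _ _).trans ?_
      rw [Finsupp.sum_fintype _ _ (fun _ => rfl)]
      calc ∑ k, mm i k ≤ ∑ _k : Fin 3, 2 ^ ((j : ℕ) / 3 + 1) := by
            refine Finset.sum_le_sum fun k _ => ?_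
            have := hm1 i k
            rw [h] at this
            simpa [mm] using this
        _ = _ := by simp
    · simp
  obtain ⟨c, hcK, hc⟩ := partition e a M (by
    intro c i
    simp only [hPos]
    convert hM (qq c) (hdeg c) i)
  refine ⟨qq c, fun j hj => ?_, hdeg c, fun w => ?_⟩
  · obtain ⟨i, hi, hci⟩ := hcK.2 j
    have : coeff (mm i) (qq c j) = c i := by
      simp only [qq, coeff_sum]
      rw [Finset.sum_eq_single i]
      · rw [if_pos hi]; simp
      · intro b _ hb
        split_ifs with h
        · rw [coeff_monomial, if_neg]
          intro h'
          exact hb (hmm b i (h.trans hi.symm) h')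
        · simp
      · simp
    rw [hj] at this
    simp at this
    rw [← this] at hci
    simp at hci
  · have := hc w
    simp only [hPos] at this
    convert this

lemma degsum (t : ℕ) : ∑ j : Fin (3 * t), 3 * 2 ^ ((j : ℕ) / 3 + 1) + 18 = 18 * 2 ^ t := by
  rw [Fin.sum_univ_eq_sum_range (fun j => 3 * 2 ^ (j / 3 + 1))]
  induction t with
  | zero => simp
  | succ t ih =>
    rw [show 3 * (t + 1) = 3 * t + 1 + 1 + 1 by ring, Finset.sum_range_succ, Finset.sum_range_succ, Finset.sum_range_succ]
    rw [show 3 * t / 3 = t by omega, show (3 * t + 1) / 3 = t by omega, show (3 * t + 1 + 1) / 3 = t by omega]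
    rw [pow_succ] 
    omega

lemma prod_deg (t : ℕ) (q : Fin (3 * t) → MvPolynomial (Fin 3) ℝ)
    (hq : ∀ j, (q j).totalDegree ≤ 3 * 2 ^ ((j : ℕ) / 3 + 1)) : (∏ j, q j).totalDegree ≤ 18 * 2 ^ t := by
  refine (totalDegree_finsetProd _ _).trans ?_
  refine (Finset.sum_le_sum fun j _ => hq j).trans ?_
  have := degsum t
  omega

lemma PosQ_ne {s : ℕ} {q : Fin s → MvPolynomial (Fin 3) ℝ} {w : Fin s → ZMod 2} {x : Fin 3 → ℝ}
    (h : PosQ q w x) : eval x (∏ j, q j) ≠ 0 := by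
  rw [map_prod, Finset.prod_ne_zero_iff]
  intro j _ h0
  have := h j
  simp [h0] at this

lemma PosQ_uniq {s : ℕ} {q : Fin s → MvPolynomial (Fin 3) ℝ} {w w' : Fin s → ZMod 2} {x : Fin 3 → ℝ}
    (h : PosQ q w x) (h' : PosQ q w' x) : w = w' := by
  funext j
  have h1 := h j
  have h2 := h' j
  rcases sg_cases (w j) with ⟨a, b⟩ | ⟨a, b⟩ <;> rcases sg_cases (w' j) with ⟨a', b'⟩ | ⟨a', b'⟩ <;>
    rw [b] at h1 <;> rw [b'] at h2 <;> rw [a, a'] <;> push_cast at h1 h2 <;> linarith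

/-- signs of a point -/
lemma PosQ_exists {s : ℕ} {q : Fin s → MvPolynomial (Fin 3) ℝ} {x : Fin 3 → ℝ}
    (h : eval x (∏ j, q j) ≠ 0) : ∃ w, PosQ q w x := by
  rw [map_prod, Finset.prod_ne_zero_iff] at h
  refine ⟨fun j => if 0 < eval x (q j) then 0 else 1, fun j => ?_⟩
  have := h j (Finset.mem_univ _)
  dsimp only
  split_ifs with h0
  · simpa [sg] using h0
  · have : eval x (q j) < 0 := lt_of_le_of_ne (not_lt.1 h0) this
    simp [sg]; exact this

/-- a preconnected set avoiding the zero set has one sign vector -/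
lemma PosQ_conn {s : ℕ} {q : Fin s → MvPolynomial (Fin 3) ℝ} {w : Fin s → ZMod 2} {S : Set (Fin 3 → ℝ)}
    (hS : IsPreconnected S) (h0 : ∀ y ∈ S, eval y (∏ j, q j) ≠ 0) {x y : Fin 3 → ℝ} (hx : x ∈ S) (hy : y ∈ S)
    (h : PosQ q w x) : PosQ q w y := by
  intro j
  by_contra hn
  have hc : ContinuousOn (fun z => (sg (w j) : ℝ) * eval z (q j)) S :=
    (continuous_const.mul (MvPolynomial.continuous_eval (q j))).continuousOn
  obtain ⟨z, hz, hz0⟩ := hS.intermediate_value hy hx hc ⟨not_lt.1 hn, (h j).le⟩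
  have h1 := h0 z hz
  rw [map_prod, Finset.prod_ne_zero_iff] at h1
  have h2 := h1 j (Finset.mem_univ _)
  have h3 : (sg (w j) : ℝ) ≠ 0 := by
    rcases sg_cases (w j) with ⟨_, b⟩ | ⟨_, b⟩ <;> rw [b] <;> norm_num
  exact (mul_ne_zero h3 h2) hz0

lemma PosQ_open {s : ℕ} (q : Fin s → MvPolynomial (Fin 3) ℝ) (w : Fin s → ZMod 2) : IsOpen {x | PosQ q w x} := by
  have : {x | PosQ q w x} = ⋂ j, {x | 0 < (sg (w j) : ℝ) * eval x (q j)} := by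
    ext x; simp [PosQ]
  rw [this]
  exact isOpen_iInter_of_finite fun j =>
    isOpen_lt continuous_const (continuous_const.mul (MvPolynomial.continuous_eval (q j)))

open Classical in
/-- sign cells met by a line -/
lemma line_count (t : ℕ) (q : Fin (3 * t) → MvPolynomial (Fin 3) ℝ)
    (hq : ∀ j, (q j).totalDegree ≤ 3 * 2 ^ ((j : ℕ) / 3 + 1)) (a v : Fin 3 → ℝ) :
    (Finset.univ.filter (fun w : Fin (3 * t) → ZMod 2 => ∃ u : ℝ, PosQ q w (a + u • v))).card ≤ 18 * 2 ^ t + 1 := by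
  let f : Fin 3 → Polynomial ℝ := fun i => Polynomial.C (a i) + Polynomial.C (v i) * Polynomial.X
  let h : Polynomial ℝ := aeval f (∏ j, q j)
  have hdeg : h.natDegree ≤ 18 * 2 ^ t := by
    have := aeval_natDegree_le (m := 18 * 2 ^ t) (n := 1) (∏ j, q j) (prod_deg t q hq) f (by
      intro i
      simp only [f]
      compute_degree)
    rw [mul_one] at this
    exact this
  have hev : ∀ u, h.eval u = eval (a + u • v) (∏ j, q j) := by
    intro u
    simp only [h]
    rw [← Polynomial.coe_evalRingHom, MvPolynomial.aeval_def, MvPolynomial.hom_eval₂]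
    have h1 : (Polynomial.evalRingHom u).comp (algebraMap ℝ (Polynomial ℝ)) = RingHom.id ℝ := by
      ext; simp
    rw [h1]
    have h2 : (fun i => Polynomial.evalRingHom u (f i)) = a + u • v := by
      funext i; simp [f]; ring
    rw [h2]; rfl
  choose! g hg using (fun (w : Fin (3 * t) → ZMod 2) (hw : ∃ u : ℝ, PosQ q w (a + u • v)) => hw)
  by_cases h0 : h = 0
  · have : (Finset.univ.filter (fun w : Fin (3 * t) → ZMod 2 => ∃ u : ℝ, PosQ q w (a + u • v))) = ∅ := by
      rw [Finset.filter_eq_empty_iff]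
      rintro w _ ⟨u, hu⟩
      have := PosQ_ne hu
      rw [← hev, h0] at this
      simp at this
    rw [this]; simp
  · rw [← Finset.card_range (18 * 2 ^ t + 1)]
    refine Finset.card_le_card_of_injOn (fun w => (h.roots.toFinset.filter (· < g w)).card) ?_ ?_
    · intro w _
      simp only [Finset.mem_coe, Finset.mem_range]
      have h1 := Finset.card_filter_le h.roots.toFinset (· < g w)
      have h2 := Multiset.toFinset_card_le h.roots
      have h3 := h.card_roots'
      omega
    · have key : ∀ w w', (∃ u : ℝ, PosQ q w (a + u • v)) → (∃ u : ℝ, PosQ q w' (a + u • v)) → g w ≤ g w' →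
          (h.roots.toFinset.filter (· < g w)).card = (h.roots.toFinset.filter (· < g w')).card → w = w' := by
        intro w w' hw hw' hle he
        have hsub : h.roots.toFinset.filter (· < g w) ⊆ h.roots.toFinset.filter (· < g w') := by
          intro r hr
          rw [Finset.mem_filter] at hr ⊢
          exact ⟨hr.1, hr.2.trans_le hle⟩
        have heq := Finset.eq_of_subset_of_card_le hsub he.ge
        have hS : IsPreconnected ((fun u : ℝ => a + u • v) '' Set.Icc (g w) (g w')) :=
          isPreconnected_Icc.image _ (by fun_prop)
        refine PosQ_uniq (q := q) (x := a + g w' • v) ?_ (hg w' hw')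
        refine PosQ_conn hS ?_ ⟨g w, ⟨le_refl _, hle⟩, rfl⟩ ⟨g w', ⟨hle, le_refl _⟩, rfl⟩ (hg w hw)
        rintro _ ⟨u, ⟨hu1, hu2⟩, rfl⟩ hz
        have hz' : h.eval u = 0 := by rw [hev]; exact hz
        have hne : u ≠ g w' := by
          rintro rfl
          exact PosQ_ne (hg w' hw') hz
        have hmem : u ∈ h.roots.toFinset.filter (· < g w') := by
          rw [Finset.mem_filter, Multiset.mem_toFinset, Polynomial.mem_roots h0]
          exact ⟨hz', lt_of_le_of_ne hu2 hne⟩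
        rw [← heq, Finset.mem_filter] at hmem
        exact absurd hmem.2 (not_lt.2 hu1)
      intro w hw w' hw' he
      simp only [Finset.coe_filter, Finset.mem_univ, true_and, Set.mem_ofPred_eq] at hw hw'
      rcases le_total (g w) (g w') with hl | hl
      · exact key w w' hw hw' hl he
      · exact (key w' w hw' hw hl he.symm).symm

lemma component {p1 : MvPolynomial (Fin 3) ℝ} {s : ℕ} {q : Fin s → MvPolynomial (Fin 3) ℝ}
    (hdiv : (∏ j, q j) ∣ p1) (x : Fin 3 → ℝ) (hx : eval x p1 ≠ 0) :
    ∃ w, ∀ y ∈ connectedComponentIn {y : Fin 3 → ℝ | eval y p1 ≠ 0} x, PosQ q w y := by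
  have hne : ∀ y, eval y p1 ≠ 0 → eval y (∏ j, q j) ≠ 0 := by
    intro y hy h0
    obtain ⟨r, hr⟩ := hdiv
    apply hy
    rw [hr, map_mul, h0, zero_mul]
  obtain ⟨w, hw⟩ := PosQ_exists (hne x hx)
  refine ⟨w, fun y hy => ?_⟩
  exact PosQ_conn isPreconnected_connectedComponentIn
    (fun z hz => hne z (connectedComponentIn_subset _ _ hz)) (mem_connectedComponentIn hx) hy hw

lemma lines_poly (t : ℕ) (Γ : Finset (Set (Fin 3 → ℝ)))
    (hΓ : ∀ L ∈ Γ, ∃ a v : Fin 3 → ℝ, v ≠ 0 ∧ L = {x : Fin 3 → ℝ | ∃ t : ℝ, x = a + t • v}) :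
    ∃ p : MvPolynomial (Fin 3) ℝ, p ≠ 0 ∧ p.totalDegree ≤ 18 * 2 ^ t ∧
      ∀ p' : MvPolynomial (Fin 3) ℝ, p ∣ p' → ∀ x, eval x p' ≠ 0 →
        {L ∈ (Γ : Set (Set (Fin 3 → ℝ))) |
          (L ∩ connectedComponentIn {y : Fin 3 → ℝ | eval y p' ≠ 0} x).Nonempty}.ncard * 2 ^ (3 * t)
          ≤ Γ.card * (18 * 2 ^ t + 1) := by
  classical
  choose! a v hv hL using hΓ
  let seq : Γ → ℕ → (Fin 3 → ℝ) := fun L k => a L + TopologicalSpace.denseSeq ℝ k • v L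
  obtain ⟨q, hq0, hqd, hq⟩ := family (3 * t) seq (18 * 2 ^ t + 1) (by
    intro q hq L
    refine le_trans (Finset.card_le_card ?_) (line_count t q hq (a L) (v L))
    intro w hw
    simp only [Finset.mem_filter, Finset.mem_univ, true_and] at hw ⊢
    obtain ⟨k, hk⟩ := hw
    exact ⟨_, hk⟩)
  refine ⟨∏ j, q j, Finset.prod_ne_zero_iff.2 fun j _ => hq0 j, prod_deg t q hqd, ?_⟩
  intro p' hp' x hx
  obtain ⟨w, hw⟩ := component hp' x hx
  refine le_trans (Nat.mul_le_mul_right _ ?_) ((hq w).trans (le_of_eq (by simp)))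
  rw [← Finset.card_map (Function.Embedding.subtype _), ← Set.ncard_coe_finset]
  refine Set.ncard_le_ncard ?_ (Finset.finite_toSet _)
  rintro L ⟨hLΓ, y, hyL, hy⟩
  have hLm : L ∈ Γ := hLΓ
  simp only [Finset.coe_map, Set.mem_image, Finset.mem_coe, Finset.mem_filter, Finset.mem_univ, true_and]
  refine ⟨⟨L, hLm⟩, ?_, rfl⟩
  rw [hL L hLm] at hyL
  obtain ⟨u, rfl⟩ := hyL
  have ho : IsOpen ((fun u : ℝ => a L + u • v L) ⁻¹' {x | PosQ q w x}) :=
    (PosQ_open q w).preimage (by fun_prop)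
  obtain ⟨k, hk⟩ := (TopologicalSpace.denseRange_denseSeq ℝ).exists_mem_open ho ⟨u, hw _ hy⟩
  exact ⟨k, hk⟩

lemma points_poly (t : ℕ) (Γ : Finset (Fin 3 → ℝ)) :
    ∃ p : MvPolynomial (Fin 3) ℝ, p ≠ 0 ∧ p.totalDegree ≤ 18 * 2 ^ t ∧
      ∀ p' : MvPolynomial (Fin 3) ℝ, p ∣ p' → ∀ x, eval x p' ≠ 0 →
        ((Γ : Set (Fin 3 → ℝ)) ∩ connectedComponentIn {y : Fin 3 → ℝ | eval y p' ≠ 0} x).ncard * 2 ^ (3 * t)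
          ≤ Γ.card := by
  classical
  let seq : Γ → ℕ → (Fin 3 → ℝ) := fun L _ => L
  obtain ⟨q, hq0, hqd, hq⟩ := family (3 * t) seq 1 (by
    intro q hq L
    rw [Finset.card_le_one]
    intro w hw w' hw'
    simp only [Finset.mem_filter, Finset.mem_univ, true_and] at hw hw'
    obtain ⟨_, hk⟩ := hw
    obtain ⟨_, hk'⟩ := hw'
    exact PosQ_uniq hk hk')
  refine ⟨∏ j, q j, Finset.prod_ne_zero_iff.2 fun j _ => hq0 j, prod_deg t q hqd, ?_⟩
  intro p' hp' x hx
  obtain ⟨w, hw⟩ := component hp' x hx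
  refine le_trans (Nat.mul_le_mul_right _ ?_) ((hq w).trans (le_of_eq (by simp)))
  rw [← Finset.card_map (Function.Embedding.subtype _), ← Set.ncard_coe_finset]
  refine Set.ncard_le_ncard ?_ (Finset.finite_toSet _)
  rintro y ⟨hyΓ, hy⟩
  have hyΓ' : y ∈ Γ := hyΓ
  simp only [Finset.coe_map, Set.mem_image, Finset.mem_coe, Finset.mem_filter, Finset.mem_univ, true_and]
  exact ⟨⟨y, hyΓ'⟩, ⟨0, hw _ hy⟩, rfl⟩

end PP

/-- **Polynomial partitioning for red lines and blue points in `ℝ³`**: there are constants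
`C₁, C₂ > 0` such that for every finite collection `Γ₁` of lines in `ℝ³`, every finite set
`Γ₂` of points in `ℝ³`, and every `D ≥ 1`, there is a non-zero polynomial `p ∈ ℝ[x,y,z]` of
degree at most `D` such that every connected component of `ℝ³ \ Z(p)` meets at most
`2·C₁·|Γ₁|/D²` of the lines and at most `2·C₂·|Γ₂|/D³` of the points. -/
theorem polynomial_partitioning_lines_and_points :
    ∃ C₁ C₂ : ℝ, 0 < C₁ ∧ 0 < C₂ ∧
      ∀ Γ₁ : Finset (Set (Fin 3 → ℝ)),
        (∀ L ∈ Γ₁, ∃ a v : Fin 3 → ℝ, v ≠ 0 ∧ L = {x : Fin 3 → ℝ | ∃ t : ℝ, x = a + t • v}) →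
        ∀ (Γ₂ : Finset (Fin 3 → ℝ)) (D : ℕ), 1 ≤ D →
          ∃ p : MvPolynomial (Fin 3) ℝ, p ≠ 0 ∧ p.totalDegree ≤ D ∧
            ∀ x : Fin 3 → ℝ, MvPolynomial.eval x p ≠ 0 →
              ({L ∈ (Γ₁ : Set (Set (Fin 3 → ℝ))) |
                  (L ∩ connectedComponentIn {y : Fin 3 → ℝ | MvPolynomial.eval y p ≠ 0} x).Nonempty}.ncard : ℝ) ≤
                  2 * C₁ * Γ₁.card / (D : ℝ) ^ 2 ∧
              (((Γ₂ : Set (Fin 3 → ℝ)) ∩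
                  connectedComponentIn {y : Fin 3 → ℝ | MvPolynomial.eval y p ≠ 0} x).ncard : ℝ) ≤
                  2 * C₂ * Γ₂.card / (D : ℝ) ^ 3 := by
  refine ⟨19 * 72 ^ 2, 72 ^ 3, by norm_num, by norm_num, ?_⟩
  intro Γ₁ hΓ₁ Γ₂ D hD
  have hD0 : (0 : ℝ) < D := by exact_mod_cast hD
  by_cases hD36 : D < 36
  · refine ⟨1, one_ne_zero, by simp, fun x _ => ?_⟩
    have hDr : (D : ℝ) ≤ 36 := by exact_mod_cast hD36.le
    have h2 : (D : ℝ) ^ 2 ≤ 36 ^ 2 := pow_le_pow_left₀ hD0.le hDr 2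
    have h3 : (D : ℝ) ^ 3 ≤ 36 ^ 3 := pow_le_pow_left₀ hD0.le hDr 3
    constructor
    · have h : {L ∈ (Γ₁ : Set (Set (Fin 3 → ℝ))) |
          (L ∩ connectedComponentIn {y : Fin 3 → ℝ | MvPolynomial.eval y (1 : MvPolynomial (Fin 3) ℝ) ≠ 0} x).Nonempty}.ncard ≤ Γ₁.card := by
        rw [← Set.ncard_coe_finset Γ₁]
        exact Set.ncard_le_ncard (fun _ h => h.1) (Finset.finite_toSet _)
      have h' := (Nat.cast_le (α := ℝ)).2 h
      refine h'.trans ?_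
      rw [le_div_iff₀ (by positivity)]
      have : (0 : ℝ) ≤ Γ₁.card := by positivity
      nlinarith
    · have h : ((Γ₂ : Set (Fin 3 → ℝ)) ∩
          connectedComponentIn {y : Fin 3 → ℝ | MvPolynomial.eval y (1 : MvPolynomial (Fin 3) ℝ) ≠ 0} x).ncard ≤ Γ₂.card := by
        rw [← Set.ncard_coe_finset Γ₂]
        exact Set.ncard_le_ncard (fun _ h => h.1) (Finset.finite_toSet _)
      have h' := (Nat.cast_le (α := ℝ)).2 h
      refine h'.trans ?_
      rw [le_div_iff₀ (by positivity)]
      have : (0 : ℝ) ≤ Γ₂.card := by positivity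
      nlinarith
  · obtain ⟨t, ht1, ht2⟩ : ∃ t : ℕ, 36 * 2 ^ t ≤ D ∧ D < 72 * 2 ^ t := by
      have hne : D / 36 ≠ 0 := by omega
      refine ⟨Nat.log 2 (D / 36), ?_, ?_⟩
      · have := Nat.pow_log_le_self 2 hne
        omega
      · have := Nat.lt_pow_succ_log_self (b := 2) (by norm_num) (D / 36)
        rw [pow_succ] at this
        omega
    obtain ⟨p1, hp1, hd1, h1⟩ := PP.lines_poly t Γ₁ hΓ₁
    obtain ⟨p2, hp2, hd2, h2⟩ := PP.points_poly t Γ₂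
    refine ⟨p1 * p2, mul_ne_zero hp1 hp2, ?_, fun x hx => ?_⟩
    · have := MvPolynomial.totalDegree_mul p1 p2
      omega
    have e1 := (Nat.cast_le (α := ℝ)).2 (h1 (p1 * p2) (dvd_mul_right _ _) x hx)
    have e2 := (Nat.cast_le (α := ℝ)).2 (h2 (p1 * p2) (dvd_mul_left _ _) x hx)
    have ht : (D : ℝ) ≤ 72 * 2 ^ t := by exact_mod_cast ht2.le
    have hT : (1 : ℝ) ≤ 2 ^ t := one_le_pow₀ (by norm_num)
    have g2 : (D : ℝ) ^ 2 ≤ (72 * 2 ^ t) ^ 2 := pow_le_pow_left₀ hD0.le ht 2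
    have g3 : (D : ℝ) ^ 3 ≤ (72 * 2 ^ t) ^ 3 := pow_le_pow_left₀ hD0.le ht 3
    push_cast at e1 e2
    rw [mul_comm 3 t, pow_mul] at e1 e2
    generalize (2 : ℝ) ^ t = T at *
    constructor
    · rw [le_div_iff₀ (by positivity)]
      generalize Set.ncard _ = N at *
      have hN : (0 : ℝ) ≤ N := by positivity
      have hG : (0 : ℝ) ≤ Γ₁.card := by positivity
      have k1 : (N : ℝ) * T ^ 2 ≤ 19 * Γ₁.card := by
        have : (N : ℝ) * T ^ 2 * T ≤ 19 * Γ₁.card * T := by nlinarith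
        exact le_of_mul_le_mul_right this (by linarith)
      nlinarith
    · rw [le_div_iff₀ (by positivity)]
      generalize Set.ncard (_ ∩ _) = N at *
      have hN : (0 : ℝ) ≤ N := by positivity
      have hG : (0 : ℝ) ≤ Γ₂.card := by positivity
      nlinarith
end
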